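/- Let f:ℂ→Ĉ be a transcendental meromorphic function and suppose W is a Baker domain of f such that f^{nk}|_W → ∞ locally uniformly as n → ∞, for some k ≥ 1. Then there exists a sequence (p_n) of points of the postsingular set P(f), with all p_n ∈ ℂ, such that |p_n| → ∞, sup_n |p_{n+1}|/|p_n| < ∞, and dist(p_n, W)/|p_n| → 0 as n → ∞. -/

import Mathlib

open Set Metric Filter Topology OnePoint

open scoped ENNReal

/-- The finite part of a point of the Riemann sphere `Ĉ = OnePoint ℂ` (junk value `0` at `∞`). -/
noncomputable def finPart (u : OnePoint ℂ) : ℂ := Option.getD u 0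

/-- The inversion `u ↦ 1/u` of the Riemann sphere, exchanging `0` and `∞`. -/
noncomputable def sphereInv : OnePoint ℂ → OnePoint ℂ := fun u =>
  Option.casesOn u ((0 : ℂ) : OnePoint ℂ)
    (fun z => if z = 0 then (∞ : OnePoint ℂ) else ((z⁻¹ : ℂ) : OnePoint ℂ))

/-- The coordinate chart of `Ĉ` adapted to the point `v`: the identity chart if `v` is finite,
and the chart `u ↦ 1/u` at `∞`. -/
noncomputable def sphereChart (v : OnePoint ℂ) : OnePoint ℂ → ℂ :=
  Option.casesOn v (fun u => finPart (sphereInv u)) (fun _ => fun u => finPart u)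

/-- The local parametrization of `Ĉ` near the point `u`: `x ↦ x` near a finite point and
`x ↦ 1/x` near `∞`. -/
noncomputable def sphereParam (u : OnePoint ℂ) : ℂ → OnePoint ℂ :=
  Option.casesOn u (fun x => sphereInv ((x : OnePoint ℂ))) (fun _ => fun x => (x : OnePoint ℂ))

/-- The chart coordinate of the point `u` of `Ĉ` (`0` for `u = ∞`). -/
noncomputable def sphereCoord (u : OnePoint ℂ) : ℂ :=
  Option.casesOn u (0 : ℂ) (fun z => z)

/-- The chordal (spherical) metric on the Riemann sphere `Ĉ = OnePoint ℂ`. -/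
noncomputable def chordalDist (u v : OnePoint ℂ) : ℝ :=
  Option.casesOn u
    (Option.casesOn v (0 : ℝ) fun w => 2 / Real.sqrt (1 + ‖w‖ ^ 2))
    (fun z => Option.casesOn v (2 / Real.sqrt (1 + ‖z‖ ^ 2))
      (fun w => 2 * dist z w / (Real.sqrt (1 + ‖z‖ ^ 2) * Real.sqrt (1 + ‖w‖ ^ 2))))

/-- A map `F : Ĉ → Ĉ` is holomorphic (meromorphic) at `u`: it is continuous at `u` and its
representative in the standard charts is analytic at the coordinate of `u`. -/
def SphereAnalyticAt (F : OnePoint ℂ → OnePoint ℂ) (u : OnePoint ℂ) : Prop :=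
  ContinuousAt F u ∧
    AnalyticAt ℂ (fun x : ℂ => sphereChart (F u) (F (sphereParam u x))) (sphereCoord u)

/-- A map `F : ℂ → Ĉ` is meromorphic at a point `z ∈ ℂ`: it is continuous at `z` and its
representative in the chart adapted to `F z` is analytic at `z`. -/
def SphereMeroAt (F : ℂ → OnePoint ℂ) (z : ℂ) : Prop :=
  ContinuousAt F z ∧ AnalyticAt ℂ (fun x : ℂ => sphereChart (F z) (F x)) z

/-- The family of iterates of `F` is equicontinuous on `N ⊆ Ĉ` w.r.t. the chordal metric. -/
def SphereEquicontOn (F : OnePoint ℂ → OnePoint ℂ) (N : Set (OnePoint ℂ)) : Prop :=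
  ∀ u ∈ N, ∀ ε > (0 : ℝ), ∃ δ > (0 : ℝ), ∀ v ∈ N, chordalDist u v < δ →
    ∀ n : ℕ, chordalDist (F^[n] u) (F^[n] v) < ε

/-- The Fatou set of a map `F` holomorphic on `V ⊆ Ĉ`: points having an open neighborhood `N`
such that either all iterates are defined on `N` (i.e. the orbit of `N` stays in `V`) and form
a normal (equicontinuous) family, or some iterated image of `N` avoids the closure of `V`. -/
def SphereFatou (F : OnePoint ℂ → OnePoint ℂ) (V : Set (OnePoint ℂ)) : Set (OnePoint ℂ) :=
  {u : OnePoint ℂ | ∃ N : Set (OnePoint ℂ), IsOpen N ∧ u ∈ N ∧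
    (((∀ n : ℕ, F^[n] '' N ⊆ V) ∧ SphereEquicontOn F N) ∨
      (∃ n : ℕ, (∀ k < n, F^[k] '' N ⊆ V) ∧ F^[n] '' N ⊆ (closure V)ᶜ))}

/-- `S` is the set of singular values of `F : V → Ĉ`: the smallest compact set `S` such that
`F : V ∩ F⁻¹(Ĉ∖S) → Ĉ∖S` is a covering map. -/
def SphereSingularSet (F : OnePoint ℂ → OnePoint ℂ) (V S : Set (OnePoint ℂ)) : Prop :=
  IsCompact S ∧
    (∃ h : MapsTo F (V ∩ F ⁻¹' Sᶜ) Sᶜ,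
      IsCoveringMap (MapsTo.restrict F (V ∩ F ⁻¹' Sᶜ) Sᶜ h)) ∧
    ∀ T : Set (OnePoint ℂ), IsCompact T →
      (∃ h : MapsTo F (V ∩ F ⁻¹' Tᶜ) Tᶜ,
        IsCoveringMap (MapsTo.restrict F (V ∩ F ⁻¹' Tᶜ) Tᶜ h)) → S ⊆ T

/-- The postsingular set of `F : V → Ĉ`: the closure of the forward orbit of the singular
values (iterated images taken where the iterates are defined). -/
def SpherePostsingular (F : OnePoint ℂ → OnePoint ℂ) (V S : Set (OnePoint ℂ)) :
    Set (OnePoint ℂ) :=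
  closure (⋃ n : ℕ, F^[n] '' {u : OnePoint ℂ | u ∈ S ∧ ∀ k < n, F^[k] u ∈ V})

/-- Extend a map `F : ℂ → Ĉ` to the sphere by the convention `∞ ↦ ∞` (so that iteration makes
sense; orbits that leave the domain of definition are sent to `∞`). -/
def totalize (F : ℂ → OnePoint ℂ) : OnePoint ℂ → OnePoint ℂ := fun u =>
  Option.casesOn u (∞ : OnePoint ℂ) F

/-- The Fatou set of a meromorphic function `F` on `V ⊆ ℂ`: points with an open neighborhood
`N` such that either all iterates are defined on `N` and form a normal (equicontinuous w.r.t.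
the chordal metric) family, or some iterated image of `N` avoids the closure of `V` in `Ĉ`. -/
def MeroFatou (F : ℂ → OnePoint ℂ) (V : Set ℂ) : Set ℂ :=
  {z : ℂ | ∃ N : Set ℂ, IsOpen N ∧ z ∈ N ∧
    (((∀ n : ℕ, (totalize F)^[n] '' ((fun t : ℂ => (t : OnePoint ℂ)) '' N) ⊆
          (fun t : ℂ => (t : OnePoint ℂ)) '' V) ∧
        SphereEquicontOn (totalize F) ((fun t : ℂ => (t : OnePoint ℂ)) '' N)) ∨
      (∃ n : ℕ, (∀ k < n, (totalize F)^[k] '' ((fun t : ℂ => (t : OnePoint ℂ)) '' N) ⊆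
          (fun t : ℂ => (t : OnePoint ℂ)) '' V) ∧
        (totalize F)^[n] '' ((fun t : ℂ => (t : OnePoint ℂ)) '' N) ⊆
          (closure ((fun t : ℂ => (t : OnePoint ℂ)) '' V))ᶜ))}

/-- `S` is the set of singular values of the meromorphic function `F : V → Ĉ`: the smallest
compact `S ⊆ Ĉ` such that `F : V ∩ F⁻¹(Ĉ∖S) → Ĉ∖S` is a covering map. -/
def MeroSingularSet (F : ℂ → OnePoint ℂ) (V : Set ℂ) (S : Set (OnePoint ℂ)) : Prop :=
  IsCompact S ∧
    (∃ h : MapsTo F (V ∩ F ⁻¹' Sᶜ) Sᶜ,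
      IsCoveringMap (MapsTo.restrict F (V ∩ F ⁻¹' Sᶜ) Sᶜ h)) ∧
    ∀ T : Set (OnePoint ℂ), IsCompact T →
      (∃ h : MapsTo F (V ∩ F ⁻¹' Tᶜ) Tᶜ,
        IsCoveringMap (MapsTo.restrict F (V ∩ F ⁻¹' Tᶜ) Tᶜ h)) → S ⊆ T

/-- The postsingular set of `F : V → Ĉ`: the closure of `⋃ₙ Fⁿ(S ∩ ℂ)`, the iterated images
being taken at the points where the iterates are defined. -/
def MeroPostsingular (F : ℂ → OnePoint ℂ) (V : Set ℂ) (S : Set (OnePoint ℂ)) :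
    Set (OnePoint ℂ) :=
  closure (⋃ n : ℕ, (totalize F)^[n] ''
    {u : OnePoint ℂ | u ∈ S ∧ u ≠ (∞ : OnePoint ℂ) ∧
      ∀ k < n, (totalize F)^[k] u ∈ (fun t : ℂ => (t : OnePoint ℂ)) '' V})

/-!
Fix `a ∉ W`, let `f^q` map `W` into itself, and let `s n = f^{nq} - a` on a compact connected set
`K ⊆ W` that joins a point to its image. On `K` the maps `s n` omit `0` and `j - a` for every
`j ∉ W`, so by Schottky's theorem they are comparable in modulus for a given `n`, and the circles
about `a` of all large radii meet the sets `f^{nq}(K)`.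

Suppose a large circle meets both `f^{nq}(K)` and the complement of `W`, and that there are no
postsingular points near its part in `W` between the two. Then the inverse branch of `f^{nq}` can
be continued along the circle up to a boundary point of `W`, with Koebe's bounds. This gives discs
of definite size, centred in the Julia set, on which more and more iterates are univalent. In the
limit such a disc lies in the Fatou set, which is a contradiction.

Otherwise there is a wide annulus in `W` without postsingular points. Let `L` be a lift of `f^q`
to the logarithmic coordinate `t ↦ a + exp t` there, so that `L (t + 2πi) = L t + 2πi e`. If
`e ≠ 0` then the image under the iterates of a loop around the annulus winds around `a` until it
has left the annulus, whereas the inverse branches at `K` turn it into a small loop in `W`. Hence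
`e = 0` and `L` is periodic. As `L t - t` omits the values `2πik`, it is large, and its size
decreases from `t` to `L t`, against Harnack's inequality for the displacement in `W`.
-/

section BakerDomains

open scoped Real

/-! ### Logarithms and Schottky's theorem -/

theorem isSimplyConnected_of_convex {E : Type*} [AddCommGroup E] [Module ℝ E] [TopologicalSpace E]
    [ContinuousAdd E] [ContinuousSMul ℝ E] {s : Set E} (hs : Convex ℝ s) (hne : s.Nonempty) :
    IsSimplyConnected s :=
  have := hs.contractibleSpace hne
  (inferInstance : SimplyConnectedSpace s)

theorem differentiableOn_of_exp_eq {Y : Set ℂ} (hYo : IsOpen Y) {h L : ℂ → ℂ}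
    (hh : DifferentiableOn ℂ h Y) (hL : ContinuousOn L Y)
    (hexp : ∀ z ∈ Y, Complex.exp (L z) = h z) : DifferentiableOn ℂ L Y := by
  intro z hz
  have hYz : Y ∈ 𝓝 z := hYo.mem_nhds hz
  have hLz : ContinuousAt L z := hL.continuousAt hYz
  have hhz : DifferentiableAt ℂ h z := hh.differentiableAt hYz
  have hne : h z ≠ 0 := hexp z hz ▸ Complex.exp_ne_zero _
  have hlocal : L =ᶠ[𝓝 z] fun x => L z + Complex.log (h x / h z) := by
    filter_upwards [hLz.eventually (ball_mem_nhds _ one_pos), hYz] with x hx hxY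
    have hquot : h x / h z = Complex.exp (L x - L z) := by
      rw [Complex.exp_sub, hexp x hxY, hexp z hz]
    have him : |(L x - L z).im| < 1 :=
      (Complex.abs_im_le_norm _).trans_lt (by rwa [← dist_eq_norm])
    obtain ⟨hlo, hhi⟩ := abs_lt.1 him
    rw [hquot, Complex.log_exp (by linarith [Real.pi_gt_three]) (by linarith [Real.pi_gt_three])]
    ring
  have hlog : DifferentiableAt ℂ (fun x => L z + Complex.log (h x / h z)) z := by
    refine ((hhz.div_const _).clog ?_).const_add _
    rw [div_self hne]
    exact Complex.one_mem_slitPlane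
  exact (hlog.congr_of_eventuallyEq hlocal).differentiableWithinAt

theorem exists_differentiableOn_exp_eq {Y : Set ℂ} (hY : IsSimplyConnected Y) (hYo : IsOpen Y)
    {h : ℂ → ℂ} (hh : DifferentiableOn ℂ h Y) (h0 : ∀ z ∈ Y, h z ≠ 0) {z₀ : ℂ} (hz₀ : z₀ ∈ Y)
    {w₀ : ℂ} (hw₀ : Complex.exp w₀ = h z₀) :
    ∃ L : ℂ → ℂ, DifferentiableOn ℂ L Y ∧ L z₀ = w₀ ∧ ∀ z ∈ Y, Complex.exp (L z) = h z := by
  obtain ⟨L, hLc, hL⟩ := Complex.exists_continuousOn_eqOn_exp_comp hY hYo hh.continuousOn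
    (by rintro ⟨z, hz, hzero⟩; exact h0 z hz hzero)
  have hexp : ∀ z ∈ Y, Complex.exp (L z) = h z := fun z hz => hL hz
  refine ⟨fun z => L z + (w₀ - L z₀), (differentiableOn_of_exp_eq hYo hh hLc hexp).add_const _,
    by ring, fun z hz => ?_⟩
  rw [Complex.exp_add, Complex.exp_sub, hexp z hz, hexp z₀ hz₀, hw₀, div_self (h0 _ hz₀), mul_one]

theorem exists_differentiableOn_sq_eq {Y : Set ℂ} (hY : IsSimplyConnected Y) (hYo : IsOpen Y)
    {h : ℂ → ℂ} (hh : DifferentiableOn ℂ h Y) (h0 : ∀ z ∈ Y, h z ≠ 0) :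
    ∃ s : ℂ → ℂ, DifferentiableOn ℂ s Y ∧ ∀ z ∈ Y, s z ^ 2 = h z := by
  obtain ⟨z₀, hz₀⟩ := hY.nonempty
  obtain ⟨L, hd, -, hL⟩ :=
    exists_differentiableOn_exp_eq hY hYo hh h0 hz₀ (Complex.exp_log (h0 _ hz₀))
  refine ⟨fun z => Complex.exp (L z / 2), (hd.div_const 2).cexp, fun z hz => ?_⟩
  rw [← Complex.exp_nat_mul, ← hL z hz]
  congr 1
  push_cast
  ring

theorem norm_log_le_of_norm_le_of_norm_inv_le {w : ℂ} (hw : w ≠ 0) {a : ℝ} (ha : ‖w‖ ≤ 1 + a)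
    (ha' : ‖w⁻¹‖ ≤ 1 + a) : ‖Complex.log w‖ ≤ a + π := by
  have hpos : 0 < ‖w‖ := norm_pos_iff.2 hw
  have hupper := Real.log_le_sub_one_of_pos hpos
  have hlower := Real.log_le_sub_one_of_pos (inv_pos.2 hpos)
  rw [Real.log_inv, ← norm_inv] at hlower
  have hre : |Real.log ‖w‖| ≤ a := abs_le.2 ⟨by linarith, by linarith⟩
  calc ‖Complex.log w‖ ≤ |(Complex.log w).re| + |(Complex.log w).im| :=
        Complex.norm_le_abs_re_add_abs_im _
    _ = |Real.log ‖w‖| + |w.arg| := by rw [Complex.log_re, Complex.log_im]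
    _ ≤ a + π := add_le_add hre (Complex.abs_arg_le_pi _)

-- The solution of `cos (π φ) = h` is `φ = log (h + √(h² - 1)) / (π i)`.
theorem exists_differentiableOn_cos_eq {Y : Set ℂ} (hY : IsSimplyConnected Y) (hYo : IsOpen Y)
    {h : ℂ → ℂ} (hh : DifferentiableOn ℂ h Y) (h1 : ∀ z ∈ Y, h z ≠ 1) (h2 : ∀ z ∈ Y, h z ≠ -1)
    {c : ℂ} (hc : c ∈ Y) :
    ∃ φ : ℂ → ℂ, DifferentiableOn ℂ φ Y ∧ ‖φ c‖ ≤ ‖h c‖ + 1 ∧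
      ∀ z ∈ Y, Complex.cos (π * φ z) = h z := by
  obtain ⟨s, hs, hsq⟩ := exists_differentiableOn_sq_eq (h := fun z => h z ^ 2 - 1) hY hYo
    ((hh.pow 2).sub_const 1) fun z hz hzero => by
      rcases sq_eq_one_iff.1 (sub_eq_zero.1 hzero) with e | e
      · exact h1 z hz e
      · exact h2 z hz e
  have hprod : ∀ z ∈ Y, (h z + s z) * (h z - s z) = 1 := fun z hz => by
    linear_combination - hsq z hz
  have hne : ∀ z ∈ Y, h z + s z ≠ 0 := fun z hz => left_ne_zero_of_mul_eq_one (hprod z hz)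
  have hinv : ∀ z ∈ Y, (h z + s z)⁻¹ = h z - s z := fun z hz =>
    inv_eq_of_mul_eq_one_right (hprod z hz)
  obtain ⟨L, hd, hLc, hL⟩ := exists_differentiableOn_exp_eq hY hYo (h := fun z => h z + s z)
    (hh.add hs) hne hc (Complex.exp_log (hne c hc))
  refine ⟨fun z => L z / (π * Complex.I), hd.div_const _, ?_, fun z hz => ?_⟩
  · have hs1 : ‖s c‖ ≤ ‖h c‖ + 1 := by
      have hsq_norm : ‖s c‖ ^ 2 ≤ ‖h c‖ ^ 2 + 1 := by
        rw [← norm_pow, hsq c hc]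
        exact (norm_sub_le _ _).trans (by simp)
      nlinarith [norm_nonneg (s c), norm_nonneg (h c)]
    have hLnorm : ‖L c‖ ≤ 2 * ‖h c‖ + π := by
      rw [hLc]
      refine norm_log_le_of_norm_le_of_norm_inv_le (hne c hc) ?_ ?_
      · exact (norm_add_le _ _).trans (by linarith)
      · rw [hinv c hc]
        exact (norm_sub_le _ _).trans (by linarith)
    rw [norm_div, norm_mul, Complex.norm_I, mul_one, Complex.norm_real,
      Real.norm_of_nonneg Real.pi_pos.le, div_le_iff₀ Real.pi_pos]
    nlinarith [Real.pi_gt_three, norm_nonneg (h c)]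
  · have hmul : (π : ℂ) * (L z / (π * Complex.I)) * Complex.I = L z := by
      field_simp
    rw [Complex.cos, neg_mul, hmul, Complex.exp_neg, hL z hz, hinv z hz]
    ring

theorem sub_mul_dist_le_norm_sub {G : ℂ → ℂ} {s : Set ℂ} {D : ℂ} {ε : ℝ} (hs : Convex ℝ s)
    (hG : ∀ x ∈ s, DifferentiableAt ℂ G x) (hD : ∀ x ∈ s, ‖deriv G x - D‖ ≤ ε) {x y : ℂ}
    (hx : x ∈ s) (hy : y ∈ s) : (‖D‖ - ε) * dist x y ≤ ‖G x - G y‖ := by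
  have hmean := hs.norm_image_sub_le_of_norm_hasDerivWithin_le
    (f := fun z => G z - D * z) (f' := fun z => deriv G z - D)
    (fun z hz => ((hG z hz).hasDerivAt.sub
      (by simpa using (hasDerivAt_id z).const_mul D)).hasDerivWithinAt) hD hy hx
  have hsplit : D * (x - y) = (G x - G y) - ((G x - D * x) - (G y - D * y)) := by ring
  have htri := norm_sub_le (G x - G y) ((G x - D * x) - (G y - D * y))
  rw [← hsplit, norm_mul] at htri
  rw [dist_eq_norm]
  linarith

theorem ball_subset_image_of_norm_deriv_le {G : ℂ → ℂ} {ζ : ℂ} {δ : ℝ} (hδ : 0 < δ)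
    (hG : DifferentiableOn ℂ G (ball ζ δ)) (h0 : deriv G ζ ≠ 0)
    (hle : ∀ x ∈ ball ζ δ, ‖deriv G x‖ ≤ 2 * ‖deriv G ζ‖) :
    ball (G ζ) (‖deriv G ζ‖ * δ / 24) ⊆ G '' ball ζ δ := by
  have hD : 0 < ‖deriv G ζ‖ := norm_pos_iff.2 h0
  have hsub : closedBall ζ (δ / 6) ⊆ ball ζ δ := closedBall_subset_ball (by linarith)
  have hderiv : ∀ x ∈ closedBall ζ (δ / 6), ‖deriv G x - deriv G ζ‖ ≤ ‖deriv G ζ‖ / 2 := by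
    intro x hx
    have hmaps : MapsTo (deriv G) (ball ζ δ) (closedBall (deriv G ζ) (3 * ‖deriv G ζ‖)) :=
      fun y hy => by
        rw [mem_closedBall, dist_eq_norm]
        linarith [norm_sub_le (deriv G y) (deriv G ζ), hle y hy]
    have hschwarz := Complex.dist_le_div_mul_dist_of_mapsTo_ball (hG.deriv isOpen_ball) hmaps
      (hsub hx)
    rw [dist_eq_norm] at hschwarz
    refine hschwarz.trans ?_
    rw [div_mul_eq_mul_div, div_le_iff₀ hδ]
    nlinarith [mem_closedBall.1 hx]
  have hlower : ∀ x ∈ closedBall ζ (δ / 6), ‖deriv G ζ‖ / 2 * dist x ζ ≤ ‖G x - G ζ‖ := by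
    intro x hx
    have hdist := sub_mul_dist_le_norm_sub (convex_closedBall ζ (δ / 6))
      (fun y hy => hG.differentiableAt (isOpen_ball.mem_nhds (hsub hy))) hderiv hx
      (mem_closedBall_self (by linarith))
    rwa [sub_half] at hdist
  have hne : ∀ᶠ x in 𝓝[≠] ζ, G x ≠ G ζ := by
    filter_upwards [nhdsWithin_le_nhds (closedBall_mem_nhds ζ (by linarith : 0 < δ / 6)),
      self_mem_nhdsWithin] with x hx hxζ heq
    have hxlower := hlower x hx
    rw [heq, sub_self, norm_zero] at hxlower
    nlinarith [mul_pos hD (dist_pos.2 hxζ)]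
  have himage := DiffContOnCl.ball_subset_image_closedBall (f := G) (z₀ := ζ) (r := δ / 6)
    (ε := ‖deriv G ζ‖ / 2 * (δ / 6)) ((hG.mono hsub).diffContOnCl_ball subset_rfl)
    (by linarith)
    (fun x hx => by simpa only [mem_sphere.1 hx] using hlower x (sphere_subset_closedBall hx))
    (hne.frequently.filter_mono nhdsWithin_le_nhds)
  calc ball (G ζ) (‖deriv G ζ‖ * δ / 24)
      = ball (G ζ) (‖deriv G ζ‖ / 2 * (δ / 6) / 2) := by ring_nf
    _ ⊆ G '' closedBall ζ (δ / 6) := himage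
    _ ⊆ G '' ball ζ δ := image_mono hsub

/-- A weak form of Bloch's theorem. -/
theorem norm_deriv_mul_le_of_forall_not_ball_subset {G : ℂ → ℂ} {c : ℂ} {R b : ℝ}
    (hG : DifferentiableOn ℂ G (ball c R)) (hb : 0 < b) (hball : ∀ w, ¬ ball w b ⊆ G '' ball c R)
    {z : ℂ} (hz : z ∈ ball c R) : ‖deriv G z‖ * (R - dist z c) ≤ 48 * b := by
  have hclosed : ∀ r < R, z ∈ closedBall c r → ‖deriv G z‖ * (r - dist z c) ≤ 48 * b := by
    intro r hr hz
    have hsub : closedBall c r ⊆ ball c R := closedBall_subset_ball hr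
    obtain ⟨ζ, -, hmax⟩ := (isCompact_closedBall c r).exists_isMaxOn ⟨z, hz⟩
      (f := fun z => ‖deriv G z‖ * (r - dist z c))
      (((hG.deriv isOpen_ball).continuousOn.mono hsub).norm.mul (by fun_prop))
    replace hmax : ∀ x ∈ closedBall c r,
        ‖deriv G x‖ * (r - dist x c) ≤ ‖deriv G ζ‖ * (r - dist ζ c) := fun x hx => hmax hx
    refine (hmax z hz).trans ?_
    by_contra! hlarge
    have hpos : 0 < ‖deriv G ζ‖ * (r - dist ζ c) := (by positivity : 0 < 48 * b).trans hlarge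
    have hζr : 0 < r - dist ζ c := pos_of_mul_pos_right hpos (norm_nonneg _)
    have hderiv : 0 < ‖deriv G ζ‖ := pos_of_mul_pos_left hpos hζr.le
    set δ := (r - dist ζ c) / 2 with hδ
    have hδ0 : 0 < δ := half_pos hζr
    have hdist : ∀ x ∈ ball ζ δ, dist x c ≤ r - δ := fun x hx => by
      linarith [dist_triangle x ζ c, mem_ball.1 hx]
    have hδr : ball ζ δ ⊆ closedBall c r := fun x hx => (hdist x hx).trans (by linarith)
    have hle : ∀ x ∈ ball ζ δ, ‖deriv G x‖ ≤ 2 * ‖deriv G ζ‖ := fun x hx =>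
      le_of_mul_le_mul_right (by
        calc ‖deriv G x‖ * δ ≤ ‖deriv G x‖ * (r - dist x c) := by
              gcongr; linarith [hdist x hx]
          _ ≤ ‖deriv G ζ‖ * (r - dist ζ c) := hmax x (hδr hx)
          _ = 2 * ‖deriv G ζ‖ * δ := by rw [hδ]; ring) hδ0
    have hcover := ball_subset_image_of_norm_deriv_le hδ0 (hG.mono (hδr.trans hsub))
      (norm_pos_iff.1 hderiv) hle
    refine hball (G ζ) (((ball_subset_ball ?_).trans hcover).trans (image_mono (hδr.trans hsub)))
    rw [hδ]
    linarith
  refine le_of_tendsto (f := fun r => ‖deriv G z‖ * (r - dist z c)) (x := 𝓝[<] R)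
    ((Continuous.tendsto (by fun_prop) R).mono_left nhdsWithin_le_nhds) ?_
  filter_upwards [Ioo_mem_nhdsLT (mem_ball.1 hz)] with r hr
  exact hclosed r hr.2 hr.1.le

theorem exists_cosh_pi_mul_eq_intCast (y : ℝ) :
    ∃ x, |x - y| ≤ 1 ∧ ∃ n : ℤ, Real.cosh (π * x) = n := by
  wlog hy : 0 ≤ y generalizing y
  · obtain ⟨x, hx, n, hn⟩ := this (-y) (by linarith)
    refine ⟨-x, ?_, n, by rw [mul_neg, Real.cosh_neg, hn]⟩
    rwa [← abs_neg, neg_sub, sub_neg_eq_add, add_comm, ← sub_neg_eq_add]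
  have hcosh_pi : 2 ≤ Real.cosh π := by
    rw [Real.cosh_eq]
    linarith [Real.add_one_le_exp π, Real.pi_gt_three, Real.exp_pos (-π)]
  have hgrowth : Real.cosh (π * y) + 1 ≤ Real.cosh (π * (y + 1)) := by
    rw [mul_add, mul_one, Real.cosh_add]
    have hsinh : 0 ≤ Real.sinh (π * y) * Real.sinh π :=
      mul_nonneg (Real.sinh_nonneg_iff.2 (by positivity)) (Real.sinh_nonneg_iff.2 Real.pi_pos.le)
    nlinarith [Real.one_le_cosh (π * y)]
  obtain ⟨x, hx, hxn⟩ := intermediate_value_Icc (f := fun x => Real.cosh (π * x))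
    (by linarith : y ≤ y + 1) (by fun_prop)
    ⟨Int.le_ceil _, (Int.ceil_lt_add_one _).le.trans hgrowth⟩
  exact ⟨x, abs_le.2 ⟨by linarith [hx.1], by linarith [hx.2]⟩, _, hxn⟩

theorem cos_pi_mul_intCast_eq_or (n : ℤ) :
    Complex.cos (π * n) = 1 ∨ Complex.cos (π * n) = -1 := by
  have hcos : Complex.cos (π * n) = (-1) ^ n := by
    have hreal := congrArg Complex.ofReal (Real.cos_int_mul_pi n)
    push_cast at hreal
    rwa [mul_comm]
  rcases Int.even_or_odd n with he | ho
  · exact Or.inl (hcos.trans he.neg_one_zpow)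
  · exact Or.inr (hcos.trans ho.neg_one_zpow)

theorem exists_cos_pi_mul_eq_intCast (w : ℂ) :
    ∃ v ∈ ball w 2, ∃ n : ℤ, Complex.cos (π * v) = n := by
  obtain ⟨y, hy, n, hn⟩ := exists_cosh_pi_mul_eq_intCast w.im
  have hcos : Complex.cos (π * (round w.re + y * Complex.I)) =
      Complex.cos (π * round w.re) * n := by
    have hexpand : (π : ℂ) * (round w.re + y * Complex.I) =
      π * round w.re + (π * y : ℝ) * Complex.I := by push_cast; ring
    rw [hexpand, Complex.cos_add, mul_comm (π : ℂ), Complex.sin_int_mul_pi, Complex.cos_mul_I,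
      ← Complex.ofReal_cosh, hn, Complex.ofReal_intCast, zero_mul, sub_zero]
  refine ⟨round w.re + y * Complex.I, ?_, ?_⟩
  · rw [mem_ball, dist_eq_norm]
    refine (Complex.norm_le_abs_re_add_abs_im _).trans_lt ?_
    have hre : (round w.re + y * Complex.I - w).re = round w.re - w.re := by simp
    have him : (round w.re + y * Complex.I - w).im = y - w.im := by simp
    rw [hre, him, abs_sub_comm]
    linarith [abs_sub_round w.re]
  · rcases cos_pi_mul_intCast_eq_or (round w.re) with e | e
    · exact ⟨n, by rw [hcos, e, one_mul]⟩
    · exact ⟨-n, by rw [hcos, e, neg_one_mul, Int.cast_neg]⟩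

theorem norm_cos_le_exp_norm (z : ℂ) : ‖Complex.cos z‖ ≤ Real.exp ‖z‖ := by
  have hexp : ∀ w : ℂ, ‖w‖ = ‖z‖ → ‖Complex.exp w‖ ≤ Real.exp ‖z‖ := fun w hw =>
    hw ▸ Complex.norm_exp_le_exp_norm w
  rw [Complex.cos, norm_div, Complex.norm_ofNat, div_le_iff₀ two_pos]
  linarith [norm_add_le (Complex.exp (z * Complex.I)) (Complex.exp (-z * Complex.I)),
    hexp (z * Complex.I) (by simp), hexp (-z * Complex.I) (by simp)]

theorem norm_cos_pi_mul_le {v : ℂ} {r : ℝ} (hv : ‖v‖ ≤ r) :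
    ‖Complex.cos (π * v)‖ ≤ Real.exp (π * r) := by
  refine (norm_cos_le_exp_norm _).trans (Real.exp_le_exp.2 ?_)
  rw [norm_mul, Complex.norm_real, Real.norm_of_nonneg Real.pi_pos.le]
  gcongr

-- Applying `exists_differentiableOn_cos_eq` twice produces `G` with `cos (π cos (π G)) = 2 h - 1`
-- whose values omit the solutions of `cos (π v) ∈ ℤ`, hence contain no disc of radius `2`.
theorem exists_cos_cos_eq_of_omits {c : ℂ} {R : ℝ} {h : ℂ → ℂ} (hR : 0 < R)
    (hh : DifferentiableOn ℂ h (ball c R)) (h0 : ∀ z ∈ ball c R, h z ≠ 0)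
    (h1 : ∀ z ∈ ball c R, h z ≠ 1) :
    ∃ G : ℂ → ℂ, DifferentiableOn ℂ G (ball c R) ∧ ‖G c‖ ≤ ‖2 * h c - 1‖ + 2 ∧
      (∀ w, ¬ ball w 2 ⊆ G '' ball c R) ∧
      ∀ z ∈ ball c R, Complex.cos (π * Complex.cos (π * G z)) = 2 * h z - 1 := by
  have hsc : IsSimplyConnected (ball c R) :=
    isSimplyConnected_of_convex (convex_ball c R) ⟨c, mem_ball_self hR⟩
  obtain ⟨φ, hφ, hφc, hcosφ⟩ := exists_differentiableOn_cos_eq hsc isOpen_ball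
    (h := fun z => 2 * h z - 1) ((hh.const_mul 2).sub_const 1)
    (fun z hz e => h1 z hz (by linear_combination e / 2))
    (fun z hz e => h0 z hz (by linear_combination e / 2)) (mem_ball_self hR)
  have hφint : ∀ z ∈ ball c R, ∀ n : ℤ, φ z ≠ n := by
    intro z hz n e
    have hcosz := hcosφ z hz
    rw [e] at hcosz
    rcases cos_pi_mul_intCast_eq_or n with hn | hn
    · exact h1 z hz (by linear_combination (hn - hcosz) / 2)
    · exact h0 z hz (by linear_combination (hn - hcosz) / 2)
  obtain ⟨G, hG, hGc, hcosG⟩ := exists_differentiableOn_cos_eq hsc isOpen_ball hφ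
    (fun z hz e => hφint z hz 1 (by simpa using e))
    (fun z hz e => hφint z hz (-1) (by simpa using e)) (mem_ball_self hR)
  refine ⟨G, hG, by linarith, fun w hw => ?_, fun z hz => by rw [hcosG z hz, hcosφ z hz]⟩
  obtain ⟨v, hv, n, hn⟩ := exists_cos_pi_mul_eq_intCast w
  obtain ⟨x, hx, rfl⟩ := hw hv
  exact hφint x hx n (by rw [← hcosG x hx, hn])

/-- Schottky's theorem. -/
theorem exists_norm_le_of_omits (A : ℝ) : ∃ B : ℝ, 0 < B ∧ ∀ (c : ℂ) (R : ℝ) (h : ℂ → ℂ),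
    DifferentiableOn ℂ h (ball c R) → (∀ z ∈ ball c R, h z ≠ 0) → (∀ z ∈ ball c R, h z ≠ 1) →
    ‖h c‖ ≤ A → ∀ z ∈ ball c (R / 2), ‖h z‖ ≤ B := by
  refine ⟨(1 + Real.exp (π * Real.exp (π * (2 * A + 99)))) / 2, by positivity,
    fun c R h hh h0 h1 hA z hz => ?_⟩
  have hR : 0 < R := by linarith [pos_of_mem_ball hz]
  have hsub : ball c (R / 2) ⊆ ball c R := ball_subset_ball (by linarith)
  obtain ⟨G, hG, hGc, hnoball, hcos⟩ := exists_cos_cos_eq_of_omits hR hh h0 h1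
  have hderiv : ∀ x ∈ ball c (R / 2), ‖deriv G x‖ ≤ 192 / R := by
    intro x hx
    have hbloch := norm_deriv_mul_le_of_forall_not_ball_subset hG two_pos hnoball (hsub hx)
    rw [le_div_iff₀ hR]
    nlinarith [norm_nonneg (deriv G x), mem_ball.1 hx]
  have hGz : ‖G z‖ ≤ 2 * A + 99 := by
    have hmean := (convex_ball c (R / 2)).norm_image_sub_le_of_norm_deriv_le
      (fun x hx => hG.differentiableAt (isOpen_ball.mem_nhds (hsub hx))) hderiv
      (mem_ball_self (by linarith)) hz
    have hdist : 192 / R * ‖z - c‖ ≤ 96 := by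
      rw [div_mul_eq_mul_div, div_le_iff₀ hR, ← dist_eq_norm]
      linarith [mem_ball.1 hz]
    have hhc : ‖2 * h c - 1‖ ≤ 2 * A + 1 := by
      refine (norm_sub_le _ _).trans ?_
      rw [norm_mul, norm_one, Complex.norm_ofNat]
      linarith
    linarith [norm_le_norm_add_norm_sub' (G z) (G c)]
  have hbound := norm_cos_pi_mul_le (norm_cos_pi_mul_le hGz)
  rw [hcos z (hsub hz)] at hbound
  have hsplit : h z = ((2 * h z - 1) + 1) / 2 := by ring
  have htri := norm_add_le (2 * h z - 1) 1
  rw [norm_one] at htri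
  rw [hsplit, norm_div, Complex.norm_ofNat]
  linarith

/-! ### Harnack inequalities -/

section Propagation

variable {X : Type*} {P : (X → ℝ) → Prop} {s t s' t' : Set X} {x : X}

/-- `PropagatesBound P s t`: for functions in the family `P`, an upper bound at a single point of
`s` yields an upper bound on all of `t` which depends only on the given bound. -/
def PropagatesBound (P : (X → ℝ) → Prop) (s t : Set X) : Prop :=
  ∀ A, ∃ B, ∀ u, P u → ∀ z ∈ s, u z ≤ A → ∀ z' ∈ t, u z' ≤ B

namespace PropagatesBound

theorem mono (h : PropagatesBound P s t) (hs : s' ⊆ s) (ht : t' ⊆ t) :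
    PropagatesBound P s' t' := fun A =>
  let ⟨B, hB⟩ := h A
  ⟨B, fun u hu z hz hzA z' hz' => hB u hu z (hs hz) hzA z' (ht hz')⟩

theorem trans (h₁ : PropagatesBound P s {x}) (h₂ : PropagatesBound P {x} t) :
    PropagatesBound P s t := fun A =>
  let ⟨B, hB⟩ := h₁ A
  let ⟨C, hC⟩ := h₂ B
  ⟨C, fun u hu z hz hzA => hC u hu x rfl (hB u hu z hz hzA x rfl)⟩

theorem union (h : PropagatesBound P s t) (h' : PropagatesBound P s t') :
    PropagatesBound P s (t ∪ t') := fun A =>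
  let ⟨B, hB⟩ := h A
  let ⟨B', hB'⟩ := h' A
  ⟨max B B', fun u hu z hz hzA z' hz' => hz'.elim
    (fun hz' => le_max_of_le_left (hB u hu z hz hzA z' hz'))
    (fun hz' => le_max_of_le_right (hB' u hu z hz hzA z' hz'))⟩

theorem union_left (h : PropagatesBound P s t) (h' : PropagatesBound P s' t) :
    PropagatesBound P (s ∪ s') t := fun A =>
  let ⟨B, hB⟩ := h A
  let ⟨B', hB'⟩ := h' A
  ⟨max B B', fun u hu z hz hzA z' hz' => hz.elim
    (fun hz => le_max_of_le_left (hB u hu z hz hzA z' hz'))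
    (fun hz => le_max_of_le_right (hB' u hu z hz hzA z' hz'))⟩

theorem of_isCompact [TopologicalSpace X] {W K : Set X} (hW : IsPreconnected W)
    (hK : IsCompact K) (hKW : K ⊆ W)
    (hlocal : ∀ x ∈ W, ∃ t ∈ 𝓝 x, PropagatesBound P {x} t ∧ PropagatesBound P t {x}) :
    PropagatesBound P K K := by
  have hpoint : ∀ x ∈ W, ∀ y ∈ W, PropagatesBound P {x} {y} := fun x hx y hy => by
    refine hW.induction₂' (fun x y => PropagatesBound P {x} {y}) (fun x hx => ?_)
      (fun _ _ _ _ _ _ => trans) hx hy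
    obtain ⟨t, ht, hto, hfrom⟩ := hlocal x hx
    filter_upwards [nhdsWithin_le_nhds ht] with y hy
    exact ⟨hto.mono subset_rfl (singleton_subset_iff.2 hy),
      hfrom.mono (singleton_subset_iff.2 hy) subset_rfl⟩
  rcases K.eq_empty_or_nonempty with rfl | ⟨x₀, hx₀⟩
  · exact fun _ => ⟨0, fun _ _ z hz => hz.elim⟩
  have hto : PropagatesBound P {x₀} K := by
    refine hK.induction_on (p := PropagatesBound P {x₀})
      (fun A => ⟨0, fun _ _ _ _ _ z hz => hz.elim⟩)
      (fun _ _ hst h => h.mono subset_rfl hst) (fun _ _ => union) fun x hx => ?_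
    obtain ⟨t, ht, hxt, -⟩ := hlocal x (hKW hx)
    exact ⟨t, nhdsWithin_le_nhds ht, (hpoint x₀ (hKW hx₀) x (hKW hx)).trans hxt⟩
  have hfrom : PropagatesBound P K {x₀} := by
    refine hK.induction_on (p := (PropagatesBound P · {x₀}))
      (fun A => ⟨0, fun _ _ z hz => hz.elim⟩)
      (fun _ _ hst h => h.mono hst subset_rfl) (fun _ _ => union_left) fun x hx => ?_
    obtain ⟨t, ht, -, htx⟩ := hlocal x (hKW hx)
    exact ⟨t, nhdsWithin_le_nhds ht, htx.trans (hpoint x (hKW hx) x₀ (hKW hx₀))⟩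
  exact hfrom.trans hto

theorem of_forall_ball {X : Type*} [PseudoMetricSpace X] {P : (X → ℝ) → Prop} {W K : Set X}
    (hWo : IsOpen W) (hW : IsPreconnected W) (hK : IsCompact K) (hKW : K ⊆ W)
    (hball : ∀ A, ∃ B, ∀ u, P u → ∀ y r, ball y r ⊆ W → u y ≤ A → ∀ z ∈ ball y (r / 2), u z ≤ B) :
    PropagatesBound P K K := by
  refine of_isCompact hW hK hKW fun x hx => ?_
  obtain ⟨r, hr, hrW⟩ := Metric.isOpen_iff.1 hWo x hx
  refine ⟨ball x (r / 4), ball_mem_nhds _ (by linarith), fun A => ?_, fun A => ?_⟩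
  · obtain ⟨B, hB⟩ := hball A
    refine ⟨B, fun u hu y hy hyA z hz => ?_⟩
    rw [mem_singleton_iff.1 hy] at hyA
    exact hB u hu x r hrW hyA z (ball_subset_ball (by linarith) hz)
  · obtain ⟨B, hB⟩ := hball A
    refine ⟨B, fun u hu z hz hzA y hy => ?_⟩
    have hzx : dist z x < r / 4 := hz
    refine hB u hu z (3 * r / 4) ((ball_subset_ball' ?_).trans hrW) hzA y ?_
    · linarith
    · rw [mem_singleton_iff.1 hy, mem_ball, dist_comm]
      linarith

end PropagatesBound

end Propagation

section ChainBounds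

variable {W K : Set ℂ}

theorem exists_norm_le_of_omits_of_isCompact (hWo : IsOpen W) (hW : IsPreconnected W)
    (hK : IsCompact K) (hKW : K ⊆ W) (A : ℝ) : ∃ B, 1 ≤ B ∧ ∀ φ : ℂ → ℂ, DifferentiableOn ℂ φ W →
      (∀ z ∈ W, φ z ≠ 0) → (∀ z ∈ W, φ z ≠ 1) → ∀ z ∈ K, ‖φ z‖ ≤ A → ∀ z' ∈ K, ‖φ z'‖ ≤ B := by
  have hprop : PropagatesBound (fun u => ∃ φ : ℂ → ℂ, (u = fun z => ‖φ z‖) ∧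
      DifferentiableOn ℂ φ W ∧ (∀ z ∈ W, φ z ≠ 0) ∧ (∀ z ∈ W, φ z ≠ 1)) K K := by
    refine .of_forall_ball hWo hW hK hKW fun A => ?_
    obtain ⟨B, -, hB⟩ := exists_norm_le_of_omits A
    refine ⟨B, ?_⟩
    rintro _ ⟨φ, rfl, hφ, h0, h1⟩ y r hyr hA
    exact hB y r φ (hφ.mono hyr) (fun z hz => h0 z (hyr hz)) (fun z hz => h1 z (hyr hz)) hA
  obtain ⟨B, hB⟩ := hprop A
  exact ⟨max B 1, le_max_right _ _, fun φ hφ h0 h1 z hz hA z' hz' =>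
    (hB _ ⟨φ, rfl, hφ, h0, h1⟩ z hz hA z' hz').trans (le_max_left _ _)⟩

theorem norm_sub_le_of_re_pos {h : ℂ → ℂ} {c z : ℂ} {R : ℝ} (hh : DifferentiableOn ℂ h (ball c R))
    (hpos : ∀ z ∈ ball c R, 0 < (h z).re) (hz : z ∈ ball c R) :
    ‖h z - h c‖ ≤ 2 * (h c).re * dist z c / (R - dist z c) := by
  have hR : 0 < R := dist_nonneg.trans_lt hz
  have hmaps : ∀ w ∈ ball (0 : ℂ) R, c + w ∈ ball c R := fun w hw => by
    simpa [dist_eq_norm] using hw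
  have hBC := Complex.borelCaratheodory_zero (f := fun w => h c - h (c + w)) (M := (h c).re)
    (hpos c (mem_ball_self hR)) ((hh.comp (by fun_prop) hmaps).const_sub (h c))
    (fun w hw => by simpa using (hpos _ (hmaps w hw)).le) hR
    (z := z - c) (by simpa [dist_eq_norm] using hz) (by simp)
  simp only [add_sub_cancel] at hBC
  rwa [norm_sub_rev, ← dist_eq_norm z c] at hBC

theorem log_norm_le_three_mul {q : ℂ → ℂ} {c z : ℂ} {r : ℝ} (hq : DifferentiableOn ℂ q (ball c r))
    (h1 : ∀ z ∈ ball c r, 1 < ‖q z‖) (hz : z ∈ ball c (r / 2)) :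
    Real.log ‖q z‖ ≤ 3 * Real.log ‖q c‖ := by
  have hzc : dist z c < r / 2 := hz
  have hr : 0 < r := by linarith [dist_nonneg (x := z) (y := c)]
  have hc : c ∈ ball c r := mem_ball_self hr
  have hzr : z ∈ ball c r := ball_subset_ball (by linarith) hz
  have hq0 : ∀ z ∈ ball c r, q z ≠ 0 := fun z hz =>
    norm_pos_iff.1 (one_pos.trans (h1 z hz))
  obtain ⟨L, hL, -, hexp⟩ := exists_differentiableOn_exp_eq
    (isSimplyConnected_of_convex (convex_ball c r) ⟨c, hc⟩) isOpen_ball hq hq0 hc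
    (Complex.exp_log (hq0 c hc))
  have hre : ∀ z ∈ ball c r, (L z).re = Real.log ‖q z‖ := fun z hz => by
    rw [← hexp z hz, Complex.norm_exp, Real.log_exp]
  have hpos : ∀ z ∈ ball c r, 0 < (L z).re := fun z hz => by
    rw [hre z hz]
    exact Real.log_pos (h1 z hz)
  have hsub : (L z).re - (L c).re ≤ 2 * (L c).re := calc
    (L z).re - (L c).re ≤ ‖L z - L c‖ := (Complex.sub_re _ _ ▸ Complex.re_le_norm _)
    _ ≤ 2 * (L c).re * dist z c / (r - dist z c) := norm_sub_le_of_re_pos hL hpos hzr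
    _ ≤ 2 * (L c).re := by
      rw [div_le_iff₀ (by linarith)]
      exact mul_le_mul_of_nonneg_left (by linarith) (by linarith [hpos c hc])
  rw [← hre z hzr, ← hre c hc]
  linarith

/-- Harnack's inequality for `log ‖q‖`. -/
theorem exists_log_norm_le_mul_of_isCompact (hWo : IsOpen W) (hW : IsPreconnected W)
    (hK : IsCompact K) (hKW : K ⊆ W) : ∃ C, 1 ≤ C ∧ ∀ q : ℂ → ℂ, DifferentiableOn ℂ q W →
      (∀ z ∈ W, 1 < ‖q z‖) → ∀ z ∈ K, ∀ z' ∈ K, Real.log ‖q z‖ ≤ C * Real.log ‖q z'‖ := by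
  -- The family is closed under positive scaling, so a bound from `1` gives a linear bound.
  have hprop : PropagatesBound (fun u => ∃ (q : ℂ → ℂ) (l : ℝ),
      (u = fun z => l * Real.log ‖q z‖) ∧ 0 < l ∧
      DifferentiableOn ℂ q W ∧ (∀ z ∈ W, 1 < ‖q z‖)) K K := by
    refine .of_forall_ball hWo hW hK hKW fun A => ⟨3 * A, ?_⟩
    rintro _ ⟨q, l, rfl, hl, hq, h1⟩ y r hyr hA z hz
    calc l * Real.log ‖q z‖
      _ ≤ l * (3 * Real.log ‖q y‖) := by
        gcongr
        exact log_norm_le_three_mul (hq.mono hyr) (fun z hz => h1 z (hyr hz)) hz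
      _ ≤ 3 * A := by linarith
  obtain ⟨B, hB⟩ := hprop 1
  refine ⟨max B 1, le_max_right _ _, fun q hq h1 z hz z' hz' => ?_⟩
  have hpos : 0 < Real.log ‖q z'‖ := Real.log_pos (h1 z' (hKW hz'))
  have hscaled : (Real.log ‖q z'‖)⁻¹ * Real.log ‖q z‖ ≤ B :=
    hB _ ⟨q, _, rfl, inv_pos.2 hpos, hq, h1⟩ z' hz' (inv_mul_cancel₀ hpos.ne').le z hz
  rw [inv_mul_le_iff₀ hpos, mul_comm] at hscaled
  exact hscaled.trans (mul_le_mul_of_nonneg_right (le_max_left _ _) hpos.le)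

end ChainBounds

/-! ### Univalent functions -/

section Univalent

variable {h : ℂ → ℂ} {U : Set ℂ} {c : ℂ}

theorem map_nhds_eq_of_injOn (hU : IsOpen U) (hh : DifferentiableOn ℂ h U) (hinj : InjOn h U)
    (hc : c ∈ U) : map h (𝓝 c) = 𝓝 (h c) := by
  have hUc := hU.mem_nhds hc
  refine le_antisymm (hh.differentiableAt hUc).continuousAt
    ((hh.analyticAt hUc).eventually_constant_or_nhds_le_map_nhds.resolve_left fun hconst => ?_)
  have hfalse : ∀ᶠ _ in 𝓝[≠] c, False := by
    filter_upwards [nhdsWithin_le_nhds hconst, nhdsWithin_le_nhds hUc, self_mem_nhdsWithin]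
      with z hz hzU hzc
    exact hzc (hinj hzU hc hz)
  exact hfalse.exists.elim fun _ => id

theorem continuousAt_invFunOn (hU : IsOpen U) (hh : DifferentiableOn ℂ h U) (hinj : InjOn h U)
    (hc : c ∈ U) : ContinuousAt (Function.invFunOn h U) (h c) := by
  rw [ContinuousAt, ← map_nhds_eq_of_injOn hU hh hinj hc, tendsto_map'_iff,
    hinj.leftInvOn_invFunOn hc]
  refine tendsto_id.congr' ?_
  filter_upwards [hU.mem_nhds hc] with z hz
  exact (hinj.leftInvOn_invFunOn hz).symm

theorem hasDerivAt_invFunOn_of_deriv_ne_zero (hU : IsOpen U) (hh : DifferentiableOn ℂ h U)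
    (hinj : InjOn h U) (hc : c ∈ U) (h0 : deriv h c ≠ 0) :
    HasDerivAt (Function.invFunOn h U) (deriv h c)⁻¹ (h c) := by
  refine HasDerivAt.of_local_left_inverse (f := h) (continuousAt_invFunOn hU hh hinj hc) ?_ h0 ?_
  · rw [hinj.leftInvOn_invFunOn hc]
    exact (hh.differentiableAt (hU.mem_nhds hc)).hasDerivAt
  · rw [← map_nhds_eq_of_injOn hU hh hinj hc, eventually_map]
    filter_upwards [hU.mem_nhds hc] with z hz
    rw [hinj.leftInvOn_invFunOn hz]

theorem eventually_deriv_ne_zero_of_injOn (hU : IsOpen U) (hh : DifferentiableOn ℂ h U)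
    (hinj : InjOn h U) (hc : c ∈ U) : ∀ᶠ z in 𝓝[≠] c, deriv h z ≠ 0 := by
  have han := hh.analyticAt (hU.mem_nhds hc)
  refine han.deriv.eventually_eq_zero_or_eventually_ne_zero.resolve_left fun hzero => ?_
  obtain ⟨ε, hε, hball⟩ := Metric.mem_nhds_iff.1 (inter_mem hzero (hU.mem_nhds hc))
  have hconst : ∀ z ∈ ball c ε, h z = h c := fun z hz =>
    isOpen_ball.is_const_of_deriv_eq_zero (convex_ball c ε).isPreconnected
      (hh.mono fun z hz => (hball hz).2) (fun z hz => (hball hz).1) hz (mem_ball_self hε)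
  have hnear : ∀ᶠ z in 𝓝[≠] c, z ∈ ball c ε ∧ z ≠ c :=
    Filter.Eventually.and (nhdsWithin_le_nhds (ball_mem_nhds c hε)) self_mem_nhdsWithin
  obtain ⟨z, hz, hzc⟩ := hnear.exists
  exact hzc (hinj (hball hz).2 hc (hconst z hz))

-- The inverse is continuous and differentiable off `h c`, so `h c` is a removable singularity.
theorem deriv_ne_zero_of_injOn (hU : IsOpen U) (hh : DifferentiableOn ℂ h U) (hinj : InjOn h U)
    (hc : c ∈ U) : deriv h c ≠ 0 := by
  have hdiff : ∀ᶠ w in 𝓝[≠] h c, DifferentiableAt ℂ (Function.invFunOn h U) w := by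
    rw [eventually_nhdsWithin_iff, ← map_nhds_eq_of_injOn hU hh hinj hc, eventually_map]
    filter_upwards [eventually_nhdsWithin_iff.1 (eventually_deriv_ne_zero_of_injOn hU hh hinj hc),
      hU.mem_nhds hc] with z hz hzU hne
    have hzc : z ∈ ({c}ᶜ : Set ℂ) := fun e => hne (congrArg h e)
    exact (hasDerivAt_invFunOn_of_deriv_ne_zero hU hh hinj hzU (hz hzc)).differentiableAt
  have hinv := (Complex.analyticAt_of_differentiable_on_punctured_nhds_of_continuousAt hdiff
    (continuousAt_invFunOn hU hh hinj hc)).differentiableAt.hasDerivAt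
  have hid : Function.invFunOn h U ∘ h =ᶠ[𝓝 c] id := by
    filter_upwards [hU.mem_nhds hc] with z hz using hinj.leftInvOn_invFunOn hz
  have hchain := hinv.comp c (hh.differentiableAt (hU.mem_nhds hc)).hasDerivAt
  exact right_ne_zero_of_mul_eq_one
    ((hchain.congr_of_eventuallyEq hid.symm).unique (hasDerivAt_id c))

theorem hasDerivAt_invFunOn (hU : IsOpen U) (hh : DifferentiableOn ℂ h U) (hinj : InjOn h U)
    (hc : c ∈ U) : HasDerivAt (Function.invFunOn h U) (deriv h c)⁻¹ (h c) :=
  hasDerivAt_invFunOn_of_deriv_ne_zero hU hh hinj hc (deriv_ne_zero_of_injOn hU hh hinj hc)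

theorem norm_deriv_le_of_norm_le {R B : ℝ} (hR : 0 < R) (hh : DifferentiableOn ℂ h (ball c R))
    (hB : ∀ z ∈ ball c R, ‖h z‖ ≤ B) : ‖deriv h c‖ ≤ 2 * B / R := by
  refine Complex.norm_deriv_le_div_of_mapsTo_ball hh (fun z hz => ?_) hR
  rw [mem_closedBall, dist_eq_norm]
  refine (norm_sub_le _ _).trans ?_
  linarith [hB z hz, hB c (mem_ball_self hR)]

-- As `h` is injective, a square root `s` of `(h - α) / (h c - α)` omits the value `-s c`.
theorem exists_sq_eq_of_injOn_of_omits {r : ℝ} {α : ℂ} (hr : 0 < r)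
    (hh : DifferentiableOn ℂ h (ball c r)) (hinj : InjOn h (ball c r))
    (hα : ∀ z ∈ ball c r, h z ≠ α) :
    ∃ s : ℂ → ℂ, DifferentiableOn ℂ s (ball c r) ∧ s c = -1 ∧ (∀ z ∈ ball c r, s z ≠ 0) ∧
      (∀ z ∈ ball c r, s z ≠ 1) ∧ ∀ z ∈ ball c r, h z - α = s z ^ 2 * (h c - α) := by
  have hc : c ∈ ball c r := mem_ball_self hr
  have hcα : h c - α ≠ 0 := sub_ne_zero.2 (hα c hc)
  have hne : ∀ z ∈ ball c r, (h z - α) / (h c - α) ≠ 0 := fun z hz =>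
    div_ne_zero (sub_ne_zero.2 (hα z hz)) hcα
  obtain ⟨s, hs, hsq⟩ := exists_differentiableOn_sq_eq
    (isSimplyConnected_of_convex (convex_ball c r) ⟨c, hc⟩) isOpen_ball
    ((hh.sub_const α).div_const (h c - α)) hne
  have hs0 : ∀ z ∈ ball c r, s z ≠ 0 := fun z hz e =>
    hne z hz (by rw [← hsq z hz, e, sq, zero_mul])
  have hsc : s c ^ 2 = 1 := by rw [hsq c hc, div_self hcα]
  have hscale : ∀ z, (-s z / s c) ^ 2 = s z ^ 2 := fun z => by
    rw [div_pow, hsc, div_one, neg_sq]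
  refine ⟨fun z => -s z / s c, hs.neg.div_const _, ?_, fun z hz => ?_, fun z hz hz1 => ?_,
    fun z hz => ?_⟩
  · simp only [neg_div, div_self (hs0 c hc)]
  · exact div_ne_zero (neg_ne_zero.2 (hs0 z hz)) (hs0 c hc)
  · have hsz : s z ^ 2 = 1 := by rw [← hscale, show -s z / s c = 1 from hz1, one_pow]
    rw [hsq z hz, div_eq_one_iff_eq hcα, sub_left_inj] at hsz
    rw [hinj hz hc hsz] at hz1
    simp only [neg_div, div_self (hs0 c hc)] at hz1
    norm_num at hz1
  · rw [hscale, hsq z hz, div_mul_cancel₀ _ hcα]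

theorem exists_norm_sub_le_mul_of_injOn_of_omits :
    ∃ B : ℝ, 1 ≤ B ∧ ∀ (c : ℂ) (r : ℝ) (h : ℂ → ℂ) (α : ℂ), DifferentiableOn ℂ h (ball c r) →
      InjOn h (ball c r) → (∀ z ∈ ball c r, h z ≠ α) →
      ∀ z ∈ ball c (r / 2), ‖h z - α‖ ≤ B * ‖h c - α‖ := by
  obtain ⟨B, -, hB⟩ := exists_norm_le_of_omits 1
  refine ⟨B ^ 2 + 1, by linarith [sq_nonneg B], fun c r h α hh hinj hα z hz => ?_⟩
  have hr : 0 < r := by linarith [pos_of_mem_ball hz]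
  obtain ⟨s, hs, hsc, hs0, hs1, hsq⟩ := exists_sq_eq_of_injOn_of_omits hr hh hinj hα
  rw [hsq z (ball_subset_ball (by linarith) hz), norm_mul, norm_pow]
  have hsz : ‖s z‖ ≤ B := hB c r s hs hs0 hs1 (by rw [hsc, norm_neg, norm_one]) z hz
  gcongr
  exact (pow_le_pow_left₀ (norm_nonneg _) hsz 2).trans (lt_add_one _).le

/-- A weak form of the Koebe quarter theorem. -/
theorem exists_ball_subset_image_of_injOn :
    ∃ c₀ > (0 : ℝ), ∀ (c : ℂ) (r : ℝ) (h : ℂ → ℂ), DifferentiableOn ℂ h (ball c r) →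
      InjOn h (ball c r) → ball (h c) (c₀ * r * ‖deriv h c‖) ⊆ h '' ball c r := by
  obtain ⟨B, hB1, hB⟩ := exists_norm_sub_le_mul_of_injOn_of_omits
  have hB0 : 0 < B := by linarith
  refine ⟨1 / (4 * B), one_div_pos.2 (mul_pos four_pos hB0), fun c r h hh hinj α hα => ?_⟩
  by_contra hαh
  have hr : 0 < r := pos_of_mul_pos_right (pos_of_mul_pos_left (pos_of_mem_ball hα)
    (norm_nonneg _)) (by positivity)
  have hderiv := norm_deriv_le_of_norm_le (h := fun z => h z - α) (half_pos hr)
    ((hh.sub_const α).mono (ball_subset_ball (by linarith)))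
    (hB c r h α hh hinj fun z hz e => hαh ⟨z, hz, e⟩)
  rw [deriv_sub_const, le_div_iff₀ (half_pos hr)] at hderiv
  have hdist : ‖h c - α‖ < 1 / (4 * B) * r * ‖deriv h c‖ := by
    rw [← dist_eq_norm, dist_comm]
    exact hα
  rw [mul_assoc, div_mul_eq_mul_div, one_mul, lt_div_iff₀ (by positivity)] at hdist
  linarith

-- Otherwise the inverse, by the Schwarz lemma, would have too small a derivative at `h c`.
theorem exists_dist_lt_of_injOn {r : ℝ} (hr : 0 < r) (hh : DifferentiableOn ℂ h (ball c r))
    (hinj : InjOn h (ball c r)) :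
    ∃ α, dist α (h c) < 2 * r * ‖deriv h c‖ ∧ ∀ z ∈ ball c r, h z ≠ α := by
  have hc : c ∈ ball c r := mem_ball_self hr
  have hpos : 0 < ‖deriv h c‖ := norm_pos_iff.2 (deriv_ne_zero_of_injOn isOpen_ball hh hinj hc)
  by_contra! hcover
  have hdiff : DifferentiableOn ℂ (Function.invFunOn h (ball c r))
      (ball (h c) (2 * r * ‖deriv h c‖)) := by
    intro α hα
    obtain ⟨z, hz, rfl⟩ := hcover α hα
    exact (hasDerivAt_invFunOn isOpen_ball hh hinj hz).differentiableAt.differentiableWithinAt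
  have hmaps : MapsTo (Function.invFunOn h (ball c r)) (ball (h c) (2 * r * ‖deriv h c‖))
      (closedBall (Function.invFunOn h (ball c r) (h c)) r) := by
    intro α hα
    obtain ⟨z, hz, rfl⟩ := hcover α hα
    rw [hinj.leftInvOn_invFunOn hz, hinj.leftInvOn_invFunOn hc]
    exact ball_subset_closedBall hz
  have hle := Complex.norm_deriv_le_div_of_mapsTo_ball hdiff hmaps (by positivity)
  have hhalf : r / (2 * r * ‖deriv h c‖) = ‖deriv h c‖⁻¹ / 2 := by field_simp
  rw [(hasDerivAt_invFunOn isOpen_ball hh hinj hc).deriv, norm_inv, hhalf] at hle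
  linarith [inv_pos.2 hpos]

theorem exists_norm_deriv_le_mul_of_injOn :
    ∃ C : ℝ, 1 ≤ C ∧ ∀ (c : ℂ) (r : ℝ) (h : ℂ → ℂ), DifferentiableOn ℂ h (ball c r) →
      InjOn h (ball c r) → ∀ z ∈ ball c (r / 8), ‖deriv h z‖ ≤ C * ‖deriv h c‖ := by
  obtain ⟨B, hB1, hB⟩ := exists_norm_sub_le_mul_of_injOn_of_omits
  refine ⟨16 * B, by linarith, fun c r h hh hinj z hz => ?_⟩
  have hzc : dist z c < r / 8 := hz
  have hr : 0 < r := by linarith [pos_of_mem_ball hz]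
  obtain ⟨α, hαc, hα⟩ := exists_dist_lt_of_injOn hr hh hinj
  have hsub : ball z (r / 4) ⊆ ball c (r / 2) := ball_subset_ball' (by linarith)
  have hbound : ∀ y ∈ ball z (r / 4), ‖h y - α‖ ≤ B * (2 * r * ‖deriv h c‖) := fun y hy => by
    refine (hB c r h α hh hinj hα y (hsub hy)).trans ?_
    gcongr
    rw [← dist_eq_norm, dist_comm]
    exact hαc.le
  have hderiv := norm_deriv_le_of_norm_le (h := fun z => h z - α) (by linarith)
    ((hh.sub_const α).mono (hsub.trans (ball_subset_ball (by linarith)))) hbound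
  rw [deriv_sub_const] at hderiv
  refine hderiv.trans_eq ?_
  field_simp
  ring

/-- A weak form of the Koebe distortion theorem. -/
theorem exists_koebe_distortion : ∃ C : ℝ, 1 ≤ C ∧ ∀ (c : ℂ) (r : ℝ) (h : ℂ → ℂ),
    DifferentiableOn ℂ h (ball c r) → InjOn h (ball c r) → ∀ z ∈ ball c (r / 16),
    ‖deriv h z‖ ≤ C * ‖deriv h c‖ ∧ ‖deriv h c‖ ≤ C * ‖deriv h z‖ := by
  obtain ⟨C, hC1, hC⟩ := exists_norm_deriv_le_mul_of_injOn
  refine ⟨C, hC1, fun c r h hh hinj z hz => ?_⟩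
  have hzc : dist z c < r / 16 := hz
  have hr : 0 < r := by linarith [pos_of_mem_ball hz]
  have hsub : ball z (15 * r / 16) ⊆ ball c r := ball_subset_ball' (by linarith)
  refine ⟨hC c r h hh hinj z (ball_subset_ball (by linarith) hz),
    hC z (15 * r / 16) h (hh.mono hsub) (hinj.mono hsub) c ?_⟩
  rw [mem_ball, dist_comm]
  linarith

theorem exists_eq_mul_add_of_injective {f : ℂ → ℂ} (hf : Differentiable ℂ f)
    (hinj : Function.Injective f) : ∃ a b : ℂ, ∀ z, f z = a * z + b := by
  obtain ⟨C, -, hC⟩ := exists_norm_deriv_le_mul_of_injOn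
  have hbound : ∀ z, ‖deriv f z‖ ≤ C * ‖deriv f 0‖ := fun z =>
    hC 0 (8 * (‖z‖ + 1)) f hf.differentiableOn hinj.injOn z (by simp)
  have hconst : ∀ z, deriv f z = deriv f 0 := fun z =>
    Differentiable.apply_eq_apply_of_bounded (fun z => (hf.analyticAt z).deriv.differentiableAt)
      (isBounded_iff_forall_norm_le.2 ⟨_, forall_mem_range.2 hbound⟩) z 0
  refine ⟨deriv f 0, f 0, fun z => ?_⟩
  have hderiv : ∀ z, deriv (fun z => f z - deriv f 0 * z) z = 0 := fun z => by
    have hsub := (hf z).hasDerivAt.sub ((hasDerivAt_id z).const_mul (deriv f 0))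
    rw [mul_one, hconst z, sub_self] at hsub
    exact hsub.deriv
  have heq : f z - deriv f 0 * z = f 0 - deriv f 0 * 0 :=
    is_const_of_deriv_eq_zero (hf.sub (by fun_prop)) hderiv z 0
  linear_combination heq

end Univalent

/-! ### Picard's theorems -/

section IsolatedSingularity

variable {φ : ℂ → ℂ} {R : ℝ}

/-- Schottky's theorem on circles, applied to `φ ∘ exp` on discs of radius `16 > 2 π`. -/
theorem exists_norm_le_of_omits_of_norm_eq (A : ℝ) :
    ∃ B : ℝ, ∀ (R : ℝ) (φ : ℂ → ℂ), 0 < R → DifferentiableOn ℂ φ {z | R < ‖z‖} →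
      (∀ z, R < ‖z‖ → φ z ≠ 0) → (∀ z, R < ‖z‖ → φ z ≠ 1) →
      ∀ z z', R * Real.exp 16 ≤ ‖z‖ → ‖z'‖ = ‖z‖ → ‖φ z‖ ≤ A → ‖φ z'‖ ≤ B := by
  obtain ⟨B, -, hB⟩ := exists_norm_le_of_omits A
  refine ⟨B, fun R φ hR hφ h0 h1 z z' hz hzz' hA => ?_⟩
  have hnorm : 0 < ‖z‖ := (by positivity : 0 < R * Real.exp 16).trans_le hz
  have hmaps : ∀ t ∈ ball (Complex.log z) 16, R < ‖Complex.exp t‖ := fun t ht => by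
    rw [mem_ball, dist_eq_norm] at ht
    have hre := neg_lt_of_abs_lt ((Complex.abs_re_le_norm _).trans_lt ht)
    have hlog : Real.log R + 16 ≤ Real.log ‖z‖ := by
      rw [← Real.log_exp 16, ← Real.log_mul hR.ne' (Real.exp_pos _).ne']
      exact Real.log_le_log (by positivity) hz
    rw [Complex.sub_re, Complex.log_re] at hre
    rw [Complex.norm_exp, ← Real.log_lt_iff_lt_exp hR]
    linarith
  have hlogs : Complex.log z' ∈ ball (Complex.log z) (16 / 2) := by
    have hsub : Complex.log z' - Complex.log z = ((z'.arg - z.arg : ℝ) : ℂ) * Complex.I := by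
      apply Complex.ext <;> simp [Complex.log_re, Complex.log_im, hzz']
    rw [mem_ball, dist_eq_norm, hsub, norm_mul, Complex.norm_I, mul_one, Complex.norm_real,
      Real.norm_eq_abs, abs_lt]
    constructor <;> linarith [Complex.neg_pi_lt_arg z, Complex.neg_pi_lt_arg z',
      Complex.arg_le_pi z, Complex.arg_le_pi z', Real.pi_lt_d2]
  have hbound := hB (Complex.log z) 16 (fun t => φ (Complex.exp t))
    (hφ.comp Complex.differentiable_exp.differentiableOn hmaps)
    (fun t ht => h0 _ (hmaps t ht)) (fun t ht => h1 _ (hmaps t ht))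
    (by rwa [Complex.exp_log (norm_pos_iff.1 hnorm)]) (Complex.log z') hlogs
  rwa [Complex.exp_log (norm_pos_iff.1 (hzz' ▸ hnorm))] at hbound

theorem norm_le_of_norm_le_of_norm_eq {r₁ r₂ B : ℝ}
    (hφ : DifferentiableOn ℂ φ {z | r₁ ≤ ‖z‖ ∧ ‖z‖ ≤ r₂}) (h₁ : ∀ z, ‖z‖ = r₁ → ‖φ z‖ ≤ B)
    (h₂ : ∀ z, ‖z‖ = r₂ → ‖φ z‖ ≤ B) {z : ℂ} (hz₁ : r₁ < ‖z‖) (hz₂ : ‖z‖ < r₂) : ‖φ z‖ ≤ B := by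
  have hU : IsOpen {w : ℂ | r₁ < ‖w‖ ∧ ‖w‖ < r₂} :=
    (isOpen_lt continuous_const continuous_norm).inter (isOpen_lt continuous_norm continuous_const)
  have hclosure : closure {w : ℂ | r₁ < ‖w‖ ∧ ‖w‖ < r₂} ⊆ {w | r₁ ≤ ‖w‖ ∧ ‖w‖ ≤ r₂} :=
    closure_minimal (fun w hw => ⟨hw.1.le, hw.2.le⟩)
      ((isClosed_le continuous_const continuous_norm).inter
        (isClosed_le continuous_norm continuous_const))
  refine Complex.norm_le_of_forall_mem_frontier_norm_le
    (isBounded_ball.subset fun w hw => mem_ball_zero_iff.2 hw.2)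
    (hφ.mono hclosure).diffContOnCl (fun w hw => ?_) (subset_closure ⟨hz₁, hz₂⟩)
  have hwU : ¬ (r₁ < ‖w‖ ∧ ‖w‖ < r₂) := fun hwU => hw.2 (hU.interior_eq.symm ▸ hwU)
  obtain ⟨hw₁, hw₂⟩ := hclosure hw.1
  rcases hw₁.eq_or_lt with heq | hlt
  · exact h₁ w heq.symm
  · exact h₂ w (hw₂.antisymm (not_lt.1 fun h => hwU ⟨hlt, h⟩))

theorem meromorphicAt_comp_inv_of_norm_le {B : ℝ} (hR : 0 < R)
    (hφ : DifferentiableOn ℂ φ {z | R < ‖z‖}) (hB : ∀ z, R < ‖z‖ → ‖φ z‖ ≤ B) :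
    MeromorphicAt (fun x => φ x⁻¹) 0 := by
  have hmaps : ∀ x ∈ ball (0 : ℂ) R⁻¹ \ {0}, R < ‖x⁻¹‖ := fun x hx => by
    rw [norm_inv, lt_inv_comm₀ hR (norm_pos_iff.2 hx.2)]
    exact mem_ball_zero_iff.1 hx.1
  have hnhds : ball (0 : ℂ) R⁻¹ ∈ 𝓝 0 := ball_mem_nhds _ (inv_pos.2 hR)
  have hext := Complex.differentiableOn_update_limUnder_of_bddAbove (f := fun x => φ x⁻¹) hnhds
    (hφ.comp (fun x hx => (differentiableAt_inv hx.2).differentiableWithinAt) hmaps)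
    ⟨B, by rintro _ ⟨x, hx, rfl⟩; exact hB _ (hmaps x hx)⟩
  refine (hext.analyticAt hnhds).meromorphicAt.congr ?_
  filter_upwards [self_mem_nhdsWithin] with x hx using Function.update_of_ne hx _ _

theorem exists_forall_norm_le_of_omits (hR : 0 < R) (hφ : DifferentiableOn ℂ φ {z | R < ‖z‖})
    (h0 : ∀ z, R < ‖z‖ → φ z ≠ 0) (h1 : ∀ z, R < ‖z‖ → φ z ≠ 1)
    (hfreq : ∀ ρ : ℝ, ∃ z, ρ ≤ ‖z‖ ∧ ‖φ z‖ ≤ 1) :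
    ∃ ρ B : ℝ, R < ρ ∧ ∀ z, ρ < ‖z‖ → ‖φ z‖ ≤ B := by
  obtain ⟨B, hB⟩ := exists_norm_le_of_omits_of_norm_eq 1
  obtain ⟨z₁, hz₁, hφ₁⟩ := hfreq (R * Real.exp 16)
  have hRz₁ : R < ‖z₁‖ := (lt_mul_of_one_lt_right hR (Real.one_lt_exp_iff.2 (by norm_num))).trans_le
    hz₁
  refine ⟨‖z₁‖, B, hRz₁, fun z hz => ?_⟩
  obtain ⟨z₂, hz₂, hφ₂⟩ := hfreq (max (R * Real.exp 16) (‖z‖ + 1))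
  exact norm_le_of_norm_le_of_norm_eq (hφ.mono fun w hw => hRz₁.trans_le hw.1)
    (fun w hw => hB R φ hR hφ h0 h1 z₁ w hz₁ hw hφ₁)
    (fun w hw => hB R φ hR hφ h0 h1 z₂ w ((le_max_left _ _).trans hz₂) hw hφ₂) hz
    ((lt_add_one _).trans_le ((le_max_right _ _).trans hz₂))

/-- Picard's great theorem, for the omitted values `0`, `1`, `∞`. -/
theorem meromorphicAt_comp_inv_of_omits (hR : 0 < R) (hφ : DifferentiableOn ℂ φ {z | R < ‖z‖})
    (h0 : ∀ z, R < ‖z‖ → φ z ≠ 0) (h1 : ∀ z, R < ‖z‖ → φ z ≠ 1) :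
    MeromorphicAt (fun x => φ x⁻¹) 0 := by
  by_cases hfreq : ∀ ρ : ℝ, ∃ z, ρ ≤ ‖z‖ ∧ ‖φ z‖ ≤ 1
  · obtain ⟨ρ, B, hRρ, hB⟩ := exists_forall_norm_le_of_omits hR hφ h0 h1 hfreq
    exact meromorphicAt_comp_inv_of_norm_le (hR.trans hRρ) (hφ.mono fun z hz => hRρ.trans hz) hB
  · push Not at hfreq
    obtain ⟨ρ, hρ⟩ := hfreq
    have hinv := meromorphicAt_comp_inv_of_norm_le (φ := fun z => (φ z)⁻¹) (R := max R ρ) (B := 1)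
      (lt_max_of_lt_left hR)
      ((hφ.mono fun z hz => (le_max_left R ρ).trans_lt hz).fun_inv
        fun z hz => h0 z ((le_max_left _ _).trans_lt hz))
      (fun z hz => by
        rw [norm_inv]
        exact inv_le_one_of_one_le₀ (hρ z ((le_max_right _ _).trans_lt hz).le).le)
    simpa using hinv.fun_inv

/-- Picard's little theorem, for the omitted values `0` and `1`. -/
theorem eq_of_differentiable_of_omits {f : ℂ → ℂ} (hf : Differentiable ℂ f) (h0 : ∀ z, f z ≠ 0)
    (h1 : ∀ z, f z ≠ 1) (z w : ℂ) : f z = f w := by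
  obtain ⟨B, -, hB⟩ := exists_norm_le_of_omits ‖f 0‖
  refine hf.apply_eq_apply_of_bounded (isBounded_iff_forall_norm_le.2 ⟨B, ?_⟩) z w
  rintro _ ⟨z, rfl⟩
  exact hB 0 (2 * (‖z‖ + 1)) f hf.differentiableOn (fun z _ => h0 z) (fun z _ => h1 z) le_rfl z
    (by simp)

end IsolatedSingularity

/-! ### Iterates and the Fatou set -/

section Iterates

variable {F : ℂ → OnePoint ℂ}

/-- The finite part of a map to the sphere (junk value `0` at its poles). -/
noncomputable def finMap (F : ℂ → OnePoint ℂ) (z : ℂ) : ℂ := finPart (F z)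

theorem coe_finPart {u : OnePoint ℂ} (hu : u ≠ infty) : (finPart u : OnePoint ℂ) = u := by
  induction u using OnePoint.rec with
  | infty => exact absurd rfl hu
  | coe z => rfl

theorem totalize_coe (F : ℂ → OnePoint ℂ) (z : ℂ) : totalize F z = F z := rfl

theorem totalize_iterate_infty (F : ℂ → OnePoint ℂ) (n : ℕ) :
    (totalize F)^[n] infty = infty :=
  Function.iterate_fixed rfl n

theorem iterate_ne_infty_of_le {u : OnePoint ℂ} {m n : ℕ} (hmn : m ≤ n)
    (h : (totalize F)^[n] u ≠ infty) : (totalize F)^[m] u ≠ infty := fun e => by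
  obtain ⟨j, rfl⟩ := Nat.exists_eq_add_of_le' hmn
  rw [Function.iterate_add_apply, e, totalize_iterate_infty] at h
  exact h rfl

theorem totalize_iterate_coe {z : ℂ} {n : ℕ} (h : (totalize F)^[n] z ≠ infty) :
    (totalize F)^[n] z = ((finMap F)^[n] z : ℂ) := by
  induction n with
  | zero => rfl
  | succ n ih =>
    have hn := ih (iterate_ne_infty_of_le n.le_succ h)
    rw [Function.iterate_succ_apply', hn, totalize_coe] at h ⊢
    rw [Function.iterate_succ_apply', finMap, coe_finPart h]

theorem continuousAt_totalize (hmero : ∀ z : ℂ, SphereMeroAt F z) {u : OnePoint ℂ}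
    (hu : u ≠ infty) : ContinuousAt (totalize F) u := by
  induction u using OnePoint.rec with
  | infty => exact absurd rfl hu
  | coe z => exact OnePoint.continuousAt_coe.2 (hmero z).1

theorem SphereMeroAt.analyticAt_finMap {z : ℂ} (hF : SphereMeroAt F z) (hz : F z ≠ infty) :
    AnalyticAt ℂ (finMap F) z := by
  have hchart := hF.2
  rwa [← coe_finPart hz] at hchart

theorem continuousAt_iterate (hmero : ∀ z : ℂ, SphereMeroAt F z) {n : ℕ} {u : OnePoint ℂ}
    (h : (totalize F)^[n] u ≠ infty) : ContinuousAt (totalize F)^[n] u := by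
  induction n with
  | zero => exact continuousAt_id
  | succ n ih =>
    have hn := iterate_ne_infty_of_le n.le_succ h
    rw [Function.iterate_succ']
    exact (continuousAt_totalize hmero hn).comp (ih hn)

theorem isOpen_setOf_iterate_ne_infty (hmero : ∀ z : ℂ, SphereMeroAt F z) (n : ℕ) :
    IsOpen {z : ℂ | (totalize F)^[n] z ≠ infty} := by
  refine isOpen_iff_mem_nhds.2 fun z hz => ?_
  have hcont := (continuousAt_iterate hmero hz).comp OnePoint.continuous_coe.continuousAt
  exact hcont.preimage_mem_nhds (isOpen_compl_singleton.mem_nhds hz)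

theorem differentiableAt_iterate (hmero : ∀ z : ℂ, SphereMeroAt F z) {n : ℕ} {z : ℂ}
    (h : (totalize F)^[n] z ≠ infty) : DifferentiableAt ℂ (finMap F)^[n] z := by
  induction n with
  | zero => exact differentiableAt_id
  | succ n ih =>
    have hn := iterate_ne_infty_of_le n.le_succ h
    rw [Function.iterate_succ']
    refine ((hmero _).analyticAt_finMap ?_).differentiableAt.comp z (ih hn)
    rwa [Function.iterate_succ_apply', totalize_iterate_coe hn] at h

end Iterates

section ChordalMetric

theorem chordalDist_coe (z w : ℂ) : chordalDist z w =
    2 * dist z w / (Real.sqrt (1 + ‖z‖ ^ 2) * Real.sqrt (1 + ‖w‖ ^ 2)) := rfl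

theorem chordalDist_coe_le_div (z w : ℂ) : chordalDist z w ≤ 4 * dist z w / (1 + ‖z‖) := by
  have hz : (1 + ‖z‖) / 2 ≤ Real.sqrt (1 + ‖z‖ ^ 2) :=
    Real.le_sqrt_of_sq_le (by nlinarith [sq_nonneg (‖z‖ - 1), norm_nonneg z])
  have hw : 1 ≤ Real.sqrt (1 + ‖w‖ ^ 2) := Real.one_le_sqrt.2 (by linarith [sq_nonneg ‖w‖])
  calc chordalDist z w
    _ ≤ 2 * dist z w / ((1 + ‖z‖) / 2 * 1) := by
      rw [chordalDist_coe]
      gcongr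
    _ = 4 * dist z w / (1 + ‖z‖) := by
      field_simp
      ring

theorem chordalDist_coe_le (z w : ℂ) : chordalDist z w ≤ 4 * dist z w :=
  (chordalDist_coe_le_div z w).trans
    (div_le_self (by positivity) (by linarith [norm_nonneg z]))

theorem sqrt_one_add_sq_norm_le (z w : ℂ) :
    Real.sqrt (1 + ‖w‖ ^ 2) ≤ Real.sqrt (1 + ‖z‖ ^ 2) + dist z w := by
  have hw : ‖w‖ ≤ ‖z‖ + dist z w := by
    rw [dist_eq_norm, norm_sub_rev]
    exact norm_le_norm_add_norm_sub' _ _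
  have hz : ‖z‖ ≤ Real.sqrt (1 + ‖z‖ ^ 2) := Real.le_sqrt_of_sq_le (by linarith)
  refine Real.sqrt_le_iff.2 ⟨by positivity, ?_⟩
  have hsq := Real.sq_sqrt (show 0 ≤ 1 + ‖z‖ ^ 2 by positivity)
  have hd : 0 ≤ dist z w := dist_nonneg
  nlinarith [norm_nonneg w, mul_le_mul_of_nonneg_right hz hd]

theorem exists_dist_lt_of_chordalDist_lt (z : ℂ) {η : ℝ} (hη : 0 < η) :
    ∃ δ > 0, ∀ w : ℂ, chordalDist z w < δ → dist z w < η := by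
  set a := Real.sqrt (1 + ‖z‖ ^ 2)
  have ha1 : 1 ≤ a := Real.one_le_sqrt.2 (by linarith [sq_nonneg ‖z‖])
  refine ⟨min 1 η / a ^ 2, by positivity, fun w hw => ?_⟩
  have hd : 0 ≤ dist z w := dist_nonneg
  have hm : 0 < min 1 η := lt_min one_pos hη
  have hlt : 2 * dist z w * a ^ 2 < min 1 η * (a * (a + dist z w)) := by
    rw [chordalDist_coe, div_lt_div_iff₀ (by positivity) (by positivity)] at hw
    refine hw.trans_le ?_
    gcongr
    exact sqrt_one_add_sq_norm_le z w
  have hle : min 1 η * (a * (a + dist z w)) ≤ (min 1 η + dist z w) * a ^ 2 := by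
    have hmul : min 1 η * dist z w ≤ dist z w * a :=
      (mul_le_of_le_one_left hd (min_le_left _ _)).trans (le_mul_of_one_le_right hd ha1)
    nlinarith
  have hfin := lt_of_mul_lt_mul_right (hlt.trans_le hle) (by positivity)
  linarith [min_le_right 1 η]

end ChordalMetric

section FatouSet

variable {F : ℂ → OnePoint ℂ}

theorem mem_meroFatou_univ_iff {z : ℂ} : z ∈ MeroFatou F univ ↔
    ∃ N : Set ℂ, IsOpen N ∧ z ∈ N ∧ (∀ n : ℕ, ∀ x ∈ N, (totalize F)^[n] x ≠ infty) ∧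
      SphereEquicontOn (totalize F) ((fun t : ℂ => (t : OnePoint ℂ)) '' N) := by
  have hrange : (fun t : ℂ => (t : OnePoint ℂ)) '' univ = {infty}ᶜ :=
    image_univ.trans OnePoint.compl_infty.symm
  have hclosure : closure ((fun t : ℂ => (t : OnePoint ℂ)) '' univ) = univ := by
    rw [image_univ]
    exact OnePoint.denseRange_coe.closure_range
  constructor
  · rintro ⟨N, hN, hz, ⟨hdef, heq⟩ | ⟨n, -, hn⟩⟩
    · refine ⟨N, hN, hz, fun n x hx => ?_, heq⟩
      have hx' := hdef n (mem_image_of_mem _ (mem_image_of_mem _ hx))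
      rwa [hrange] at hx'
    · have hz' := hn (mem_image_of_mem _ (mem_image_of_mem _ hz))
      rw [hclosure] at hz'
      exact absurd (mem_univ _) hz'
  · rintro ⟨N, hN, hz, hdef, heq⟩
    refine ⟨N, hN, hz, Or.inl ⟨fun n => ?_, heq⟩⟩
    rintro _ ⟨_, ⟨x, hx, rfl⟩, rfl⟩
    rw [hrange]
    exact hdef n x hx

theorem isOpen_meroFatou (F : ℂ → OnePoint ℂ) : IsOpen (MeroFatou F univ) := by
  refine isOpen_iff_forall_mem_open.2 fun z hz => ?_
  obtain ⟨N, hN, hzN, h⟩ := mem_meroFatou_univ_iff.1 hz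
  exact ⟨N, fun x hx => mem_meroFatou_univ_iff.2 ⟨N, hN, hx, h⟩, hN, hzN⟩

theorem iterate_ne_infty_of_mem_meroFatou {z : ℂ} (hz : z ∈ MeroFatou F univ) (n : ℕ) :
    (totalize F)^[n] z ≠ infty := by
  obtain ⟨N, -, hzN, hdef, -⟩ := mem_meroFatou_univ_iff.1 hz
  exact hdef n z hzN

theorem exists_chordalDist_iterate_lt (hmero : ∀ z : ℂ, SphereMeroAt F z) {u : ℂ} {n : ℕ}
    (hu : (totalize F)^[n] u ≠ infty) {ε : ℝ} (hε : 0 < ε) :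
    ∃ δ > 0, ∀ v : ℂ, (totalize F)^[n] v ≠ infty → chordalDist u v < δ → ∀ m ≤ n,
      chordalDist ((totalize F)^[m] u) ((totalize F)^[m] v) < ε := by
  have hcont : ∀ᶠ v in 𝓝 u, ∀ m ∈ Finset.range (n + 1),
      dist ((finMap F)^[m] v) ((finMap F)^[m] u) < ε / 4 := by
    refine (Filter.eventually_all_finset _).2 fun m hm => ?_
    have hm' := iterate_ne_infty_of_le (Nat.lt_succ_iff.1 (Finset.mem_range.1 hm)) hu
    exact (differentiableAt_iterate hmero hm').continuousAt (ball_mem_nhds _ (by positivity))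
  obtain ⟨η, hη, hηball⟩ := Metric.eventually_nhds_iff.1 hcont
  obtain ⟨δ, hδ, hδη⟩ := exists_dist_lt_of_chordalDist_lt u hη
  refine ⟨δ, hδ, fun v hv huv m hm => ?_⟩
  rw [totalize_iterate_coe (iterate_ne_infty_of_le hm hu),
    totalize_iterate_coe (iterate_ne_infty_of_le hm hv)]
  have hdist := hηball (y := v) (by rw [dist_comm]; exact hδη v huv) m
    (Finset.mem_range.2 (Nat.lt_succ_of_le hm))
  rw [dist_comm] at hdist
  linarith [chordalDist_coe_le ((finMap F)^[m] u) ((finMap F)^[m] v)]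

theorem mem_meroFatou_of_iterate (hmero : ∀ z : ℂ, SphereMeroAt F z) {z w : ℂ} {n : ℕ}
    (h : (totalize F)^[n] z = w) (hw : w ∈ MeroFatou F univ) : z ∈ MeroFatou F univ := by
  obtain ⟨N, hN, hwN, hdef, heq⟩ := mem_meroFatou_univ_iff.1 hw
  have hz : (totalize F)^[n] z ≠ infty := by
    rw [h]
    exact OnePoint.coe_ne_infty w
  have hcont : ContinuousOn (finMap F)^[n] {z : ℂ | (totalize F)^[n] z ≠ infty} := fun x hx =>
    (differentiableAt_iterate hmero hx).continuousAt.continuousWithinAt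
  refine mem_meroFatou_univ_iff.2 ⟨{z : ℂ | (totalize F)^[n] z ≠ infty} ∩ (finMap F)^[n] ⁻¹' N,
    hcont.isOpen_inter_preimage (isOpen_setOf_iterate_ne_infty hmero n) hN, ⟨hz, ?_⟩, ?_, ?_⟩
  · rw [totalize_iterate_coe hz, OnePoint.coe_eq_coe] at h
    rwa [mem_preimage, h]
  · rintro m x ⟨hx, hxN⟩
    have hxm := hdef m _ hxN
    rw [← totalize_iterate_coe hx, ← Function.iterate_add_apply] at hxm
    exact iterate_ne_infty_of_le (Nat.le_add_right m n) hxm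
  · rintro _ ⟨u, ⟨hu, huN⟩, rfl⟩ ε hε
    obtain ⟨δ₁, hδ₁, hlate⟩ := heq _ (mem_image_of_mem _ huN) ε hε
    obtain ⟨δ, hδ, hearly⟩ := exists_chordalDist_iterate_lt hmero hu (lt_min hε hδ₁)
    refine ⟨δ, hδ, ?_⟩
    rintro _ ⟨v, ⟨hv, hvN⟩, rfl⟩ huv m
    rcases le_total m n with hm | hm
    · exact (hearly v hv huv m hm).trans_le (min_le_left _ _)
    · obtain ⟨j, rfl⟩ := Nat.exists_eq_add_of_le' hm
      have hn := (hearly v hv huv n le_rfl).trans_le (min_le_right _ _)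
      rw [totalize_iterate_coe hu, totalize_iterate_coe hv] at hn
      rw [Function.iterate_add_apply, Function.iterate_add_apply, totalize_iterate_coe hu,
        totalize_iterate_coe hv]
      exact hlate _ (mem_image_of_mem _ hvN) hn j

end FatouSet

section Transcendental

variable {F : ℂ → OnePoint ℂ}

/-- The map `F : ℂ → Ĉ` extends meromorphically to `∞`. A meromorphic function is transcendental
when it does not. -/
def ExtendsToInfty (F : ℂ → OnePoint ℂ) : Prop :=
  ∃ g : OnePoint ℂ → OnePoint ℂ, SphereAnalyticAt g infty ∧ ∃ r : ℝ, ∀ z : ℂ, r < ‖z‖ → g z = F z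

theorem finPart_sphereInv_coe (z : ℂ) : finPart (sphereInv z) = z⁻¹ := by
  change finPart (if z = 0 then infty else ((z⁻¹ : ℂ) : OnePoint ℂ)) = z⁻¹
  split_ifs with hz
  · rw [hz, inv_zero]
    rfl
  · rfl

theorem extendsToInfty_of_tendsto {v : OnePoint ℂ}
    (hv : Tendsto F (Bornology.cobounded ℂ) (𝓝 v))
    (hana : AnalyticAt ℂ
      (Function.update (fun x => sphereChart v (F x⁻¹)) 0 (sphereChart v v)) 0) :
    ExtendsToInfty F := by
  let g : OnePoint ℂ → OnePoint ℂ := fun u => Option.casesOn u v F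
  refine ⟨g, ⟨?_, ?_⟩, 0, fun z _ => rfl⟩
  · rw [OnePoint.continuousAt_infty', coclosedCompact_eq_cocompact,
      ← Metric.cobounded_eq_cocompact]
    exact hv
  · change AnalyticAt ℂ _ (0 : ℂ)
    convert hana using 1
    funext x
    change sphereChart v (g (if x = 0 then infty else ((x⁻¹ : ℂ) : OnePoint ℂ))) = _
    rcases eq_or_ne x 0 with rfl | hx
    · rw [Function.update_self, if_pos rfl]
      rfl
    · rw [Function.update_of_ne hx, if_neg hx]
      rfl

theorem extendsToInfty_of_meromorphicAt (hfin : ∀ᶠ z in Bornology.cobounded ℂ, F z ≠ infty)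
    (h : MeromorphicAt (fun x => finMap F x⁻¹) 0) : ExtendsToInfty F := by
  have hF : ∀ᶠ z in Bornology.cobounded ℂ, (finMap F z : OnePoint ℂ) = F z :=
    hfin.mono fun z hz => coe_finPart hz
  have hlim {l : Filter ℂ} (hl : Tendsto (fun x => finMap F x⁻¹) (𝓝[≠] 0) l) :
      Tendsto (finMap F) (Bornology.cobounded ℂ) l := by
    simpa only [Function.comp_def, inv_inv] using hl.comp Filter.tendsto_inv₀_cobounded'
  rcases le_or_gt 0 (meromorphicOrderAt (fun x => finMap F x⁻¹) 0) with hord | hord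
  · obtain ⟨c, hc⟩ := (tendsto_nhds_iff_meromorphicOrderAt_nonneg h).2 hord
    refine extendsToInfty_of_tendsto
      (((OnePoint.continuous_coe.tendsto c).comp (hlim hc)).congr' hF) ?_
    refine MeromorphicAt.analyticAt (h.congr ?_) (continuousAt_update_same.2 hc)
    filter_upwards [self_mem_nhdsWithin] with x hx
    rw [Function.update_of_ne hx]
    rfl
  · have hinfty := (tendsto_cobounded_iff_meromorphicOrderAt_neg h).2 hord
    have hchart : ∀ᶠ x in 𝓝[≠] (0 : ℂ), (finMap F x⁻¹)⁻¹ = sphereChart infty (F x⁻¹) := by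
      filter_upwards [Filter.tendsto_inv₀_nhdsNE_zero.eventually hF] with x hx
      rw [← hx]
      exact (finPart_sphereInv_coe _).symm
    refine extendsToInfty_of_tendsto (v := infty) (Tendsto.congr' hF ?_) ?_
    · refine OnePoint.tendsto_coe_infty.comp ?_
      rw [coclosedCompact_eq_cocompact, ← Metric.cobounded_eq_cocompact]
      exact hlim hinfty
    · refine MeromorphicAt.analyticAt (h.fun_inv.congr ?_) (continuousAt_update_same.2
        ((Filter.tendsto_inv₀_cobounded.comp hinfty).congr' hchart))
      filter_upwards [self_mem_nhdsWithin, hchart] with x hx hchartx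
      rw [Function.update_of_ne hx]
      exact hchartx

theorem extendsToInfty_of_eq_mul_add {a b : ℂ} (hfin : ∀ z, F z ≠ infty)
    (hab : ∀ z, finMap F z = a * z + b) : ExtendsToInfty F := by
  refine extendsToInfty_of_meromorphicAt (Eventually.of_forall hfin) ?_
  simp only [hab]
  fun_prop

theorem extendsToInfty_of_injective (hmero : ∀ z : ℂ, SphereMeroAt F z)
    (hfin : ∀ z, F z ≠ infty) (hinj : Function.Injective (finMap F)) : ExtendsToInfty F := by
  obtain ⟨a, b, hab⟩ := exists_eq_mul_add_of_injective
    (fun z => ((hmero z).analyticAt_finMap (hfin z)).differentiableAt) hinj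
  exact extendsToInfty_of_eq_mul_add hfin hab

theorem not_forall_injOn_ball (hmero : ∀ z : ℂ, SphereMeroAt F z) (htrans : ¬ExtendsToInfty F) :
    ¬∀ L : ℝ, (∀ z ∈ ball (0 : ℂ) L, F z ≠ infty) ∧ InjOn (finMap F) (ball 0 L) := by
  refine fun h => htrans (extendsToInfty_of_injective hmero
    (fun z => (h (‖z‖ + 1)).1 z (by simp)) fun z w hzw => ?_)
  exact (h (max ‖z‖ ‖w‖ + 1)).2
    (mem_ball_zero_iff.2 ((le_max_left ‖z‖ ‖w‖).trans_lt (lt_add_one _)))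
    (mem_ball_zero_iff.2 ((le_max_right ‖z‖ ‖w‖).trans_lt (lt_add_one _))) hzw

end Transcendental

section UnivalentIterates

theorem exists_dist_le_mul_of_injOn_of_omits :
    ∃ B > 0, ∀ (c : ℂ) (r : ℝ) (h : ℂ → ℂ) (α : ℂ), DifferentiableOn ℂ h (ball c r) →
      InjOn h (ball c r) → (∀ z ∈ ball c r, h z ≠ α) →
      ∀ v ∈ ball c (r / 4), dist (h c) (h v) ≤ B / r * ‖h c - α‖ * dist c v := by
  obtain ⟨B, hB1, hB⟩ := exists_norm_sub_le_mul_of_injOn_of_omits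
  refine ⟨8 * B, by linarith, fun c r h α hh hinj hα v hv => ?_⟩
  have hr : 0 < r := by linarith [pos_of_mem_ball hv]
  have hderiv : ∀ y ∈ ball c (r / 4), ‖deriv h y‖ ≤ 8 * B / r * ‖h c - α‖ := fun y hy => by
    have hyc : ball y (r / 4) ⊆ ball c (r / 2) :=
      ball_subset_ball' (by linarith [mem_ball.1 hy])
    have hle := norm_deriv_le_of_norm_le (h := fun x => h x - α) (by positivity : 0 < r / 4)
      ((hh.mono (hyc.trans (ball_subset_ball (by linarith)))).sub_const α)
      fun x hx => hB c r h α hh hinj hα x (hyc hx)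
    rw [deriv_sub_const] at hle
    refine hle.trans (le_of_eq ?_)
    field_simp
    ring
  have hmvt := (convex_ball c (r / 4)).norm_image_sub_le_of_norm_deriv_le (𝕜 := ℂ)
    (fun y hy => hh.differentiableAt (isOpen_ball.mem_nhds (ball_subset_ball (by linarith) hy)))
    hderiv (mem_ball_self (by positivity)) hv
  rwa [norm_sub_rev, norm_sub_rev v, ← dist_eq_norm, ← dist_eq_norm c] at hmvt

theorem exists_chordalDist_le_mul_of_injOn_of_omits (A : ℝ) :
    ∃ K > 0, ∀ (c : ℂ) (r : ℝ) (h : ℂ → ℂ) (α : ℂ), DifferentiableOn ℂ h (ball c r) →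
      InjOn h (ball c r) → (∀ z ∈ ball c r, h z ≠ α) → ‖α‖ ≤ A →
      ∀ v ∈ ball c (r / 4), chordalDist (h c) (h v) ≤ K / r * dist c v := by
  obtain ⟨B, hB0, hB⟩ := exists_dist_le_mul_of_injOn_of_omits
  refine ⟨4 * B * (1 + |A|), by positivity, fun c r h α hh hinj hα hαA v hv => ?_⟩
  have hr : 0 < r := by linarith [pos_of_mem_ball hv]
  have hcα : ‖h c - α‖ ≤ (1 + |A|) * (1 + ‖h c‖) := by
    have hαA' := hαA.trans (le_abs_self A)
    nlinarith [norm_sub_le (h c) α, norm_nonneg (h c), abs_nonneg A]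
  refine (chordalDist_coe_le_div _ _).trans ((div_le_iff₀ (by positivity)).2 ?_)
  calc 4 * dist (h c) (h v)
    _ ≤ 4 * (B / r * ((1 + |A|) * (1 + ‖h c‖)) * dist c v) := by
      refine mul_le_mul_of_nonneg_left ((hB c r h α hh hinj hα v hv).trans ?_) four_pos.le
      gcongr
    _ = 4 * B * (1 + |A|) / r * dist c v * (1 + ‖h c‖) := by ring

variable {F : ℂ → OnePoint ℂ} {c : ℂ} {r : ℝ}

theorem ball_subset_meroFatou_of_omits (hmero : ∀ z : ℂ, SphereMeroAt F z)
    (hfin : ∀ n : ℕ, ∀ x ∈ ball c r, (totalize F)^[n] x ≠ infty)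
    (hinj : ∀ n : ℕ, InjOn (finMap F)^[n] (ball c r)) {A : ℝ}
    (hA : ∀ n : ℕ, ∃ α, ‖α‖ ≤ A ∧ ∀ x ∈ ball c r, (finMap F)^[n] x ≠ α) :
    ball c r ⊆ MeroFatou F univ := by
  obtain ⟨K, hK0, hK⟩ := exists_chordalDist_le_mul_of_injOn_of_omits A
  refine fun z hz => mem_meroFatou_univ_iff.2 ⟨_, isOpen_ball, hz, hfin, ?_⟩
  rintro _ ⟨u, hu, rfl⟩ ε hε
  set s := r - dist u c
  have hs : 0 < s := sub_pos.2 hu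
  have hsub : ball u s ⊆ ball c r := ball_subset_ball' (by simp [s])
  obtain ⟨δ, hδ, hδdist⟩ := exists_dist_lt_of_chordalDist_lt u
    (show 0 < min (s / 4) (ε / (K / s)) by positivity)
  refine ⟨δ, hδ, ?_⟩
  rintro _ ⟨v, hv, rfl⟩ huv n
  obtain ⟨hvs, hvε⟩ := lt_min_iff.1 (hδdist v huv)
  obtain ⟨α, hαA, hα⟩ := hA n
  have hle := hK u s (finMap F)^[n] α
    (fun x hx => (differentiableAt_iterate hmero (hfin n x (hsub hx))).differentiableWithinAt)
    ((hinj n).mono hsub) (fun x hx => hα x (hsub hx)) hαA v (by rwa [mem_ball, dist_comm])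
  rw [totalize_iterate_coe (hfin n u hu), totalize_iterate_coe (hfin n v hv)]
  rw [lt_div_iff₀' (by positivity)] at hvε
  exact hle.trans_lt hvε

-- Otherwise the images of the disc contain arbitrarily large discs about `0`, on which `F` would be
-- finite and injective.
theorem ball_subset_meroFatou (hmero : ∀ z : ℂ, SphereMeroAt F z) (htrans : ¬ExtendsToInfty F)
    (hfin : ∀ n : ℕ, ∀ x ∈ ball c r, (totalize F)^[n] x ≠ infty)
    (hinj : ∀ n : ℕ, InjOn (finMap F)^[n] (ball c r)) : ball c r ⊆ MeroFatou F univ := by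
  by_cases hA : ∃ A, ∀ n : ℕ, ∃ α, ‖α‖ ≤ A ∧ ∀ x ∈ ball c r, (finMap F)^[n] x ≠ α
  · obtain ⟨A, hA⟩ := hA
    exact ball_subset_meroFatou_of_omits hmero hfin hinj hA
  push Not at hA
  refine absurd (fun L => ?_) (not_forall_injOn_ball hmero htrans)
  obtain ⟨n, hn⟩ := hA L
  refine ⟨fun z hz => ?_, fun z hz w hw hzw => ?_⟩
  · obtain ⟨x, hx, rfl⟩ := hn z (mem_ball_zero_iff.1 hz).le
    have hx' := hfin (n + 1) x hx
    rwa [Function.iterate_succ_apply', totalize_iterate_coe (hfin n x hx)] at hx'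
  · obtain ⟨x, hx, rfl⟩ := hn z (mem_ball_zero_iff.1 hz).le
    obtain ⟨y, hy, rfl⟩ := hn w (mem_ball_zero_iff.1 hw).le
    have hxy : (finMap F)^[n + 1] x = (finMap F)^[n + 1] y := by
      simpa only [Function.iterate_succ_apply'] using hzw
    rw [hinj (n + 1) hx hy hxy]

end UnivalentIterates

section Postsingular

variable {F : ℂ → OnePoint ℂ} {S : Set (OnePoint ℂ)} {z : ℂ}

theorem mem_meroPostsingular_of_mem (hz : (z : OnePoint ℂ) ∈ S) :
    (z : OnePoint ℂ) ∈ MeroPostsingular F univ S :=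
  subset_closure (mem_iUnion.2 ⟨0, z, ⟨hz, OnePoint.coe_ne_infty z, by simp⟩, rfl⟩)

theorem apply_mem_meroPostsingular (hmero : ∀ z : ℂ, SphereMeroAt F z)
    (hz : (z : OnePoint ℂ) ∈ MeroPostsingular F univ S) : F z ∈ MeroPostsingular F univ S := by
  have hfin := (isOpen_compl_singleton (x := (infty : OnePoint ℂ))).closure_inter
    ⟨hz, OnePoint.coe_ne_infty z⟩
  refine closure_mono ?_ (mem_closure_image (f := totalize F) (x := (z : OnePoint ℂ))
    (continuousAt_totalize hmero (OnePoint.coe_ne_infty z)) hfin)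
  rintro _ ⟨v, ⟨hv, hv_ne⟩, rfl⟩
  obtain ⟨n, u, ⟨huS, hu, hun⟩, rfl⟩ := mem_iUnion.1 hv
  refine mem_iUnion.2 ⟨n + 1, u, ⟨huS, hu, fun k hk => ?_⟩, Function.iterate_succ_apply' _ _ _⟩
  rcases (Nat.lt_succ_iff.1 hk).lt_or_eq with h | rfl
  · exact hun k h
  · exact ⟨_, mem_univ _, coe_finPart hv_ne⟩

theorem deriv_finMap_ne_zero (hmero : ∀ z : ℂ, SphereMeroAt F z) (hS : MeroSingularSet F univ S)
    (hz : F z ≠ infty) (hzS : F z ∉ S) : deriv (finMap F) z ≠ 0 := by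
  obtain ⟨hSc, ⟨hmaps, hcov⟩, -⟩ := hS
  obtain ⟨U, hU, hzU, hinj⟩ := hcov.isLocalHomeomorph.isLocallyInjective ⟨z, mem_univ z, hzS⟩
  obtain ⟨V, hV, rfl⟩ := isOpen_induced_iff.1 hU
  have hFc : Continuous F := continuous_iff_continuousAt.2 fun z => (hmero z).1
  have hopen : IsOpen (V ∩ (F ⁻¹' Sᶜ ∩ F ⁻¹' {infty}ᶜ)) :=
    hV.inter ((hSc.isClosed.isOpen_compl.preimage hFc).inter
      (isOpen_compl_singleton.preimage hFc))
  refine deriv_ne_zero_of_injOn hopen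
    (fun x hx => ((hmero x).analyticAt_finMap hx.2.2).differentiableAt.differentiableWithinAt)
    (fun x hx y hy hxy => ?_) ⟨hzU, hzS, hz⟩
  have hFxy : F x = F y := by
    rw [← coe_finPart hx.2.2, ← coe_finPart hy.2.2]
    exact congrArg _ hxy
  exact congrArg Subtype.val (@hinj ⟨x, mem_univ x, hx.2.1⟩ hx.1 ⟨y, mem_univ y, hy.2.1⟩ hy.1
    (Subtype.ext hFxy))

end Postsingular

/-! ### Baker domains -/

section Lifts

variable {F : ℂ → OnePoint ℂ} {S : Set (OnePoint ℂ)} {Y : Set ℂ} {h : ℂ → ℂ} {y₀ z₀ : ℂ}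

theorem exists_lift_of_notMem (hmero : ∀ z : ℂ, SphereMeroAt F z) (hS : MeroSingularSet F univ S)
    (hY : IsSimplyConnected Y) (hYo : IsOpen Y) (hh : DifferentiableOn ℂ h Y)
    (hhS : ∀ y ∈ Y, (h y : OnePoint ℂ) ∉ S) (hy₀ : y₀ ∈ Y) (hz₀ : F z₀ = h y₀) :
    ∃ Ψ : ℂ → ℂ, DifferentiableOn ℂ Ψ Y ∧ Ψ y₀ = z₀ ∧ ∀ y ∈ Y, F (Ψ y) = h y := by
  classical
  obtain ⟨hmaps, hcov⟩ := hS.2.1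
  have : SimplyConnectedSpace Y := hY
  have : LocallyPathConnectedSpace Y := hYo.locallyPathConnectedSpace
  have hhc : Continuous fun y : Y => (⟨h y, hhS y y.2⟩ : (Sᶜ : Set (OnePoint ℂ))) :=
    Continuous.subtype_mk (OnePoint.continuous_coe.comp hh.continuousOn.domRestrict) _
  have hz₀S : F z₀ ∈ Sᶜ := hz₀ ▸ hhS y₀ hy₀
  obtain ⟨Φ, ⟨hΦ0, hΦ⟩, -⟩ := hcov.existsUnique_continuousMap_lifts ⟨_, hhc⟩ ⟨y₀, hy₀⟩
    ⟨z₀, mem_univ _, hz₀S⟩ (Subtype.ext hz₀)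
  let Ψ : ℂ → ℂ := fun y => if hy : y ∈ Y then Φ ⟨y, hy⟩ else 0
  have hΨ : ∀ y (hy : y ∈ Y), Ψ y = Φ ⟨y, hy⟩ := fun y hy => dif_pos hy
  have hΨF : ∀ y ∈ Y, F (Ψ y) = h y := fun y hy => by
    rw [hΨ y hy]
    exact congrArg Subtype.val (congrFun hΦ ⟨y, hy⟩)
  have hΨc : ContinuousOn Ψ Y := continuousOn_iff_continuous_domRestrict.2
    ((continuous_subtype_val.comp Φ.continuous).congr fun y => (hΨ y y.2).symm)
  refine ⟨Ψ, fun y hy => ?_, by rw [hΨ y₀ hy₀, hΦ0], hΨF⟩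
  have hnhds := hYo.mem_nhds hy
  have hfin : F (Ψ y) ≠ infty := hΨF y hy ▸ OnePoint.coe_ne_infty _
  have hcomp : finMap F ∘ Ψ =ᶠ[𝓝 y] h := by
    filter_upwards [hnhds] with x hx
    rw [Function.comp_apply, finMap, hΨF x hx]
    rfl
  exact (HasDerivAt.of_comp_left (hΨc.continuousAt hnhds)
    ((hmero _).analyticAt_finMap hfin).differentiableAt.hasDerivAt
    (hh.differentiableAt hnhds).hasDerivAt
    (deriv_finMap_ne_zero hmero hS hfin (hΨF y hy ▸ hhS y hy))
    hcomp).differentiableAt.differentiableWithinAt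

theorem exists_lift_iterate_of_notMem (hmero : ∀ z : ℂ, SphereMeroAt F z)
    (hS : MeroSingularSet F univ S) (hY : IsSimplyConnected Y) (hYo : IsOpen Y)
    (hh : DifferentiableOn ℂ h Y) (hhP : ∀ y ∈ Y, (h y : OnePoint ℂ) ∉ MeroPostsingular F univ S)
    (hy₀ : y₀ ∈ Y) {n : ℕ} (hz₀ : (totalize F)^[n] z₀ = h y₀) :
    ∃ Ψ : ℂ → ℂ, DifferentiableOn ℂ Ψ Y ∧ Ψ y₀ = z₀ ∧
      ∀ y ∈ Y, (totalize F)^[n] (Ψ y) = h y := by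
  induction n generalizing h with
  | zero => exact ⟨h, hh, (OnePoint.coe_injective hz₀).symm, fun y _ => rfl⟩
  | succ n ih =>
    have hw : (totalize F)^[n] z₀ = ((finMap F)^[n] z₀ : ℂ) :=
      totalize_iterate_coe (iterate_ne_infty_of_le n.le_succ (hz₀ ▸ OnePoint.coe_ne_infty _))
    rw [Function.iterate_succ_apply', hw] at hz₀
    obtain ⟨Ψ₁, hdiff₁, hbase₁, hΨ₁⟩ := exists_lift_of_notMem hmero hS hY hYo hh
      (fun y hy hyS => hhP y hy (mem_meroPostsingular_of_mem hyS)) hy₀ hz₀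
    obtain ⟨Ψ, hdiff, hbase, hΨ⟩ := ih hdiff₁
      (fun y hy hyP => hhP y hy (hΨ₁ y hy ▸ apply_mem_meroPostsingular hmero hyP))
      (by rw [hw, hbase₁])
    refine ⟨Ψ, hdiff, hbase, fun y hy => ?_⟩
    rw [Function.iterate_succ_apply', hΨ y hy]
    exact hΨ₁ y hy

end Lifts

section EntireWithoutPeriodTwo

variable {f : ℂ → ℂ}

theorem eq_mul_add_of_deriv_eq {a : ℂ} (hf : Differentiable ℂ f) (ha : ∀ z, deriv f z = a)
    (z : ℂ) : f z = a * z + f 0 := by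
  have hderiv (x : ℂ) : HasDerivAt (fun z => f z - a * z) (deriv f x - a * 1) x :=
    (hf x).hasDerivAt.sub ((hasDerivAt_id x).const_mul a)
  have hconst := is_const_of_deriv_eq_zero (f := fun z => f z - a * z)
    (fun x => (hderiv x).differentiableAt)
    (fun x => by rw [(hderiv x).deriv, ha x, mul_one, sub_self]) z 0
  linear_combination hconst

-- The quotient `(f (f z) - z) / (f z - z)` omits the values `0` and `1`.
theorem exists_iterate_sub_eq_mul_of_ne (hf : Differentiable ℂ f) (hne : ∀ z, f (f z) ≠ z) :
    ∃ c, c ≠ 0 ∧ c ≠ 1 ∧ ∀ z, f (f z) - z = c * (f z - z) := by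
  have hfix : ∀ z, f z - z ≠ 0 := fun z e => by
    rw [sub_eq_zero] at e
    exact hne z (by rw [e, e])
  have hquot0 : ∀ z, (f (f z) - z) / (f z - z) ≠ 0 := fun z =>
    div_ne_zero (sub_ne_zero.2 (hne z)) (hfix z)
  have hquot1 : ∀ z, (f (f z) - z) / (f z - z) ≠ 1 := fun z e => by
    rw [div_eq_one_iff_eq (hfix z)] at e
    exact hfix (f z) (by linear_combination e)
  refine ⟨_, hquot0 0, hquot1 0, fun z => (div_eq_iff (hfix z)).1 ?_⟩
  exact eq_of_differentiable_of_omits (f := fun z => (f (f z) - z) / (f z - z))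
    (((hf.comp hf).sub differentiable_id).div (hf.sub differentiable_id) hfix) hquot0 hquot1 z 0

-- Differentiating the identity of the previous lemma shows that `deriv f ∘ f` omits `0` and `c`.
theorem exists_eq_mul_add_of_iterate_two_ne (hf : Differentiable ℂ f) (hne : ∀ z, f (f z) ≠ z) :
    ∃ a b, ∀ z, f z = a * z + b := by
  obtain ⟨c, hc0, hc1, hfun⟩ := exists_iterate_sub_eq_mul_of_ne hf hne
  have hder : ∀ z, deriv f z * (deriv f (f z) - c) = 1 - c := fun z => by
    have hleft : HasDerivAt (fun z => f (f z) - z) (deriv f (f z) * deriv f z - 1) z :=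
      ((hf (f z)).hasDerivAt.comp z (hf z).hasDerivAt).sub (hasDerivAt_id z)
    have hright : HasDerivAt (fun z => c * (f z - z)) (c * (deriv f z - 1)) z :=
      ((hf z).hasDerivAt.sub (hasDerivAt_id z)).const_mul c
    rw [← funext hfun] at hright
    linear_combination hleft.unique hright
  have hne0 : ∀ z, deriv f z * (deriv f (f z) - c) ≠ 0 := fun z =>
    hder z ▸ sub_ne_zero.2 hc1.symm
  have hcomp : ∀ z, deriv f (f z) = deriv f (f 0) := fun z => by
    have hconst := eq_of_differentiable_of_omits (f := fun z => deriv f (f z) / c)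
      ((hf.deriv.comp hf).div_const c)
      (fun z => div_ne_zero (left_ne_zero_of_mul (hne0 (f z))) hc0)
      (fun z e => right_ne_zero_of_mul (hne0 z) (sub_eq_zero.2 ((div_eq_one_iff_eq hc0).1 e))) z 0
    exact (div_left_inj' hc0).1 hconst
  refine ⟨deriv f 0, f 0, eq_mul_add_of_deriv_eq hf fun z => ?_⟩
  refine mul_right_cancel₀ (right_ne_zero_of_mul (hne0 0)) ?_
  rw [hder 0, ← hder z, hcomp z]

end EntireWithoutPeriodTwo

/-- `W` is a Baker domain of the transcendental meromorphic function `F`: a connected component of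
the Fatou set, mapped into itself by `F^q`, on which the iterates of `F^q` tend to `∞` locally
uniformly. -/
structure IsBakerDomain (F : ℂ → OnePoint ℂ) (W : Set ℂ) (q : ℕ) : Prop where
  mero : ∀ z : ℂ, SphereMeroAt F z
  not_extendsToInfty : ¬ExtendsToInfty F
  one_le : 1 ≤ q
  nonempty : W.Nonempty
  isOpen : IsOpen W
  isPreconnected : IsPreconnected W
  subset_fatou : W ⊆ MeroFatou F univ
  subset_of_isPreconnected : ∀ N : Set ℂ, IsPreconnected N → N ⊆ MeroFatou F univ →
    (N ∩ W).Nonempty → N ⊆ W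
  mapsTo : MapsTo (finMap F)^[q] W W
  escapes : ∀ K : Set ℂ, K ⊆ W → IsCompact K → ∀ R : ℝ, ∃ N : ℕ, ∀ n ≥ N, ∀ z ∈ K,
    R < ‖(finMap F)^[n * q] z‖

namespace IsBakerDomain

variable {F : ℂ → OnePoint ℂ} {W : Set ℂ} {q : ℕ}

theorem iterate_ne_infty (h : IsBakerDomain F W q) {z : ℂ} (hz : z ∈ W) (n : ℕ) :
    (totalize F)^[n] z ≠ infty :=
  iterate_ne_infty_of_mem_meroFatou (h.subset_fatou hz) n

theorem ne_infty (h : IsBakerDomain F W q) {z : ℂ} (hz : z ∈ W) : F z ≠ infty :=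
  h.iterate_ne_infty hz 1

theorem iterate_eq (h : IsBakerDomain F W q) {z : ℂ} (hz : z ∈ W) (n : ℕ) :
    (totalize F)^[n] z = ((finMap F)^[n] z : ℂ) :=
  totalize_iterate_coe (h.iterate_ne_infty hz n)

theorem differentiableOn (h : IsBakerDomain F W q) (n : ℕ) :
    DifferentiableOn ℂ (finMap F)^[n] W := fun _ hz =>
  (differentiableAt_iterate h.mero (h.iterate_ne_infty hz n)).differentiableWithinAt

theorem mapsTo_mul (h : IsBakerDomain F W q) (n : ℕ) : MapsTo (finMap F)^[n * q] W W := by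
  rw [mul_comm, Function.iterate_mul]
  exact h.mapsTo.iterate n

theorem mem_of_mem_closure (h : IsBakerDomain F W q) {b : ℂ} (hb : b ∈ closure W)
    (hbF : b ∈ MeroFatou F univ) : b ∈ W := by
  obtain ⟨r, hr, hrF⟩ := Metric.isOpen_iff.1 (isOpen_meroFatou F) b hbF
  exact h.subset_of_isPreconnected (ball b r) (convex_ball b r).isPreconnected hrF
    (mem_closure_iff.1 hb _ isOpen_ball (mem_ball_self hr)) (mem_ball_self hr)

theorem iterate_ne_self (h : IsBakerDomain F W q) {z : ℂ} (hz : z ∈ W) {n : ℕ} (hn : n ≠ 0) :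
    (finMap F)^[n] z ≠ z := by
  intro hper
  obtain ⟨N, hN⟩ := h.escapes {z} (singleton_subset_iff.2 hz) isCompact_singleton ‖z‖
  have hlt := hN (n * N) (Nat.le_mul_of_pos_left N (Nat.pos_of_ne_zero hn)) z rfl
  rw [mul_assoc, Function.iterate_mul, Function.iterate_fixed hper] at hlt
  exact lt_irrefl _ hlt

theorem finMap_mem_meroFatou (h : IsBakerDomain F W q) {z : ℂ} (hz : z ∈ W) :
    finMap F z ∈ MeroFatou F univ := by
  have hFz : totalize F z = finMap F z := (coe_finPart (h.ne_infty hz)).symm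
  refine mem_meroFatou_of_iterate (n := q - 1) h.mero ?_ (h.subset_fatou (h.mapsTo hz))
  rw [← hFz, ← Function.iterate_succ_apply, Nat.succ_eq_add_one, Nat.sub_add_cancel h.one_le,
    h.iterate_eq hz]

theorem ne_univ (h : IsBakerDomain F W q) : W ≠ univ := by
  rintro rfl
  obtain ⟨a, b, hab⟩ := exists_eq_mul_add_of_iterate_two_ne
    (differentiableOn_univ.1 (h.differentiableOn 1))
    fun z => h.iterate_ne_self (mem_univ z) two_ne_zero
  exact h.not_extendsToInfty
    (extendsToInfty_of_eq_mul_add (fun z => h.ne_infty (mem_univ z)) hab)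

-- If `W` contained a neighbourhood of `∞` then, for a boundary point `b` of `W`, the quotient
-- `(F z - b) / (z - b)` would omit `0` and `1` near `∞`, so `F` would be meromorphic at `∞`.
theorem not_isBounded_compl (h : IsBakerDomain F W q) : ¬Bornology.IsBounded Wᶜ := by
  intro hbdd
  obtain ⟨R₀, hR₀⟩ := isBounded_iff_forall_norm_le.1 hbdd
  obtain ⟨b, hbW⟩ := nonempty_frontier_iff.2 ⟨h.nonempty, h.ne_univ⟩
  rw [h.isOpen.frontier_eq] at hbW
  have hbF : b ∉ MeroFatou F univ := fun hF => hbW.2 (h.mem_of_mem_closure hbW.1 hF)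
  set R := max 1 (max R₀ ‖b‖)
  have hRW : ∀ z, R < ‖z‖ → z ∈ W := fun z hz => by
    by_contra hzW
    exact (((le_max_left _ _).trans (le_max_right _ _)).trans_lt hz).not_ge (hR₀ z hzW)
  have hRb : ∀ z, R < ‖z‖ → z - b ≠ 0 := fun z hz e => by
    rw [sub_eq_zero.1 e] at hz
    exact hz.not_ge ((le_max_right _ _).trans (le_max_right _ _))
  have hquot := meromorphicAt_comp_inv_of_omits (φ := fun z => (finMap F z - b) / (z - b))
    (R := R) (by positivity)
    ((((h.differentiableOn 1).mono hRW).sub_const b).fun_div (by fun_prop) hRb)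
    (fun z hz => div_ne_zero
      (sub_ne_zero.2 fun e => hbF (e ▸ h.finMap_mem_meroFatou (hRW z hz))) (hRb z hz))
    (fun z hz e => h.iterate_ne_self (hRW z hz) one_ne_zero
      (sub_left_injective ((div_eq_one_iff_eq (hRb z hz)).1 e)))
  have hlarge : ∀ᶠ z in Bornology.cobounded ℂ, R < ‖z‖ :=
    (eventually_cobounded_le_norm (R + 1)).mono fun z hz => (lt_add_one R).trans_le hz
  refine h.not_extendsToInfty (extendsToInfty_of_meromorphicAt
    (hlarge.mono fun z hz => h.ne_infty (hRW z hz)) ?_)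
  have hmero : MeromorphicAt
      (fun x : ℂ => b + (x⁻¹ - b) * ((finMap F x⁻¹ - b) / (x⁻¹ - b))) 0 :=
    (MeromorphicAt.const b 0).add
      (((MeromorphicAt.id 0).inv.sub (MeromorphicAt.const b 0)).mul hquot)
  refine hmero.congr ?_
  filter_upwards [Filter.tendsto_inv₀_nhdsNE_zero.eventually hlarge] with x hx
  rw [mul_div_cancel₀ _ (hRb x⁻¹ hx)]
  ring

end IsBakerDomain

/-- The iterates of `F^q`, translated so that `a` becomes the origin. -/
noncomputable def shiftedIterate (F : ℂ → OnePoint ℂ) (q : ℕ) (a : ℂ) (n : ℕ) (z : ℂ) : ℂ :=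
  (finMap F)^[n * q] z - a

/-- A compact connected set `K` joining a point of a Baker domain `W` to its image under `F^q`,
together with a compact connected `V ⊆ W` containing `F^q(K)` and the closed `r`-neighbourhood of
`K`. The point `a` lies outside of `W`. -/
structure IsBakerFrame (F : ℂ → OnePoint ℂ) (W : Set ℂ) (q : ℕ) (a x₀ : ℂ) (K V : Set ℂ)
    (r : ℝ) : Prop extends IsBakerDomain F W q where
  notMem : a ∉ W
  isCompact_K : IsCompact K
  isPreconnected_K : IsPreconnected K
  mem_K : x₀ ∈ K
  apply_mem_K : (finMap F)^[q] x₀ ∈ K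
  isCompact_V : IsCompact V
  isPreconnected_V : IsPreconnected V
  V_subset : V ⊆ W
  r_pos : 0 < r
  closedBall_subset : ∀ x ∈ K, closedBall x r ⊆ V
  apply_mem_V : ∀ x ∈ K, (finMap F)^[q] x ∈ V

section Thickening

open scoped Pointwise

theorem isPreconnected_add {M : Type*} [TopologicalSpace M] [Add M] [ContinuousAdd M]
    {s t : Set M} (hs : IsPreconnected s) (ht : IsPreconnected t) :
    IsPreconnected (s + t) := by
  rw [← Set.add_image_prod]
  exact (hs.prod ht).image _ continuous_add.continuousOn

variable {E : Type*} [SeminormedAddCommGroup E] [NormedSpace ℝ E] {s : Set E} {r : ℝ}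

theorem isPreconnected_thickening (hs : IsPreconnected s) : IsPreconnected (thickening r s) := by
  rw [← add_ball_zero]
  exact isPreconnected_add hs (convex_ball 0 r).isPreconnected

theorem isPreconnected_cthickening (hs : IsCompact s) (hpre : IsPreconnected s) (hr : 0 ≤ r) :
    IsPreconnected (cthickening r s) := by
  rw [← hs.add_closedBall_zero hr]
  exact isPreconnected_add hpre (convex_closedBall 0 r).isPreconnected

end Thickening

theorem exists_isCompact_isPreconnected_of_isOpen {E : Type*} [TopologicalSpace E]
    [LocallyPathConnectedSpace E] {U : Set E} (hU : IsOpen U) (hpre : IsPreconnected U) {x y : E}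
    (hx : x ∈ U) (hy : y ∈ U) : ∃ K ⊆ U, IsCompact K ∧ IsPreconnected K ∧ x ∈ K ∧ y ∈ K := by
  obtain ⟨γ, hγ⟩ := (hU.isConnected_iff_isPathConnected.1 ⟨⟨x, hx⟩, hpre⟩).joinedIn x hx y hy
  exact ⟨range γ, range_subset_iff.2 hγ, isCompact_range γ.continuous,
    isPreconnected_range γ.continuous, ⟨0, γ.source⟩, ⟨1, γ.target⟩⟩

theorem IsBakerDomain.exists_isBakerFrame {F : ℂ → OnePoint ℂ} {W : Set ℂ} {q : ℕ}
    (h : IsBakerDomain F W q) {a : ℂ} (ha : a ∉ W) :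
    ∃ x₀ K V r, IsBakerFrame F W q a x₀ K V r := by
  obtain ⟨x₀, hx₀⟩ := h.nonempty
  obtain ⟨K, hKW, hKc, hKp, hx₀K, hfx₀K⟩ :=
    exists_isCompact_isPreconnected_of_isOpen h.isOpen h.isPreconnected hx₀ (h.mapsTo hx₀)
  have hcont := (h.differentiableOn q).continuousOn.mono hKW
  set K' := K ∪ (finMap F)^[q] '' K
  have hK'c : IsCompact K' := hKc.union (hKc.image_of_continuousOn hcont)
  have hK'p : IsPreconnected K' :=
    hKp.union _ hfx₀K (mem_image_of_mem _ hx₀K) (hKp.image _ hcont)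
  obtain ⟨r, hr, hrW⟩ := hK'c.exists_cthickening_subset_open h.isOpen
    (union_subset hKW (image_subset_iff.2 fun x hx => h.mapsTo (hKW hx)))
  exact ⟨x₀, K, cthickening r K', r, { h with
    notMem := ha
    isCompact_K := hKc
    isPreconnected_K := hKp
    mem_K := hx₀K
    apply_mem_K := hfx₀K
    isCompact_V := hK'c.cthickening
    isPreconnected_V := isPreconnected_cthickening hK'c hK'p hr.le
    V_subset := hrW
    r_pos := hr
    closedBall_subset := fun x hx => closedBall_subset_cthickening (subset_union_left hx) r
    apply_mem_V := fun x hx =>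
      self_subset_cthickening K' (Or.inr (mem_image_of_mem _ hx)) }⟩

section ShiftedIterate

variable {F : ℂ → OnePoint ℂ} {W : Set ℂ} {q : ℕ} {a : ℂ}

theorem shiftedIterate_succ (n : ℕ) (z : ℂ) :
    shiftedIterate F q a (n + 1) z = shiftedIterate F q a n ((finMap F)^[q] z) := by
  rw [shiftedIterate, shiftedIterate, ← Function.iterate_add_apply, Nat.succ_mul]

theorem shiftedIterate_succ' (n : ℕ) (z : ℂ) :
    shiftedIterate F q a (n + 1) z = (finMap F)^[q] (a + shiftedIterate F q a n z) - a := by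
  rw [shiftedIterate, shiftedIterate, add_sub_cancel, ← Function.iterate_add_apply, Nat.succ_mul,
    add_comm]

namespace IsBakerDomain

theorem add_shiftedIterate_mem (h : IsBakerDomain F W q) (a : ℂ) (n : ℕ) {z : ℂ} (hz : z ∈ W) :
    a + shiftedIterate F q a n z ∈ W := by
  rw [shiftedIterate, add_sub_cancel]
  exact h.mapsTo_mul n hz

theorem differentiableOn_shiftedIterate (h : IsBakerDomain F W q) (a : ℂ) (n : ℕ) :
    DifferentiableOn ℂ (shiftedIterate F q a n) W :=
  (h.differentiableOn (n * q)).sub_const a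

theorem shiftedIterate_ne (h : IsBakerDomain F W q) (n : ℕ) {z j : ℂ} (hz : z ∈ W) (hj : j ∉ W) :
    shiftedIterate F q a n z ≠ j - a := fun e => hj <| by
  simpa only [e, add_sub_cancel] using h.add_shiftedIterate_mem a n hz

theorem shiftedIterate_succ_ne (h : IsBakerDomain F W q) (n : ℕ) {z : ℂ} (hz : z ∈ W) :
    shiftedIterate F q a (n + 1) z ≠ shiftedIterate F q a n z := fun e => by
  rw [shiftedIterate_succ'] at e
  exact h.iterate_ne_self (h.add_shiftedIterate_mem a n hz) (Nat.one_le_iff_ne_zero.1 h.one_le)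
    (by linear_combination e)

end IsBakerDomain

end ShiftedIterate

namespace IsBakerFrame

variable {F : ℂ → OnePoint ℂ} {W : Set ℂ} {q : ℕ} {a x₀ : ℂ} {K V : Set ℂ} {r : ℝ}

theorem K_subset_V (h : IsBakerFrame F W q a x₀ K V r) : K ⊆ V := fun x hx =>
  h.closedBall_subset x hx (mem_closedBall_self h.r_pos.le)

theorem K_subset (h : IsBakerFrame F W q a x₀ K V r) : K ⊆ W := h.K_subset_V.trans h.V_subset

theorem ball_subset (h : IsBakerFrame F W q a x₀ K V r) {x : ℂ} (hx : x ∈ K) : ball x r ⊆ V :=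
  ball_subset_closedBall.trans (h.closedBall_subset x hx)

theorem shiftedIterate_ne_zero (h : IsBakerFrame F W q a x₀ K V r) (n : ℕ) {z : ℂ} (hz : z ∈ W) :
    shiftedIterate F q a n z ≠ 0 := by
  simpa only [sub_self] using h.shiftedIterate_ne (a := a) n hz h.notMem

theorem exists_forall_lt_norm_shiftedIterate (h : IsBakerFrame F W q a x₀ K V r) (R : ℝ) :
    ∃ N : ℕ, ∀ n ≥ N, ∀ z ∈ V, R < ‖shiftedIterate F q a n z‖ := by
  obtain ⟨N, hN⟩ := h.escapes V h.V_subset h.isCompact_V (R + ‖a‖)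
  refine ⟨N, fun n hn z hz => ?_⟩
  rw [shiftedIterate]
  linarith [hN n hn z hz, norm_sub_norm_le ((finMap F)^[n * q] z) a]

theorem exists_norm_shiftedIterate_eq (h : IsBakerFrame F W q a x₀ K V r) {ρ : ℝ}
    (hρ : ‖shiftedIterate F q a 0 x₀‖ ≤ ρ) : ∃ n, ∃ x ∈ K, ‖shiftedIterate F q a n x‖ = ρ := by
  classical
  have hex : ∃ n, ρ ≤ ‖shiftedIterate F q a (n + 1) x₀‖ := by
    obtain ⟨N, hN⟩ := h.exists_forall_lt_norm_shiftedIterate ρ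
    exact ⟨N, (hN (N + 1) N.le_succ x₀ (h.K_subset_V h.mem_K)).le⟩
  set n := Nat.find hex
  have hge : ρ ≤ ‖shiftedIterate F q a (n + 1) x₀‖ := Nat.find_spec hex
  have hle : ‖shiftedIterate F q a n x₀‖ ≤ ρ := by
    rcases Nat.eq_zero_or_pos n with hn | hn
    · rwa [hn]
    · have hmin := Nat.find_min hex (m := n - 1) (by lia)
      rw [Nat.sub_add_cancel hn] at hmin
      exact (not_le.1 hmin).le
  rw [shiftedIterate_succ] at hge
  obtain ⟨x, hx, hxρ⟩ := h.isPreconnected_K.intermediate_value h.mem_K h.apply_mem_K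
    (((h.differentiableOn_shiftedIterate a n).continuousOn.mono h.K_subset).norm) ⟨hle, hge⟩
  exact ⟨n, x, hx, hxρ⟩

theorem exists_lt_of_le_norm_shiftedIterate (h : IsBakerFrame F W q a x₀ K V r) (N : ℕ) :
    ∃ R, ∀ n, ∀ x ∈ V, R ≤ ‖shiftedIterate F q a n x‖ → N < n := by
  choose C hC using fun n => h.isCompact_V.exists_bound_of_continuousOn
    ((h.differentiableOn_shiftedIterate a n).continuousOn.mono h.V_subset)
  refine ⟨(∑ n ∈ Finset.range (N + 1), |C n|) + 1, fun n x hx hR => ?_⟩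
  by_contra! hn
  have hle : |C n| ≤ ∑ n ∈ Finset.range (N + 1), |C n| :=
    Finset.single_le_sum (f := fun n => |C n|) (fun _ _ => abs_nonneg _)
      (Finset.mem_range.2 (Nat.lt_succ_of_le hn))
  linarith [le_abs_self (C n), hC n x hx]

-- Schottky's theorem for `z ↦ shiftedIterate F q a n z / (j - a)` and its reciprocal, which omit
-- `0` and `1`.
theorem exists_norm_shiftedIterate_comparable (h : IsBakerFrame F W q a x₀ K V r) (κ : ℝ) :
    ∃ B, 1 ≤ B ∧ ∀ n, ∀ j ∉ W, ∀ v ∈ V, ‖shiftedIterate F q a n v‖ ≤ κ * ‖j - a‖ →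
      ‖j - a‖ ≤ κ * ‖shiftedIterate F q a n v‖ → ∀ y ∈ V, ‖shiftedIterate F q a n y‖ ≤ B * ‖j - a‖ ∧
        ‖j - a‖ ≤ B * ‖shiftedIterate F q a n y‖ := by
  obtain ⟨B, hB1, hB⟩ :=
    exists_norm_le_of_omits_of_isCompact h.isOpen h.isPreconnected h.isCompact_V h.V_subset κ
  refine ⟨B, hB1, fun n j hj v hv hle hge y hy => ?_⟩
  have hne : ∀ z ∈ W, shiftedIterate F q a n z ≠ 0 := fun z hz => h.shiftedIterate_ne_zero n hz
  have hv0 := norm_pos_iff.2 (hne v (h.V_subset hv))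
  have hy0 := norm_pos_iff.2 (hne y (h.V_subset hy))
  have hja : j - a ≠ 0 := fun e => by
    rw [e, norm_zero, mul_zero] at hle
    exact hle.not_gt hv0
  have hj0 := norm_pos_iff.2 hja
  constructor
  · have hB' := hB (fun z => shiftedIterate F q a n z / (j - a))
      ((h.differentiableOn_shiftedIterate a n).div_const _)
      (fun z hz => div_ne_zero (hne z hz) hja)
      (fun z hz e => h.shiftedIterate_ne n hz hj ((div_eq_one_iff_eq hja).1 e)) v hv
      (by rwa [norm_div, div_le_iff₀ hj0]) y hy
    rwa [norm_div, div_le_iff₀ hj0] at hB'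
  · have hB' := hB (fun z => (j - a) / shiftedIterate F q a n z)
      ((differentiableOn_const _).fun_div (h.differentiableOn_shiftedIterate a n) hne)
      (fun z hz => div_ne_zero hja (hne z hz))
      (fun z hz e => h.shiftedIterate_ne n hz hj ((div_eq_one_iff_eq (hne z hz)).1 e).symm) v hv
      (by rwa [norm_div, div_le_iff₀ hv0]) y hy
    rwa [norm_div, div_le_iff₀ hy0] at hB'

theorem exists_norm_deriv_shiftedIterate_le (h : IsBakerFrame F W q a x₀ K V r) :
    ∃ M, 0 < M ∧ ∀ n, ∀ j ∉ W, ∀ v ∈ V, ‖shiftedIterate F q a n v‖ = ‖j - a‖ →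
      ∀ x ∈ K, ∀ y ∈ ball x (r / 2),
        ‖deriv (shiftedIterate F q a n) y‖ ≤ M * ‖shiftedIterate F q a n y‖ := by
  obtain ⟨B, hB1, hB⟩ := h.exists_norm_shiftedIterate_comparable 1
  have hr := h.r_pos
  refine ⟨4 * B ^ 2 / r, by positivity, fun n j hj v hv hvj x hx y hy => ?_⟩
  have hyV : ball y (r / 2) ⊆ V :=
    (ball_subset_ball' (by linarith [mem_ball.1 hy])).trans (h.ball_subset hx)
  have hcomp := hB n j hj v hv (by rw [hvj, one_mul]) (by rw [hvj, one_mul])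
  have hy_comp := (hcomp y (hyV (mem_ball_self (half_pos hr)))).2
  refine (norm_deriv_le_of_norm_le (B := B * (B * ‖shiftedIterate F q a n y‖)) (half_pos hr)
    ((h.differentiableOn_shiftedIterate a n).mono (hyV.trans h.V_subset)) fun z hz =>
      ((hcomp z (hyV hz)).1.trans (by gcongr))).trans (le_of_eq ?_)
  field_simp
  ring

end IsBakerFrame

/-! ### Continuation of inverse branches along circles -/

theorem exists_norm_deriv_mul_I_le {δ : ℝ} (hδ : 0 < δ) (T : ℝ) : ∃ D : ℝ, 1 ≤ D ∧
    ∀ (Ψ : ℂ → ℂ) (θ₀ : ℝ), θ₀ ≤ T →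
      (∀ θ ∈ Icc 0 θ₀, DifferentiableOn ℂ Ψ (ball (θ * Complex.I) δ)) →
      (∀ θ ∈ Icc 0 θ₀, InjOn Ψ (ball (θ * Complex.I) δ)) → ∀ θ ∈ Icc 0 θ₀,
        ‖deriv Ψ (θ * Complex.I)‖ ≤ D * ‖deriv Ψ 0‖ ∧
          ‖deriv Ψ 0‖ ≤ D * ‖deriv Ψ (θ * Complex.I)‖ := by
  obtain ⟨C, hC1, hC⟩ := exists_koebe_distortion
  have hC0 : 0 ≤ C := zero_le_one.trans hC1
  obtain ⟨N, hN⟩ := exists_nat_ge (20 * T / δ)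
  rw [div_le_iff₀ hδ] at hN
  refine ⟨C ^ N, one_le_pow₀ hC1, fun Ψ θ₀ hθ₀ hd hinj => ?_⟩
  suffices hchain : ∀ m : ℕ, ∀ θ ∈ Icc 0 θ₀, θ ≤ m * (δ / 20) →
      ‖deriv Ψ (θ * Complex.I)‖ ≤ C ^ m * ‖deriv Ψ 0‖ ∧
        ‖deriv Ψ 0‖ ≤ C ^ m * ‖deriv Ψ (θ * Complex.I)‖ from
    fun θ hθ => hchain N θ hθ (by linarith [hθ.2])
  intro m
  induction m with
  | zero =>
    intro θ hθ hθm
    have hθ0 : θ = 0 := le_antisymm (by simpa using hθm) hθ.1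
    simp [hθ0]
  | succ m ih =>
    intro θ hθ hθm
    push_cast at hθm
    set θ' := max (θ - δ / 20) 0
    have hle : θ' ≤ θ := max_le (by linarith) hθ.1
    have hge : θ - δ / 20 ≤ θ' := le_max_left _ _
    have hθ' : θ' ∈ Icc 0 θ₀ := ⟨le_max_right _ _, hle.trans hθ.2⟩
    obtain ⟨ih₁, ih₂⟩ := ih θ' hθ' (max_le (by linarith) (by positivity))
    have hmem : (θ * Complex.I : ℂ) ∈ ball (θ' * Complex.I) (δ / 16) := by
      rw [mem_ball, dist_eq_norm, ← sub_mul, norm_mul, Complex.norm_I, mul_one,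
        ← Complex.ofReal_sub, Complex.norm_real, Real.norm_eq_abs, abs_of_nonneg (by linarith)]
      linarith
    obtain ⟨step₁, step₂⟩ := hC _ δ Ψ (hd θ' hθ') (hinj θ' hθ') _ hmem
    constructor
    · calc _ ≤ C * ‖deriv Ψ (θ' * Complex.I)‖ := step₁
        _ ≤ C * (C ^ m * ‖deriv Ψ 0‖) := mul_le_mul_of_nonneg_left ih₁ hC0
        _ = _ := by ring
    · calc _ ≤ C ^ m * ‖deriv Ψ (θ' * Complex.I)‖ := ih₂
        _ ≤ C ^ m * (C * ‖deriv Ψ (θ * Complex.I)‖) := by gcongr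
        _ = _ := by ring

theorem eq_of_exp_eq_exp_of_dist_lt {s t : ℂ} (he : Complex.exp s = Complex.exp t)
    (hst : dist s t < 2 * π) : s = t := by
  obtain ⟨k, hk⟩ := Complex.exp_eq_exp_iff_exists_int.1 he
  rw [hk, dist_eq_norm, add_sub_cancel_left, norm_mul, Complex.norm_intCast, norm_mul, norm_mul,
    Complex.norm_I, Complex.norm_real, Complex.norm_ofNat, Real.norm_of_nonneg Real.pi_pos.le,
    mul_one, mul_lt_iff_lt_one_left Real.two_pi_pos] at hst
  obtain rfl : k = 0 := Int.abs_lt_one_iff.1 (by exact_mod_cast hst)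
  rw [hk, Int.cast_zero, zero_mul, add_zero]

/-- `Ψ` is a branch on `Y` of the inverse of the `n`-th iterate of `F`, in the logarithmic
coordinate `t ↦ a + w * exp t`. -/
structure IsExpLift (F : ℂ → OnePoint ℂ) (n : ℕ) (a w : ℂ) (Y : Set ℂ) (Ψ : ℂ → ℂ) : Prop where
  differentiableOn : DifferentiableOn ℂ Ψ Y
  iterate_eq : ∀ t ∈ Y, (totalize F)^[n] (Ψ t) = ((a + w * Complex.exp t : ℂ) : OnePoint ℂ)

namespace IsExpLift

variable {F : ℂ → OnePoint ℂ} {n : ℕ} {a w : ℂ} {Y W : Set ℂ} {Ψ : ℂ → ℂ} {q : ℕ}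

theorem iterate_ne_infty (h : IsExpLift F n a w Y Ψ) {t : ℂ} (ht : t ∈ Y) {l : ℕ} (hl : l ≤ n) :
    (totalize F)^[l] (Ψ t) ≠ infty :=
  iterate_ne_infty_of_le hl (by rw [h.iterate_eq t ht]; exact coe_ne_infty _)

theorem finMap_iterate_eq (h : IsExpLift F n a w Y Ψ) {t : ℂ} (ht : t ∈ Y) :
    (finMap F)^[n] (Ψ t) = a + w * Complex.exp t := by
  rw [← OnePoint.coe_eq_coe, ← totalize_iterate_coe (h.iterate_ne_infty ht le_rfl),
    h.iterate_eq t ht]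

theorem injOn_comp (h : IsExpLift F n a w Y Ψ) (hw : w ≠ 0) {c : ℂ} {s : ℝ} (hs : s ≤ 3)
    (hsY : ball c s ⊆ Y) {l : ℕ} (hl : l ≤ n) : InjOn ((finMap F)^[l] ∘ Ψ) (ball c s) := by
  intro t ht t' ht' he
  have hn : (finMap F)^[n] (Ψ t) = (finMap F)^[n] (Ψ t') := by
    obtain ⟨j, rfl⟩ := Nat.exists_eq_add_of_le' hl
    rw [Function.iterate_add_apply, Function.iterate_add_apply]
    exact congrArg _ he
  rw [h.finMap_iterate_eq (hsY ht), h.finMap_iterate_eq (hsY ht'), add_right_inj,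
    mul_right_inj' hw] at hn
  exact eq_of_exp_eq_exp_of_dist_lt hn (by
    linarith [dist_triangle_right t t' c, mem_ball.1 ht, mem_ball.1 ht', Real.pi_gt_three])

theorem injOn (h : IsExpLift F n a w Y Ψ) (hw : w ≠ 0) {c : ℂ} {s : ℝ} (hs : s ≤ 3)
    (hsY : ball c s ⊆ Y) : InjOn Ψ (ball c s) :=
  h.injOn_comp hw hs hsY n.zero_le

theorem injOn_iterate (h : IsExpLift F n a w Y Ψ) (hw : w ≠ 0) {c : ℂ} {s : ℝ} (hs : s ≤ 3)
    (hsY : ball c s ⊆ Y) {l : ℕ} (hl : l ≤ n) : InjOn (finMap F)^[l] (Ψ '' ball c s) :=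
  (h.injOn_comp hw hs hsY hl).image_of_comp

theorem mapsTo (h : IsExpLift F n a w Y Ψ) (hW : IsBakerDomain F W q) {Z : Set ℂ} (hZY : Z ⊆ Y)
    (hZ : IsPreconnected Z) {t₀ : ℂ} (ht₀ : t₀ ∈ Z) (hΨ : Ψ t₀ ∈ W)
    (hF : ∀ t ∈ Z, Ψ t ∈ MeroFatou F univ) : MapsTo Ψ Z W :=
  mapsTo_iff_image_subset.2 <| hW.subset_of_isPreconnected _
    (hZ.image _ (h.differentiableOn.continuousOn.mono hZY)) (image_subset_iff.2 hF)
    ⟨_, mem_image_of_mem _ ht₀, hΨ⟩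

theorem mem_meroFatou (h : IsExpLift F n a w Y Ψ) (hW : IsBakerDomain F W q) {t : ℂ} (ht : t ∈ Y)
    (htW : a + w * Complex.exp t ∈ W) : Ψ t ∈ MeroFatou F univ :=
  mem_meroFatou_of_iterate hW.mero (h.iterate_eq t ht) (hW.subset_fatou htW)

end IsExpLift

theorem IsBakerDomain.exists_isExpLift {F : ℂ → OnePoint ℂ} {W : Set ℂ} {q : ℕ}
    (h : IsBakerDomain F W q) {S : Set (OnePoint ℂ)} (hS : MeroSingularSet F univ S)
    {Y : Set ℂ} (hY : IsSimplyConnected Y) (hYo : IsOpen Y) (h0 : (0 : ℂ) ∈ Y) {a x : ℂ}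
    (hx : x ∈ W) (n : ℕ) (hP : ∀ t ∈ Y, ((a + shiftedIterate F q a n x * Complex.exp t : ℂ) :
      OnePoint ℂ) ∉ MeroPostsingular F univ S) :
    ∃ Ψ, IsExpLift F (n * q) a (shiftedIterate F q a n x) Y Ψ ∧ Ψ 0 = x := by
  obtain ⟨Ψ, hd, hΨ0, hΨ⟩ := exists_lift_iterate_of_notMem h.mero hS hY hYo
    (h := fun t => a + shiftedIterate F q a n x * Complex.exp t) (by fun_prop) hP h0
    (z₀ := x) (n := n * q)
    (by rw [h.iterate_eq hx, Complex.exp_zero, mul_one, shiftedIterate, add_sub_cancel])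
  exact ⟨Ψ, ⟨hd, hΨ⟩, hΨ0⟩

theorem exists_mem_Icc_mul_exp_eq {w z : ℂ} (hw : w ≠ 0) (hzw : ‖z‖ = ‖w‖) :
    ∃ θ ∈ Icc (0 : ℝ) 7, w * Complex.exp (θ * Complex.I) = z := by
  have hpi := Real.pi_lt_d2
  set α := toIcoMod Real.two_pi_pos 0 (Complex.arg (z / w))
  have hα : α ∈ Ico 0 (0 + 2 * π) := toIcoMod_mem_Ico Real.two_pi_pos 0 _
  have hexp : Complex.exp (α * Complex.I) = z / w := by
    have hper : Complex.exp (α * Complex.I) = Complex.exp (Complex.arg (z / w) * Complex.I) := by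
      refine Complex.exp_eq_exp_iff_exists_int.2
        ⟨-toIcoDiv Real.two_pi_pos 0 (Complex.arg (z / w)), ?_⟩
      simp only [α, toIcoMod, zsmul_eq_mul]
      push_cast
      ring
    have hnorm : ‖z / w‖ = 1 := by rw [norm_div, hzw, div_self (norm_ne_zero_iff.2 hw)]
    rw [hper, ← one_mul (Complex.exp _), ← Complex.ofReal_one, ← hnorm,
      Complex.norm_mul_exp_arg_mul_I]
  exact ⟨α, ⟨hα.1, by linarith [hα.2]⟩, by rw [hexp, mul_div_cancel₀ _ hw]⟩

theorem exists_first_exit {W : Set ℂ} (hW : IsOpen W) {a w z : ℂ} (hw : w ≠ 0) (hwW : a + w ∈ W)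
    (hz : z ∉ W) (hzw : ‖z - a‖ = ‖w‖) : ∃ θ₀ ∈ Icc (0 : ℝ) 7,
      a + w * Complex.exp (θ₀ * Complex.I) ∉ W ∧
        (∀ θ ∈ Ico 0 θ₀, a + w * Complex.exp (θ * Complex.I) ∈ W) ∧
          ∀ θ ∈ Icc 0 θ₀, a + w * Complex.exp (θ * Complex.I) ∈ closure W := by
  have hcont : Continuous fun θ : ℝ => a + w * Complex.exp (θ * Complex.I) := by fun_prop
  set A := {θ : ℝ | θ ∈ Icc (0 : ℝ) 7 ∧ a + w * Complex.exp (θ * Complex.I) ∉ W}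
  have hcompact : IsCompact A := isCompact_Icc.of_isClosed_subset
    (isClosed_Icc.inter (hW.isClosed_compl.preimage hcont)) fun θ hθ => hθ.1
  have hne : A.Nonempty := by
    obtain ⟨θ, hθ, he⟩ := exists_mem_Icc_mul_exp_eq hw hzw
    exact ⟨θ, hθ, by rwa [he, add_sub_cancel]⟩
  obtain ⟨hmem, hnotMem⟩ := hcompact.sInf_mem hne
  have hbefore : ∀ θ ∈ Ico 0 (sInf A), a + w * Complex.exp (θ * Complex.I) ∈ W := fun θ hθ => by
    by_contra hcon
    exact hθ.2.not_ge (csInf_le hcompact.bddBelow ⟨⟨hθ.1, hθ.2.le.trans hmem.2⟩, hcon⟩)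
  refine ⟨sInf A, hmem, hnotMem, hbefore, fun θ hθ => ?_⟩
  have hpos : 0 ≠ sInf A := fun e => hnotMem (by simpa [← e] using hwW)
  rw [← closure_Ico hpos] at hθ
  exact closure_mono (image_subset_iff.2 hbefore)
    (image_closure_subset_closure_image hcont (mem_image_of_mem _ hθ))

theorem infDist_add_mul_exp_le {W : Set ℂ} {a w : ℂ} {δ : ℝ} (hδ : δ ≤ 1 / 2) {s t : ℂ}
    (hs : a + w * Complex.exp s ∈ closure W) (hst : dist s t < δ) :
    infDist (a + w * Complex.exp t) W ≤ 2 * δ * ‖w * Complex.exp t‖ := by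
  rw [dist_eq_norm] at hst
  have hexp := Complex.norm_exp_sub_one_le (x := s - t) (by linarith)
  rw [← infDist_closure]
  calc infDist (a + w * Complex.exp t) (closure W)
      ≤ dist (a + w * Complex.exp t) (a + w * Complex.exp s) := infDist_le_dist_of_mem hs
    _ = ‖Complex.exp (s - t) - 1‖ * ‖w * Complex.exp t‖ := by
        rw [dist_comm, dist_eq_norm, ← norm_mul, Complex.exp_sub]
        congr 1
        field_simp [Complex.exp_ne_zero]
        ring
    _ ≤ 2 * δ * ‖w * Complex.exp t‖ := by gcongr; linarith

/-- Some point of `P` is, relatively to its distance from `a`, close both to `W` and to the circle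
of radius `ρ` about `a`. -/
def HasPointNearCircle (P W : Set ℂ) (a : ℂ) (δ ρ : ℝ) : Prop :=
  ∃ p ∈ P, ρ * Real.exp (-δ) ≤ ‖p - a‖ ∧ ‖p - a‖ ≤ ρ * Real.exp δ ∧
    infDist p W ≤ 2 * δ * ‖p - a‖

theorem hasPointNearCircle_of_dist_lt {P W : Set ℂ} {a w : ℂ} {δ : ℝ} (hδ : δ ≤ 1 / 2) {s t : ℂ}
    (hs : a + w * Complex.exp s ∈ closure W) (hs0 : s.re = 0) (hst : dist t s < δ)
    (hP : a + w * Complex.exp t ∈ P) : HasPointNearCircle P W a δ ‖w‖ := by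
  have hre : |t.re| ≤ δ := by
    rw [dist_eq_norm] at hst
    simpa only [Complex.sub_re, hs0, sub_zero] using
      (Complex.abs_re_le_norm (t - s)).trans hst.le
  obtain ⟨hge, hle⟩ := abs_le.1 hre
  refine ⟨_, hP, ?_, ?_, ?_⟩ <;> rw [add_sub_cancel_left]
  · rw [norm_mul, Complex.norm_exp]
    gcongr
  · rw [norm_mul, Complex.norm_exp]
    gcongr
  · exact infDist_add_mul_exp_le hδ hs (by rwa [dist_comm])

/-- The vertical segment from `0` to `T * I`: under `t ↦ a + w * exp t` it parametrizes an arc of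
angle `T` of the circle of radius `‖w‖` about `a`. -/
def verticalSegment (T : ℝ) : Set ℂ := (fun θ : ℝ => (θ : ℂ) * Complex.I) '' Icc 0 T

theorem convex_verticalSegment (T : ℝ) : Convex ℝ (verticalSegment T) := by
  simpa only [verticalSegment, Complex.real_smul] using
    (convex_Icc 0 T).is_linear_image (IsLinearMap.isLinearMap_smul' Complex.I)

theorem zero_mem_verticalSegment {T : ℝ} (hT : 0 ≤ T) : 0 ∈ verticalSegment T :=
  ⟨0, ⟨le_rfl, hT⟩, by simp⟩

theorem mul_I_mem_verticalSegment {T θ : ℝ} (hθ : θ ∈ Icc 0 T) :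
    (θ * Complex.I : ℂ) ∈ verticalSegment T :=
  mem_image_of_mem _ hθ

/-- The iterates `F^0, …, F^N` have no poles in `s` and are univalent on `s`. -/
def IterateUnivalentOn (F : ℂ → OnePoint ℂ) (N : ℕ) (s : Set ℂ) : Prop :=
  ∀ l ≤ N, (∀ x ∈ s, (totalize F)^[l] x ≠ infty) ∧ InjOn (finMap F)^[l] s

theorem IterateUnivalentOn.mono {F : ℂ → OnePoint ℂ} {M N : ℕ} {s t : Set ℂ}
    (h : IterateUnivalentOn F N s) (hMN : M ≤ N) (hts : t ⊆ s) : IterateUnivalentOn F M t :=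
  fun l hl => ⟨fun x hx => (h l (hl.trans hMN)).1 x (hts hx), (h l (hl.trans hMN)).2.mono hts⟩

theorem IsExpLift.iterateUnivalentOn {F : ℂ → OnePoint ℂ} {n : ℕ} {a w : ℂ} {Y : Set ℂ} {Ψ : ℂ → ℂ}
    (h : IsExpLift F n a w Y Ψ) (hw : w ≠ 0) {c : ℂ} {s : ℝ} (hs : s ≤ 3) (hsY : ball c s ⊆ Y) :
    IterateUnivalentOn F n (Ψ '' ball c s) := fun _ hl =>
  ⟨forall_mem_image.2 fun _ ht => h.iterate_ne_infty (hsY ht) hl, h.injOn_iterate hw hs hsY hl⟩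

theorem IsExpLift.deriv_mul_deriv {F : ℂ → OnePoint ℂ} {n q : ℕ} {a w : ℂ} {Y : Set ℂ} {Ψ : ℂ → ℂ}
    (h : IsExpLift F (n * q) a w Y Ψ) {t : ℂ} (hY : Y ∈ 𝓝 t)
    (hd : DifferentiableAt ℂ (shiftedIterate F q a n) (Ψ t)) :
    deriv (shiftedIterate F q a n) (Ψ t) * deriv Ψ t = w * Complex.exp t := by
  have hcomp := hd.hasDerivAt.comp t (h.differentiableOn.differentiableAt hY).hasDerivAt
  refine hcomp.unique (((Complex.hasDerivAt_exp t).const_mul w).congr_of_eventuallyEq ?_)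
  filter_upwards [hY] with s hs
  rw [Function.comp_apply, shiftedIterate, h.finMap_iterate_eq hs, add_sub_cancel_left]

-- A large derivative would, by Koebe's theorem, make `F` univalent on a large disc about `0`.
theorem exists_mul_norm_deriv_expLift_le {F : ℂ → OnePoint ℂ} (hmero : ∀ z : ℂ, SphereMeroAt F z)
    (htrans : ¬ExtendsToInfty F) :
    ∃ c₀ > 0, ∃ L : ℝ, ∀ (n : ℕ) (a w : ℂ) (Y : Set ℂ) (Ψ : ℂ → ℂ), IsExpLift F n a w Y Ψ →
      1 ≤ n → w ≠ 0 → ∀ c s, s ≤ 3 → ball c s ⊆ Y → c₀ * s * ‖deriv Ψ c‖ ≤ L + ‖Ψ c‖ := by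
  obtain ⟨c₀, hc₀, hkoebe⟩ := exists_ball_subset_image_of_injOn
  obtain ⟨L, hL⟩ := not_forall.1 (not_forall_injOn_ball hmero htrans)
  refine ⟨c₀, hc₀, L, fun n a w Y Ψ hΨ hn hw c s hs hsY => ?_⟩
  by_contra! hlt
  have hsub : ball 0 L ⊆ Ψ '' ball c s :=
    (ball_subset_ball' (by rw [dist_zero_left]; exact hlt.le)).trans
      (hkoebe c s Ψ (hΨ.differentiableOn.mono hsY) (hΨ.injOn hw hs hsY))
  exact hL (((hΨ.iterateUnivalentOn hw hs hsY).mono hn hsub) 1 le_rfl)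

theorem exists_norm_deriv_expLift_le_mul {δ : ℝ} (hδ0 : 0 < δ) (hδ : δ ≤ 3) (T : ℝ) :
    ∃ D : ℝ, 1 ≤ D ∧ ∀ (F : ℂ → OnePoint ℂ) (n : ℕ) (a w : ℂ) (θ₀ : ℝ) (Ψ : ℂ → ℂ), w ≠ 0 → θ₀ ≤ T →
      IsExpLift F n a w (thickening δ (verticalSegment θ₀)) Ψ → ∀ θ ∈ Icc 0 θ₀,
        ‖deriv Ψ (θ * Complex.I)‖ ≤ D * ‖deriv Ψ 0‖ ∧
          ‖deriv Ψ 0‖ ≤ D * ‖deriv Ψ (θ * Complex.I)‖ := by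
  obtain ⟨D, hD1, hD⟩ := exists_norm_deriv_mul_I_le hδ0 T
  refine ⟨D, hD1, fun F n a w θ₀ Ψ hw hθ₀ hΨ => ?_⟩
  have hball : ∀ θ ∈ Icc 0 θ₀, ball (θ * Complex.I : ℂ) δ ⊆ thickening δ (verticalSegment θ₀) :=
    fun θ hθ => ball_subset_thickening (mul_I_mem_verticalSegment hθ) δ
  exact hD Ψ θ₀ hθ₀ (fun θ hθ => hΨ.differentiableOn.mono (hball θ hθ))
    fun θ hθ => hΨ.injOn hw hδ (hball θ hθ)

theorem norm_sub_le_of_norm_deriv_mul_I_le {Y : Set ℂ} {Ψ : ℂ → ℂ} {θ₀ C : ℝ} (hθ₀ : 0 ≤ θ₀)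
    (hY : IsOpen Y) (hsub : verticalSegment θ₀ ⊆ Y) (hΨ : DifferentiableOn ℂ Ψ Y)
    (hC : ∀ θ ∈ Icc 0 θ₀, ‖deriv Ψ (θ * Complex.I)‖ ≤ C) :
    ‖Ψ (θ₀ * Complex.I) - Ψ 0‖ ≤ C * θ₀ := by
  have hle := (convex_verticalSegment θ₀).norm_image_sub_le_of_norm_deriv_le
    (fun t ht => hΨ.differentiableAt (hY.mem_nhds (hsub ht))) (forall_mem_image.2 hC)
    (zero_mem_verticalSegment hθ₀) (mul_I_mem_verticalSegment ⟨hθ₀, le_rfl⟩)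
  rwa [sub_zero, norm_mul, Complex.norm_I, mul_one, Complex.norm_real,
    Real.norm_of_nonneg hθ₀] at hle

-- Continue the inverse branch of `F^(n q)` sending `a + w` to `x` along the circle about `a` up to
-- the first point outside of `W`; no postsingular point is in the way.
theorem IsBakerDomain.exists_isExpLift_exit {F : ℂ → OnePoint ℂ} {W : Set ℂ} {q : ℕ}
    (h : IsBakerDomain F W q) {S : Set (OnePoint ℂ)} (hS : MeroSingularSet F univ S) {δ : ℝ}
    (hδ0 : 0 < δ) (hδ : δ ≤ 1 / 2) {a x z : ℂ} (ha : a ∉ W) (hx : x ∈ W) (hz : z ∉ W) {n : ℕ}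
    (hzx : ‖z - a‖ = ‖shiftedIterate F q a n x‖)
    (hP : ¬HasPointNearCircle ((↑) ⁻¹' MeroPostsingular F univ S) W a δ ‖z - a‖) :
    ∃ θ₀ ∈ Icc (0 : ℝ) 7, ∃ Ψ, IsExpLift F (n * q) a (shiftedIterate F q a n x)
      (thickening δ (verticalSegment θ₀)) Ψ ∧ Ψ 0 = x ∧
        Ψ (θ₀ * Complex.I) ∉ MeroFatou F univ := by
  set w := shiftedIterate F q a n x
  have hw : w ≠ 0 := by simpa only [sub_self] using h.shiftedIterate_ne (a := a) n hx ha
  obtain ⟨θ₀, hθ₀, hexit, hbefore, hclosure⟩ :=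
    exists_first_exit h.isOpen hw (h.add_shiftedIterate_mem a n hx) hz hzx
  have h0 := zero_mem_verticalSegment hθ₀.1
  have hend := mul_I_mem_verticalSegment ⟨hθ₀.1, le_refl θ₀⟩
  have hsub := self_subset_thickening hδ0 (verticalSegment θ₀)
  obtain ⟨Ψ, hΨ, hΨ0⟩ := h.exists_isExpLift hS
    (isSimplyConnected_of_convex ((convex_verticalSegment θ₀).thickening δ) ⟨0, hsub h0⟩)
    isOpen_thickening (hsub h0) hx n fun t ht hcon => by
      obtain ⟨_, ⟨θ, hθ, rfl⟩, hts⟩ := mem_thickening_iff.1 ht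
      exact hP (hzx ▸ hasPointNearCircle_of_dist_lt hδ (hclosure θ hθ) (by simp) hts hcon)
  refine ⟨θ₀, hθ₀, Ψ, hΨ, hΨ0, fun hF => hexit ?_⟩
  have hmaps : MapsTo Ψ (verticalSegment θ₀) W :=
    hΨ.mapsTo h hsub (convex_verticalSegment θ₀).isPreconnected h0 (hΨ0 ▸ hx) (by
      rintro _ ⟨θ, hθ, rfl⟩
      rcases hθ.2.eq_or_lt with rfl | hlt
      · exact hF
      · exact hΨ.mem_meroFatou h (hsub ⟨θ, hθ, rfl⟩) (hbefore θ ⟨hθ.1, hlt⟩))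
  rw [← hΨ.finMap_iterate_eq (hsub hend)]
  exact h.mapsTo_mul n (hmaps hend)

namespace IsBakerFrame

variable {F : ℂ → OnePoint ℂ} {W : Set ℂ} {q : ℕ} {a x₀ : ℂ} {K V : Set ℂ} {r : ℝ}

theorem exists_one_le_mul_norm_deriv_expLift (h : IsBakerFrame F W q a x₀ K V r) :
    ∃ M > 0, ∀ n, ∀ x ∈ K, ∀ z ∉ W, ‖z - a‖ = ‖shiftedIterate F q a n x‖ → ∀ Y ∈ 𝓝 0, ∀ Ψ,
      IsExpLift F (n * q) a (shiftedIterate F q a n x) Y Ψ → Ψ 0 = x → 1 ≤ M * ‖deriv Ψ 0‖ := by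
  obtain ⟨M, hM0, hM⟩ := h.exists_norm_deriv_shiftedIterate_le
  refine ⟨M, hM0, fun n x hx z hz hzx Y hY Ψ hΨ hΨ0 => ?_⟩
  have hxW := h.K_subset hx
  have hw := norm_pos_iff.2 (h.shiftedIterate_ne_zero n hxW)
  have hderiv := hM n z hz x (h.K_subset_V hx) hzx.symm x hx x
    (mem_ball_self (half_pos h.r_pos))
  have hchain := hΨ.deriv_mul_deriv hY (by
    rw [hΨ0]
    exact (h.differentiableOn_shiftedIterate a n).differentiableAt (h.isOpen.mem_nhds hxW))
  rw [hΨ0, Complex.exp_zero, mul_one] at hchain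
  refine le_of_mul_le_mul_left ?_ hw
  calc ‖shiftedIterate F q a n x‖ * 1
      = ‖deriv (shiftedIterate F q a n) x‖ * ‖deriv Ψ 0‖ := by rw [mul_one, ← norm_mul, hchain]
    _ ≤ M * ‖shiftedIterate F q a n x‖ * ‖deriv Ψ 0‖ := by gcongr
    _ = _ := by ring

theorem exists_isExpLift_exit (h : IsBakerFrame F W q a x₀ K V r) {S : Set (OnePoint ℂ)}
    (hS : MeroSingularSet F univ S) {δ : ℝ} (hδ0 : 0 < δ) (hδ : δ ≤ 1 / 2) (N : ℕ) :
    ∃ R : ℝ, ∀ z ∉ W, R ≤ ‖z - a‖ →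
      ¬HasPointNearCircle ((↑) ⁻¹' MeroPostsingular F univ S) W a δ ‖z - a‖ →
      ∃ n, N < n ∧ ∃ x ∈ K, ‖z - a‖ = ‖shiftedIterate F q a n x‖ ∧ ∃ θ₀ ∈ Icc (0 : ℝ) 7, ∃ Ψ,
        IsExpLift F (n * q) a (shiftedIterate F q a n x) (thickening δ (verticalSegment θ₀)) Ψ ∧
          Ψ 0 = x ∧ Ψ (θ₀ * Complex.I) ∉ MeroFatou F univ := by
  obtain ⟨R, hR⟩ := h.exists_lt_of_le_norm_shiftedIterate N
  refine ⟨max R ‖shiftedIterate F q a 0 x₀‖, fun z hz hRz hP => ?_⟩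
  obtain ⟨n, x, hx, hn⟩ := h.exists_norm_shiftedIterate_eq ((le_max_right _ _).trans hRz)
  exact ⟨n, hR n x (h.K_subset_V hx) (hn ▸ (le_max_left _ _).trans hRz), x, hx, hn.symm,
    h.toIsBakerDomain.exists_isExpLift_exit hS hδ0 hδ h.notMem (h.K_subset hx) hz hn.symm hP⟩

theorem exists_iterateUnivalentOn_ball (h : IsBakerFrame F W q a x₀ K V r) {S : Set (OnePoint ℂ)}
    (hS : MeroSingularSet F univ S) {δ : ℝ} (hδ0 : 0 < δ) (hδ : δ ≤ 1 / 2) :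
    ∃ c₁ > (0 : ℝ), ∃ R' : ℝ, ∀ N : ℕ, ∃ R : ℝ, ∀ z ∉ W, R ≤ ‖z - a‖ →
      ¬HasPointNearCircle ((↑) ⁻¹' MeroPostsingular F univ S) W a δ ‖z - a‖ →
      ∃ y, ‖y‖ ≤ R' ∧ y ∉ MeroFatou F univ ∧ IterateUnivalentOn F N (ball y c₁) := by
  have hδ3 : δ ≤ 3 := by linarith
  obtain ⟨M, hM0, hlower⟩ := h.exists_one_le_mul_norm_deriv_expLift
  obtain ⟨c, hc, L, hupper⟩ := exists_mul_norm_deriv_expLift_le h.mero h.not_extendsToInfty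
  obtain ⟨c₀, hc₀, hkoebe⟩ := exists_ball_subset_image_of_injOn
  obtain ⟨D, hD1, hD⟩ := exists_norm_deriv_expLift_le_mul hδ0 hδ3 7
  obtain ⟨RK, hRK⟩ := h.isCompact_K.exists_bound_of_continuousOn continuousOn_id
  have hD0 : 0 < D := zero_lt_one.trans_le hD1
  set B := |L + RK| / (c * δ)
  refine ⟨c₀ * δ * (1 / (M * D)), by positivity, RK + D * B * 7, fun N => ?_⟩
  obtain ⟨R, hR⟩ := h.exists_isExpLift_exit hS hδ0 hδ N
  refine ⟨R, fun z hz hRz hP => ?_⟩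
  obtain ⟨n, hNn, x, hx, hzx, θ₀, hθ₀, Ψ, hΨ, hΨ0, hnotMem⟩ := hR z hz hRz hP
  have hNq : N < n * q := hNn.trans_le (Nat.le_mul_of_pos_right n h.one_le)
  have hw := h.shiftedIterate_ne_zero n (h.K_subset hx)
  have hdist := hD F _ a _ θ₀ Ψ hw hθ₀.2 hΨ
  have hend : θ₀ ∈ Icc 0 θ₀ := ⟨hθ₀.1, le_rfl⟩
  have hball0 := ball_subset_thickening (zero_mem_verticalSegment hθ₀.1) δ
  have hball := ball_subset_thickening (mul_I_mem_verticalSegment hend) δ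
  have hderiv0 : ‖deriv Ψ 0‖ ≤ B := by
    rw [le_div_iff₀' (by positivity)]
    have hle := hupper _ _ _ _ Ψ hΨ (by lia) hw 0 δ hδ3 hball0
    rw [hΨ0] at hle
    exact hle.trans ((add_le_add_right (hRK x hx) L).trans (le_abs_self _))
  have hderiv : 1 / (M * D) ≤ ‖deriv Ψ (θ₀ * Complex.I)‖ := by
    rw [div_le_iff₀ (by positivity)]
    calc 1 ≤ M * ‖deriv Ψ 0‖ := hlower n x hx z hz hzx _
          (isOpen_thickening.mem_nhds (hball0 (mem_ball_self hδ0))) Ψ hΨ hΨ0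
      _ ≤ M * (D * ‖deriv Ψ (θ₀ * Complex.I)‖) := by gcongr; exact (hdist θ₀ hend).2
      _ = _ := by ring
  refine ⟨Ψ (θ₀ * Complex.I), ?_, hnotMem, (hΨ.iterateUnivalentOn hw hδ3 hball).mono hNq.le
    ((ball_subset_ball (by gcongr)).trans (hkoebe _ δ Ψ (hΨ.differentiableOn.mono hball)
      (hΨ.injOn hw hδ3 hball)))⟩
  have hmove := norm_sub_le_of_norm_deriv_mul_I_le hθ₀.1 isOpen_thickening
    (self_subset_thickening hδ0 _) hΨ.differentiableOn fun θ hθ =>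
      (hdist θ hθ).1.trans (mul_le_mul_of_nonneg_left hderiv0 hD0.le)
  calc ‖Ψ (θ₀ * Complex.I)‖ ≤ ‖Ψ 0‖ + ‖Ψ (θ₀ * Complex.I) - Ψ 0‖ := norm_le_norm_add_norm_sub' _ _
    _ ≤ RK + D * B * 7 := add_le_add (hΨ0 ▸ hRK x hx)
        (hmove.trans (mul_le_mul_of_nonneg_left hθ₀.2 (by positivity)))

theorem exists_hasPointNearCircle (h : IsBakerFrame F W q a x₀ K V r) {S : Set (OnePoint ℂ)}
    (hS : MeroSingularSet F univ S) {δ : ℝ} (hδ0 : 0 < δ) (hδ : δ ≤ 1 / 2) :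
    ∃ R : ℝ, ∀ z ∉ W, R ≤ ‖z - a‖ →
      HasPointNearCircle ((↑) ⁻¹' MeroPostsingular F univ S) W a δ ‖z - a‖ := by
  obtain ⟨c₁, hc₁, R', huniv⟩ := h.exists_iterateUnivalentOn_ball hS hδ0 hδ
  by_contra! hcon
  have hex : ∀ N : ℕ, ∃ y, ‖y‖ ≤ R' ∧ y ∉ MeroFatou F univ ∧
      IterateUnivalentOn F N (ball y c₁) := by
    intro N
    obtain ⟨R, hR⟩ := huniv N
    obtain ⟨z, hz, hRz, hP⟩ := hcon R
    exact hR z hz hRz hP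
  choose y hyR hyF hy using hex
  obtain ⟨b, -, φ, hφ, hlim⟩ := tendsto_subseq_of_bounded isBounded_closedBall
    fun n => mem_closedBall_zero_iff.2 (hyR n)
  have hnear : ∀ᶠ N in atTop, dist (y (φ N)) b < c₁ / 2 :=
    (Metric.tendsto_nhds.1 hlim) _ (half_pos hc₁)
  have hlimit : ∀ l, IterateUnivalentOn F l (ball b (c₁ / 2)) := fun l => by
    obtain ⟨N, hN, hlN⟩ := (hnear.and (eventually_ge_atTop l)).exists
    exact (hy (φ N)).mono (hlN.trans hφ.le_apply) (ball_subset_ball' (by rw [dist_comm]; linarith))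
  obtain ⟨N, hN⟩ := hnear.exists
  exact hyF (φ N) (ball_subset_meroFatou h.mero h.not_extendsToInfty
    (fun l => (hlimit l l le_rfl).1) (fun l => (hlimit l l le_rfl).2) hN)

end IsBakerFrame

/-! ### The map in the logarithmic coordinate -/

theorem exists_norm_deriv_le_of_exp_ne_one (A : ℝ) : ∃ B, 0 < B ∧ ∀ (c : ℂ) (R : ℝ) (h : ℂ → ℂ),
    DifferentiableOn ℂ h (ball c R) → (∀ z ∈ ball c R, Complex.exp (h z) ≠ 1) → |(h c).re| ≤ A →
      ∀ z ∈ ball c (R / 4), ‖deriv h z‖ ≤ B / R := by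
  obtain ⟨B, hB0, hB⟩ := exists_norm_le_of_omits (Real.exp A)
  refine ⟨8 * B ^ 2, by positivity, fun c R h hh h1 hA z hz => ?_⟩
  have hR : 0 < R := by linarith [pos_of_mem_ball hz]
  have hsub : ball z (R / 4) ⊆ ball c (R / 2) := ball_subset_ball' (by linarith [mem_ball.1 hz])
  have hsub' : ball c (R / 2) ⊆ ball c R := ball_subset_ball (by linarith)
  have hzR : z ∈ ball c (R / 2) := hsub (mem_ball_self (by linarith))
  have hexp : ∀ w ∈ ball c (R / 2), ‖Complex.exp (h w)‖ ≤ B :=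
    hB c R _ hh.cexp (fun z _ => Complex.exp_ne_zero _) h1
      (by rw [Complex.norm_exp]; exact Real.exp_le_exp.2 (abs_le.1 hA).2)
  have hexp_neg : ‖Complex.exp (-h z)‖ ≤ B := by
    refine hB c R _ hh.neg.cexp (fun z _ => Complex.exp_ne_zero _)
      (fun z hz e => h1 z hz ?_) ?_ z hzR
    · rwa [Pi.neg_apply, Complex.exp_neg, inv_eq_one] at e
    · rw [Complex.norm_exp, Pi.neg_apply, Complex.neg_re]
      exact Real.exp_le_exp.2 (neg_le.1 (abs_le.1 hA).1)
  have hderiv := norm_deriv_le_of_norm_le (h := fun z => Complex.exp (h z))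
    (by linarith : 0 < R / 4) (hh.cexp.mono (hsub.trans hsub')) fun w hw => hexp w (hsub hw)
  rw [(hh.differentiableAt (isOpen_ball.mem_nhds (hsub' hzR))).hasDerivAt.cexp.deriv,
    norm_mul] at hderiv
  calc ‖deriv h z‖ = ‖Complex.exp (-h z)‖ * (‖Complex.exp (h z)‖ * ‖deriv h z‖) := by
        rw [← mul_assoc, ← norm_mul, ← Complex.exp_add, neg_add_cancel, Complex.exp_zero, norm_one,
          one_mul]
    _ ≤ B * (2 * B / (R / 4)) := by gcongr
    _ = 8 * B ^ 2 / R := by ring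

theorem exists_re_pos_of_exp_ne_one : ∃ A, 0 < A ∧ ∀ (c : ℂ) (R : ℝ) (h : ℂ → ℂ),
    DifferentiableOn ℂ h (ball c R) → (∀ z ∈ ball c R, Complex.exp (h z) ≠ 1) → A < (h c).re →
      ∀ z ∈ ball c (R / 4), 0 < (h z).re := by
  obtain ⟨B, hB0, hB⟩ := exists_norm_le_of_omits 1
  refine ⟨|Real.log B| + 1, by positivity, fun c R h hh h1 hA z hz => ?_⟩
  by_contra! hre
  have hzR := mem_ball.1 hz
  have hsub : ball z (3 * R / 4) ⊆ ball c R := ball_subset_ball' (by linarith)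
  have hexp := hB z (3 * R / 4) (fun z => Complex.exp (h z)) (hh.mono hsub).cexp
    (fun _ _ => Complex.exp_ne_zero _) (fun w hw => h1 w (hsub hw))
    (by rwa [Complex.norm_exp, Real.exp_le_one_iff]) c
    (by rw [mem_ball, dist_comm]; linarith [pos_of_mem_ball hz])
  rw [Complex.norm_exp, ← Real.le_log_iff_exp_le hB0] at hexp
  linarith [le_abs_self (Real.log B)]

theorem exists_norm_sub_le_of_exp_ne_one : ∃ A, 0 < A ∧ ∀ (c : ℂ) (R ρ : ℝ) (h : ℂ → ℂ),
    DifferentiableOn ℂ h (ball c R) → (∀ z ∈ ball c R, Complex.exp (h z) ≠ 1) → A < |(h c).re| →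
      ρ < R / 4 → ∀ z ∈ closedBall c ρ, ‖h z - h c‖ ≤ 2 * |(h c).re| * ρ / (R / 4 - ρ) := by
  obtain ⟨A, hA0, hA⟩ := exists_re_pos_of_exp_ne_one
  refine ⟨A, hA0, fun c R ρ h hh h1 hlt hρ z hz => ?_⟩
  have hdist := mem_closedBall.1 hz
  have hzR : z ∈ ball c (R / 4) := hdist.trans_lt hρ
  have hsub : ball c (R / 4) ⊆ ball c R := ball_subset_ball (by linarith [pos_of_mem_ball hzR])
  suffices hz : ‖h z - h c‖ ≤ 2 * |(h c).re| * dist z c / (R / 4 - dist z c) by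
    have hρ0 := dist_nonneg.trans hdist
    have := sub_pos.2 hρ
    exact hz.trans (by gcongr)
  rcases le_total 0 (h c).re with hre | hre
  · rw [abs_of_nonneg hre] at hlt ⊢
    exact norm_sub_le_of_re_pos (hh.mono hsub) (hA c R h hh h1 hlt) hzR
  · rw [abs_of_nonpos hre] at hlt ⊢
    have hpos := hA c R (fun z => -h z) hh.neg
      (fun z hz e => h1 z hz (by rwa [Complex.exp_neg, inv_eq_one] at e)) hlt
    have hneg := norm_sub_le_of_re_pos (h := fun z => -h z) (hh.neg.mono hsub) hpos hzR
    rwa [neg_sub_neg, norm_sub_rev, Complex.neg_re] at hneg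

theorem exists_log_norm_le_mul_of_omits {W V : Set ℂ} (hWo : IsOpen W) (hW : IsPreconnected W)
    (hV : IsCompact V) (hVpre : IsPreconnected V) (hVW : V ⊆ W) : ∃ C A : ℝ, 1 ≤ C ∧
      ∀ φ : ℂ → ℂ, DifferentiableOn ℂ φ W → (∀ z ∈ W, φ z ≠ 0) → (∀ z ∈ W, φ z ≠ 1) →
        ∀ x ∈ V, A < Real.log ‖φ x‖ → ∀ y ∈ V, Real.log ‖φ x‖ ≤ C * Real.log ‖φ y‖ := by
  obtain ⟨ε, hε, hεW⟩ := hV.exists_cthickening_subset_open hWo hVW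
  have hVε : V ⊆ thickening ε V := self_subset_thickening hε V
  have hsub : thickening ε V ⊆ cthickening ε V := thickening_subset_cthickening ε V
  obtain ⟨B, -, hB⟩ := exists_norm_le_of_omits_of_isCompact hWo hW hV.cthickening hεW 1
  obtain ⟨C, hC1, hC⟩ :=
    exists_log_norm_le_mul_of_isCompact isOpen_thickening (isPreconnected_thickening hVpre) hV hVε
  refine ⟨C, Real.log B, hC1, fun φ hφ h0 h1 x hx hA y hy => ?_⟩
  -- By Schottky's theorem a value of modulus at most `1` would make `‖φ x‖` at most `B`.
  refine hC φ (hφ.mono (hsub.trans hεW)) (fun z hz => ?_) x hx y hy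
  by_contra! hz1
  exact hA.not_ge (Real.log_le_log (norm_pos_iff.2 (h0 x (hVW hx)))
    (hB φ hφ h0 h1 z (hsub hz) hz1 x (hsub (hVε hx))))

theorem exists_abs_log_norm_le_mul_of_omits {W V : Set ℂ} (hWo : IsOpen W) (hW : IsPreconnected W)
    (hV : IsCompact V) (hVpre : IsPreconnected V) (hVW : V ⊆ W) : ∃ C A : ℝ, 1 ≤ C ∧
      ∀ φ : ℂ → ℂ, DifferentiableOn ℂ φ W → (∀ z ∈ W, φ z ≠ 0) → (∀ z ∈ W, φ z ≠ 1) →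
        ∀ x ∈ V, A < |Real.log ‖φ x‖| → ∀ y ∈ V, |Real.log ‖φ x‖| ≤ C * |Real.log ‖φ y‖| := by
  obtain ⟨C, A, hC1, hC⟩ := exists_log_norm_le_mul_of_omits hWo hW hV hVpre hVW
  refine ⟨C, A, hC1, fun φ hφ h0 h1 x hx hA y hy => ?_⟩
  rcases le_total 0 (Real.log ‖φ x‖) with hpos | hneg
  · rw [abs_of_nonneg hpos] at hA ⊢
    exact (hC φ hφ h0 h1 x hx hA y hy).trans (by gcongr; exact le_abs_self _)
  · rw [abs_of_nonpos hneg] at hA ⊢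
    have hinv := hC (fun z => (φ z)⁻¹) (hφ.fun_inv h0) (fun z hz => inv_ne_zero (h0 z hz))
      (fun z hz => inv_ne_one.2 (h1 z hz)) x hx (by rwa [norm_inv, Real.log_inv]) y hy
    rw [norm_inv, norm_inv, Real.log_inv, Real.log_inv] at hinv
    exact hinv.trans (by gcongr; exact neg_le_abs _)

theorem apply_add_zsmul {G H : Type*} [AddGroup G] [AddGroup H] {f : G → H} {s : Set G} {p : G}
    {b : H} (hs : ∀ t, t + p ∈ s ↔ t ∈ s) (hf : ∀ t ∈ s, f (t + p) = f t + b) (k : ℤ) :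
    ∀ t ∈ s, f (t + k • p) = f t + k • b := by
  induction k using Int.induction_on with
  | zero => simp
  | succ k ih =>
    intro t ht
    rw [add_comm (k : ℤ) 1, add_zsmul, add_zsmul, one_zsmul, one_zsmul, ← add_assoc,
      ih _ ((hs t).2 ht), hf t ht, add_assoc]
  | pred k ih =>
    intro t ht
    have ht' : t - p ∈ s := (hs _).1 (by rwa [sub_add_cancel])
    have hfp : f (t - p) = f t - b := by
      rw [eq_sub_iff_add_eq, ← hf _ ht', sub_add_cancel]
    rw [sub_eq_neg_add, add_zsmul, add_zsmul, neg_one_zsmul, neg_one_zsmul, ← add_assoc,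
      ← sub_eq_add_neg, ih _ ht', hfp, sub_eq_add_neg, add_assoc]

theorem eqOn_of_exp_eq {X : Type*} [TopologicalSpace X] {s : Set X} (hs : IsPreconnected s)
    {L₁ L₂ : X → ℂ} (h₁ : ContinuousOn L₁ s) (h₂ : ContinuousOn L₂ s)
    (h : ∀ t ∈ s, Complex.exp (L₁ t) = Complex.exp (L₂ t)) {t₀ : X} (ht₀ : t₀ ∈ s)
    (h0 : L₁ t₀ = L₂ t₀) : EqOn L₁ L₂ s :=
  Complex.isCoveringMap_exp.eqOn_of_comp_eqOn hs h₁ h₂ (fun t ht => Subtype.ext (h t ht)) ht₀ h0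

section VerticalStrip

open Complex.HadamardThreeLines (verticalStrip)

variable {u v : ℝ} {L : ℂ → ℂ}

theorem convex_verticalStrip (u v : ℝ) : Convex ℝ (verticalStrip u v) :=
  (convex_Ioo u v).linear_preimage Complex.reLm

theorem isOpen_verticalStrip (u v : ℝ) : IsOpen (verticalStrip u v) :=
  isOpen_Ioo.preimage Complex.continuous_re

theorem add_two_pi_mul_I_mem_verticalStrip_iff {t : ℂ} :
    t + 2 * π * Complex.I ∈ verticalStrip u v ↔ t ∈ verticalStrip u v := by
  simp [verticalStrip]

theorem add_mul_I_mem_verticalStrip {t : ℂ} (ht : t ∈ verticalStrip u v) (θ : ℝ) :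
    t + θ * Complex.I ∈ verticalStrip u v := by
  simpa [verticalStrip] using ht

theorem ball_subset_verticalStrip {t : ℂ} {R : ℝ} (ht : t.re ∈ Icc (u + R) (v - R)) :
    ball t R ⊆ verticalStrip u v := by
  intro z hz
  have hre := (Complex.abs_re_le_norm (z - t)).trans_lt (mem_ball_iff_norm.1 hz)
  rw [Complex.sub_re, abs_lt] at hre
  exact ⟨by linarith [ht.1], by linarith [ht.2]⟩

theorem exists_int_forall_apply_add_eq (hL : ContinuousOn L (verticalStrip u v))
    (hexp : ∀ t ∈ verticalStrip u v, Complex.exp (L (t + 2 * π * Complex.I)) = Complex.exp (L t))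
    (hne : (verticalStrip u v).Nonempty) :
    ∃ e : ℤ, ∀ t ∈ verticalStrip u v,
      L (t + 2 * π * Complex.I) = L t + e * (2 * π * Complex.I) := by
  obtain ⟨t₀, ht₀⟩ := hne
  obtain ⟨e, he⟩ := Complex.exp_eq_exp_iff_exists_int.1 (hexp t₀ ht₀)
  refine ⟨e, eqOn_of_exp_eq (convex_verticalStrip u v).isPreconnected
    (hL.comp (by fun_prop) fun t ht => add_two_pi_mul_I_mem_verticalStrip_iff.2 ht)
    (hL.add continuousOn_const) (fun t ht => ?_) ht₀ he⟩
  rw [hexp t ht, Complex.exp_add, Complex.exp_int_mul_two_pi_mul_I, mul_one]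

theorem integral_vertical_eq_integral_re
    (hper : ∀ t ∈ verticalStrip u v, L (t + 2 * π * Complex.I) = L t) {t : ℂ}
    (ht : t ∈ verticalStrip u v) :
    ∫ θ in (0 : ℝ)..2 * π, L (t + θ * Complex.I) =
      ∫ θ in (0 : ℝ)..2 * π, L (t.re + θ * Complex.I) := by
  have hperiodic : Function.Periodic (fun τ : ℝ => L (t.re + τ * Complex.I)) (2 * π) := fun τ => by
    have hτ : (t.re + τ * Complex.I : ℂ) ∈ verticalStrip u v := by
      simpa [verticalStrip] using ht
    simp only [← hper _ hτ]
    push_cast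
    ring_nf
  calc ∫ θ in (0 : ℝ)..2 * π, L (t + θ * Complex.I)
    _ = ∫ θ in (0 : ℝ)..2 * π, L (t.re + (t.im + θ : ℝ) * Complex.I) := by
        congr with θ
        conv_lhs => rw [← Complex.re_add_im t]
        push_cast
        ring_nf
    _ = ∫ τ in t.im..t.im + 2 * π, L (t.re + τ * Complex.I) := by
        rw [intervalIntegral.integral_comp_add_left (fun τ : ℝ => L (t.re + τ * Complex.I)),
          add_zero]
    _ = ∫ θ in (0 : ℝ)..2 * π, L (t.re + θ * Complex.I) := by
        rw [hperiodic.intervalIntegral_add_eq t.im 0, zero_add]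

-- Cauchy's theorem for a rectangle of height `2π`, whose horizontal sides cancel.
theorem integral_vertical_eq (hL : DifferentiableOn ℂ L (verticalStrip u v))
    (hper : ∀ t ∈ verticalStrip u v, L (t + 2 * π * Complex.I) = L t)
    {t₀ t₁ : ℂ} (h₀ : t₀ ∈ verticalStrip u v) (h₁ : t₁ ∈ verticalStrip u v) :
    ∫ θ in (0 : ℝ)..2 * π, L (t₁ + θ * Complex.I) =
      ∫ θ in (0 : ℝ)..2 * π, L (t₀ + θ * Complex.I) := by
  rw [integral_vertical_eq_integral_re hper h₀, integral_vertical_eq_integral_re hper h₁]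
  have hsub : uIcc t₀.re t₁.re ⊆ Ioo u v := ordConnected_Ioo.uIcc_subset h₀ h₁
  have hrect := Complex.integral_boundary_rect_eq_zero_of_differentiableOn L t₀.re
    (t₁.re + (2 * π : ℝ) * Complex.I) (hL.mono fun t ht => hsub (by simpa using ht.1))
  have htop : ∀ x ∈ uIcc t₀.re t₁.re, L (x + (2 * π : ℝ) * Complex.I) = L x := fun x hx => by
    simpa using hper x (hsub hx)
  simp only [Complex.add_re, Complex.ofReal_re, Complex.re_ofReal_mul, Complex.I_re, mul_zero,
    add_zero, Complex.add_im, Complex.ofReal_im, Complex.im_ofReal_mul, Complex.I_im, mul_one,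
    zero_add, Complex.ofReal_zero, zero_mul] at hrect
  rw [intervalIntegral.integral_congr htop, sub_self, zero_add, sub_eq_zero] at hrect
  exact smul_right_injective ℂ Complex.I_ne_zero hrect

theorem norm_le_of_forall_norm_sub_add_le (hL : DifferentiableOn ℂ L (verticalStrip u v))
    (hper : ∀ t ∈ verticalStrip u v, L (t + 2 * π * Complex.I) = L t)
    {t₀ t₁ : ℂ} (h₀ : t₀ ∈ verticalStrip u v) (h₁ : t₁ ∈ verticalStrip u v) {b : ℂ} {B : ℝ}
    (hB : ∀ θ ∈ Icc (0 : ℝ) (2 * π),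
      ‖L (t₀ + θ * Complex.I) - L (t₁ + θ * Complex.I) + b‖ ≤ B) : ‖b‖ ≤ B := by
  have hL_int : ∀ t ∈ verticalStrip u v, IntervalIntegrable (fun θ : ℝ => L (t + θ * Complex.I))
      MeasureTheory.volume 0 (2 * π) := fun t ht =>
    (hL.continuousOn.comp_continuous (by fun_prop)
      (add_mul_I_mem_verticalStrip ht)).intervalIntegrable _ _
  have hmean : ∫ θ in (0 : ℝ)..2 * π, (L (t₀ + θ * Complex.I) - L (t₁ + θ * Complex.I) + b) =
      (2 * π) • b := by
    rw [intervalIntegral.integral_add ((hL_int t₀ h₀).sub (hL_int t₁ h₁)) intervalIntegrable_const,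
      intervalIntegral.integral_sub (hL_int t₀ h₀) (hL_int t₁ h₁),
      integral_vertical_eq hL hper h₀ h₁, sub_self, zero_add, intervalIntegral.integral_const,
      sub_zero]
  have hle := intervalIntegral.norm_integral_le_of_norm_le_const
    (f := fun θ : ℝ => L (t₀ + θ * Complex.I) - L (t₁ + θ * Complex.I) + b) fun θ hθ =>
      hB θ (Ioc_subset_Icc_self (by rwa [uIoc_of_le Real.two_pi_pos.le] at hθ))
  rw [hmean, norm_smul, Real.norm_of_nonneg Real.two_pi_pos.le, sub_zero,
    abs_of_pos Real.two_pi_pos, mul_comm] at hle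
  exact le_of_mul_le_mul_right hle Real.two_pi_pos

theorem norm_mul_I_le {θ : ℝ} (hθ : θ ∈ Icc (0 : ℝ) (2 * π)) : ‖(θ * Complex.I : ℂ)‖ ≤ 7 := by
  rw [norm_mul, Complex.norm_I, mul_one, Complex.norm_real, Real.norm_of_nonneg hθ.1]
  linarith [hθ.2, Real.pi_lt_d2]

theorem norm_sub_lt_of_norm_deriv_le {κ : ℂ → ℂ} {c : ℂ} {C : ℝ}
    (hκ : DifferentiableOn ℂ κ (ball c 7)) (hC : ∀ t ∈ ball c 7, ‖deriv κ t‖ ≤ C) (hC1 : C < 1) :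
    ‖κ (c + 2 * π * Complex.I) - κ c‖ < 2 * π := by
  have hnorm : ‖(2 * π * Complex.I : ℂ)‖ = 2 * π := by simp [abs_of_pos Real.pi_pos]
  have hmem : c + 2 * π * Complex.I ∈ ball c 7 := by
    rw [mem_ball_iff_norm, add_sub_cancel_left, hnorm]
    linarith [Real.pi_lt_d2]
  calc ‖κ (c + 2 * π * Complex.I) - κ c‖
    _ ≤ C * ‖c + 2 * π * Complex.I - c‖ := Convex.norm_image_sub_le_of_norm_deriv_le
        (fun t ht => hκ.differentiableAt (isOpen_ball.mem_nhds ht)) hC (convex_ball c 7)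
        (mem_ball_self (by norm_num)) hmem
    _ = C * (2 * π) := by rw [add_sub_cancel_left, hnorm]
    _ < 2 * π := mul_lt_of_lt_one_left Real.two_pi_pos hC1

-- If `L t₀ - t₀` were bounded, then `L t - t` would be nearly constant, whereas it changes by
-- `-2πi` over a period.
theorem exists_lt_abs_re_sub_of_periodic (Λ : ℝ) : ∃ R, ∀ (L : ℂ → ℂ) (t₀ : ℂ),
    DifferentiableOn ℂ L (ball t₀ R) → (∀ t ∈ ball t₀ R, Complex.exp (L t - t) ≠ 1) →
      L (t₀ + 2 * π * Complex.I) = L t₀ → Λ < |(L t₀ - t₀).re| := by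
  obtain ⟨D, hD0, hD⟩ := exists_norm_deriv_le_of_exp_ne_one Λ
  refine ⟨D + 28, fun L t₀ hL hne hper => ?_⟩
  by_contra! hle
  have hdiff : DifferentiableOn ℂ (fun t => L t - t) (ball t₀ (D + 28)) :=
    hL.fun_sub differentiableOn_id
  have hderiv := hD t₀ (D + 28) _ hdiff hne hle
  have hlt := norm_sub_lt_of_norm_deriv_le (hdiff.mono (ball_subset_ball (by linarith)))
    (fun t ht => hderiv t (ball_subset_ball (by linarith) ht))
    (by rw [div_lt_one (by linarith)]; linarith)
  rw [hper, show L t₀ - (t₀ + 2 * π * Complex.I) - (L t₀ - t₀) = -(2 * π * Complex.I) by ring,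
    norm_neg] at hlt
  simp [abs_of_pos Real.pi_pos] at hlt

-- Averaging `L (t₀ + iθ) - L (t₁ + iθ)` over a period, where `t₁ = L t₀`, gives `0`, although by
-- Harnack's inequality it is close to `t₁ - L t₁`.
theorem exists_mul_abs_re_sub_lt_of_periodic : ∃ A, 0 < A ∧ ∀ (u v C : ℝ) (L : ℂ → ℂ) (t₀ : ℂ),
    DifferentiableOn ℂ L (verticalStrip u v) →
    (∀ t ∈ verticalStrip u v, L (t + 2 * π * Complex.I) = L t) →
    (∀ t ∈ verticalStrip u v, Complex.exp (L t - t) ≠ 1) → 0 ≤ C →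
    ball t₀ (140 + 112 * C) ⊆ verticalStrip u v → ball (L t₀) 140 ⊆ verticalStrip u v →
    A < |(L t₀ - t₀).re| → A < |(L (L t₀) - L t₀).re| →
      C * |(L (L t₀) - L t₀).re| < |(L t₀ - t₀).re| := by
  obtain ⟨A, hA0, hA⟩ := exists_norm_sub_le_of_exp_ne_one
  refine ⟨A, hA0, fun u v C L t₀ hL hper hne hC0 hball₀ hball₁ hlt₀ hlt₁ => ?_⟩
  by_contra! hle
  set t₁ := L t₀
  have hharnack : ∀ c R, ball c R ⊆ verticalStrip u v → A < |(L c - c).re| → 28 < R →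
      ∀ θ ∈ Icc (0 : ℝ) (2 * π), ‖L (c + θ * Complex.I) - (c + θ * Complex.I) - (L c - c)‖ ≤
        2 * |(L c - c).re| * 7 / (R / 4 - 7) := fun c R hball hc hR θ hθ =>
    hA c R 7 (fun t => L t - t) ((hL.mono hball).sub differentiableOn_id)
      (fun t ht => hne t (hball ht)) hc (by linarith) _
      (by simpa only [mem_closedBall_iff_norm, add_sub_cancel_left] using norm_mul_I_le hθ)
  have hmean := norm_le_of_forall_norm_sub_add_le hL hper (hball₀ (mem_ball_self (by positivity)))
    (hball₁ (mem_ball_self (by norm_num))) (b := L t₁ - t₁) fun θ hθ => by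
      rw [show L (t₀ + θ * Complex.I) - L (t₁ + θ * Complex.I) + (L t₁ - t₁) =
        L (t₀ + θ * Complex.I) - (t₀ + θ * Complex.I) - (t₁ - t₀) -
          (L (t₁ + θ * Complex.I) - (t₁ + θ * Complex.I) - (L t₁ - t₁)) by ring]
      exact (norm_sub_le _ _).trans (add_le_add
        (hharnack t₀ _ hball₀ hlt₀ (by linarith) θ hθ)
        (hharnack t₁ _ hball₁ hlt₁ (by norm_num) θ hθ))
  have hre := Complex.abs_re_le_norm (L t₁ - t₁)
  have hhalf₀ : 2 * |(t₁ - t₀).re| * 7 / ((140 + 112 * C) / 4 - 7) < |(L t₁ - t₁).re| / 2 := by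
    rw [div_lt_iff₀ (by linarith)]
    linarith
  have hhalf₁ : 2 * |(L t₁ - t₁).re| * 7 / (140 / 4 - 7) = |(L t₁ - t₁).re| / 2 := by ring
  linarith [hmean, hre, hhalf₀, hhalf₁]

end VerticalStrip

section FullAnnulus

theorem exists_forall_dist_le_of_isClosed {X : Type*} [PseudoMetricSpace X] [ProperSpace X]
    {s : Set X} (hs : IsClosed s) {a b : X} {ρ : ℝ} (hb : b ∈ s) (hbρ : dist b a ≤ ρ) :
    ∃ c ∈ s, dist c a ≤ ρ ∧ ∀ z ∈ s, dist z a ≤ ρ → dist z a ≤ dist c a := by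
  obtain ⟨c, ⟨hcρ, hcs⟩, hc⟩ := ((isCompact_closedBall a ρ).inter_right hs).exists_isMaxOn
    ⟨b, hbρ, hb⟩ (continuous_id.dist continuous_const).continuousOn
  exact ⟨c, hcs, hcρ, fun z hz hzρ => hc ⟨hzρ, hz⟩⟩

theorem exists_forall_le_dist_of_isClosed {X : Type*} [PseudoMetricSpace X] [ProperSpace X]
    {s : Set X} (hs : IsClosed s) {a b : X} {ρ : ℝ} (hb : b ∈ s) (hbρ : ρ ≤ dist b a) :
    ∃ c ∈ s, ρ ≤ dist c a ∧ ∀ z ∈ s, ρ ≤ dist z a → dist c a ≤ dist z a := by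
  have hclosed : IsClosed (s ∩ {z | ρ ≤ dist z a}) :=
    hs.inter (isClosed_le continuous_const (continuous_id.dist continuous_const))
  obtain ⟨c, ⟨hcs, hcρ⟩, hc⟩ := hclosed.exists_infDist_eq_dist ⟨b, hb, hbρ⟩ a
  refine ⟨c, hcs, hcρ, fun z hz hzρ => ?_⟩
  rw [dist_comm c, dist_comm z, ← hc]
  exact infDist_le_dist_of_mem ⟨hz, hzρ⟩

open Complex.HadamardThreeLines (verticalStrip)

/-- The open annulus around `a` with radii `exp u < exp v` is a maximal annulus contained
in `W`. -/
structure IsFullAnnulus (W : Set ℂ) (a : ℂ) (u v : ℝ) : Prop where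
  exists_lower : ∃ j ∉ W, ‖j - a‖ = Real.exp u
  exists_upper : ∃ j ∉ W, ‖j - a‖ = Real.exp v
  mem : ∀ z, ‖z - a‖ ∈ Ioo (Real.exp u) (Real.exp v) → z ∈ W

theorem IsFullAnnulus.add_exp_mem {W : Set ℂ} {a : ℂ} {u v : ℝ} (h : IsFullAnnulus W a u v) {t : ℂ}
    (ht : t ∈ verticalStrip u v) : a + Complex.exp t ∈ W := by
  apply h.mem
  rw [add_sub_cancel_left, Complex.norm_exp]
  exact ⟨Real.exp_lt_exp.2 ht.1, Real.exp_lt_exp.2 ht.2⟩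

theorem exists_isFullAnnulus {W : Set ℂ} (hW : IsOpen W) (hb : ¬Bornology.IsBounded Wᶜ) {a j : ℂ}
    (hj : j ∉ W) (hja : j ≠ a) {s t : ℝ} (hjs : ‖j - a‖ ≤ Real.exp s)
    (hmem : ∀ z, ‖z - a‖ ∈ Ioo (Real.exp s) (Real.exp t) → z ∈ W) :
    ∃ u ≤ s, ∃ v ≥ t, IsFullAnnulus W a u v := by
  obtain ⟨b, hbW, hba⟩ : ∃ b ∉ W, Real.exp t ≤ dist b a := by
    by_contra! hcon
    exact hb (isBounded_ball.subset hcon)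
  obtain ⟨l, hl, hls, hmax⟩ := exists_forall_dist_le_of_isClosed (a := a)
    (ρ := Real.exp s) hW.isClosed_compl hj (by rwa [dist_eq_norm])
  obtain ⟨m, hm, hmt, hmin⟩ := exists_forall_le_dist_of_isClosed hW.isClosed_compl hbW hba
  simp only [dist_eq_norm] at hls hmax hmt hmin
  have hl0 : 0 < ‖l - a‖ := (norm_pos_iff.2 (sub_ne_zero.2 hja)).trans_le (hmax j hj hjs)
  have hm0 : 0 < ‖m - a‖ := (Real.exp_pos t).trans_le hmt
  refine ⟨Real.log ‖l - a‖, (Real.log_le_iff_le_exp hl0).2 hls, Real.log ‖m - a‖,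
    (Real.le_log_iff_exp_le hm0).2 hmt, ⟨l, hl, (Real.exp_log hl0).symm⟩,
    ⟨m, hm, (Real.exp_log hm0).symm⟩, fun z hz => ?_⟩
  rw [Real.exp_log hl0, Real.exp_log hm0] at hz
  by_contra hzW
  exact hzW (hmem z ⟨not_le.1 fun hle => (hmax z hzW hle).not_gt hz.1,
    not_le.1 fun hle => (hmin z hzW hle).not_gt hz.2⟩)

/-- `L` is the map `F^q` in the logarithmic coordinate `t ↦ a + exp t` on the strip over the
annulus around `a` with radii `exp u < exp v`. The integer `e` is the winding number around `a`
of the image of a circle in this annulus. -/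
structure IsAnnulusLog (F : ℂ → OnePoint ℂ) (q : ℕ) (a : ℂ) (u v : ℝ) (L : ℂ → ℂ) (e : ℤ) :
    Prop where
  differentiableOn : DifferentiableOn ℂ L (verticalStrip u v)
  exp_eq : ∀ t ∈ verticalStrip u v, Complex.exp (L t) = (finMap F)^[q] (a + Complex.exp t) - a
  add_two_pi : ∀ t ∈ verticalStrip u v,
    L (t + 2 * π * Complex.I) = L t + e * (2 * π * Complex.I)

theorem IsBakerDomain.exists_isAnnulusLog {F : ℂ → OnePoint ℂ} {W : Set ℂ} {q : ℕ}
    (h : IsBakerDomain F W q) {a : ℂ} (ha : a ∉ W) {u v : ℝ} (hA : IsFullAnnulus W a u v)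
    (hne : (verticalStrip u v).Nonempty) : ∃ L e, IsAnnulusLog F q a u v L e := by
  have hd : DifferentiableOn ℂ (fun t => (finMap F)^[q] (a + Complex.exp t) - a)
      (verticalStrip u v) :=
    ((h.differentiableOn q).comp (by fun_prop) fun t ht => hA.add_exp_mem ht).sub_const a
  have h0 : ∀ t ∈ verticalStrip u v, (finMap F)^[q] (a + Complex.exp t) - a ≠ 0 :=
    fun t ht e => ha (sub_eq_zero.1 e ▸ h.mapsTo (hA.add_exp_mem ht))
  obtain ⟨t₀, ht₀⟩ := hne
  obtain ⟨L, hL, -, hexp⟩ := exists_differentiableOn_exp_eq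
    (isSimplyConnected_of_convex (convex_verticalStrip u v) ⟨t₀, ht₀⟩) (isOpen_verticalStrip u v)
    hd h0 ht₀ (Complex.exp_log (h0 t₀ ht₀))
  obtain ⟨e, he⟩ := exists_int_forall_apply_add_eq hL.continuousOn (fun t ht => by
    rw [hexp t ht, hexp _ (add_two_pi_mul_I_mem_verticalStrip_iff.2 ht), Complex.exp_periodic])
    ⟨t₀, ht₀⟩
  exact ⟨L, e, hL, hexp, he⟩

/-- On the disc of radius `7` around `0`, which contains the segment `[0, 2πi]`, the function `g`
has a holomorphic logarithm whose increment over this segment is a non-zero multiple of `2πi`: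
the curve `θ ↦ g (iθ)`, `0 ≤ θ ≤ 2π`, winds around `0`. -/
def WindsAroundZero (g : ℂ → ℂ) : Prop :=
  ∃ κ : ℂ → ℂ, DifferentiableOn ℂ κ (ball 0 7) ∧ (∀ t ∈ ball 0 7, Complex.exp (κ t) = g t) ∧
    ∃ d : ℤ, d ≠ 0 ∧ κ (2 * π * Complex.I) = κ 0 + d * (2 * π * Complex.I)

theorem two_pi_le_norm_int_mul {d : ℤ} (hd : d ≠ 0) :
    2 * π ≤ ‖(d : ℂ) * (2 * π * Complex.I)‖ := by
  have habs : (1 : ℝ) ≤ |(d : ℝ)| := by exact_mod_cast Int.one_le_abs hd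
  calc 2 * π ≤ |(d : ℝ)| * (2 * π) := le_mul_of_one_le_left Real.two_pi_pos.le habs
    _ = ‖(d : ℂ) * (2 * π * Complex.I)‖ := by simp [abs_of_pos Real.pi_pos]

-- Otherwise the logarithm of `φ ∘ Ψ` would have a derivative of modulus less than `1`, and its
-- increment over a segment of length `2π` would be less than `2π`.
theorem not_windsAroundZero_comp {φ Ψ : ℂ → ℂ} {U : Set ℂ} (hU : IsOpen U)
    (hφ : DifferentiableOn ℂ φ U) {M η : ℝ} (hM : ∀ y ∈ U, ‖deriv φ y‖ ≤ M * ‖φ y‖)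
    (hΨ : DifferentiableOn ℂ Ψ (ball 0 7)) (hΨU : MapsTo Ψ (ball 0 7) U)
    (hη : ∀ t ∈ ball 0 7, ‖deriv Ψ t‖ ≤ η) (hMη : M * η < 1) : ¬WindsAroundZero (φ ∘ Ψ) := by
  rintro ⟨κ, hκ, hexp, d, hd0, hd⟩
  have hderiv : ∀ t ∈ ball 0 7, ‖deriv κ t‖ ≤ M * η := fun t ht => by
    have hnhds := isOpen_ball.mem_nhds ht
    have hchain : Complex.exp (κ t) * deriv κ t = deriv φ (Ψ t) * deriv Ψ t :=
      (hκ.differentiableAt hnhds).hasDerivAt.cexp.unique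
        (((hφ.differentiableAt (hU.mem_nhds (hΨU ht))).hasDerivAt.comp t
          (hΨ.differentiableAt hnhds).hasDerivAt).congr_of_eventuallyEq
            (eventually_of_mem hnhds hexp))
    refine le_of_mul_le_mul_left ?_ (norm_pos_iff.2 (Complex.exp_ne_zero (κ t)))
    calc ‖Complex.exp (κ t)‖ * ‖deriv κ t‖ = ‖deriv φ (Ψ t)‖ * ‖deriv Ψ t‖ := by
          rw [← norm_mul, hchain, norm_mul]
      _ ≤ M * ‖φ (Ψ t)‖ * η := mul_le_mul (hM _ (hΨU ht)) (hη t ht) (norm_nonneg _)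
          ((norm_nonneg _).trans (hM _ (hΨU ht)))
      _ = ‖Complex.exp (κ t)‖ * (M * η) := by rw [hexp t ht, Function.comp_apply]; ring
  have hlt := norm_sub_lt_of_norm_deriv_le hκ hderiv hMη
  rw [zero_add, hd, add_sub_cancel_left] at hlt
  exact hlt.not_ge (two_pi_le_norm_int_mul hd0)

namespace IsAnnulusLog

variable {F : ℂ → OnePoint ℂ} {q : ℕ} {a : ℂ} {u v : ℝ} {L : ℂ → ℂ} {e : ℤ}

theorem add_int_mul (h : IsAnnulusLog F q a u v L e) (k : ℤ) {t : ℂ} (ht : t ∈ verticalStrip u v) :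
    L (t + k * (2 * π * Complex.I)) = L t + (e * k : ℤ) * (2 * π * Complex.I) := by
  have hk := apply_add_zsmul (fun _ => add_two_pi_mul_I_mem_verticalStrip_iff) h.add_two_pi k t ht
  rw [zsmul_eq_mul, zsmul_eq_mul] at hk
  rw [hk]
  push_cast
  ring

theorem exp_sub_ne_one (h : IsAnnulusLog F q a u v L e) {W : Set ℂ} (hW : IsBakerDomain F W q)
    (hA : IsFullAnnulus W a u v) {t : ℂ} (ht : t ∈ verticalStrip u v) :
    Complex.exp (L t - t) ≠ 1 := fun he => by
  rw [Complex.exp_sub, div_eq_one_iff_eq (Complex.exp_ne_zero _), h.exp_eq t ht] at he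
  exact hW.iterate_ne_self (hA.add_exp_mem ht) (Nat.one_le_iff_ne_zero.1 hW.one_le)
    (by linear_combination he)

theorem exp_apply_eq_shiftedIterate (h : IsAnnulusLog F q a u v L e) {t z : ℂ} {n : ℕ}
    (ht : t ∈ verticalStrip u v) (htz : Complex.exp t = shiftedIterate F q a n z) :
    Complex.exp (L t) = shiftedIterate F q a (n + 1) z := by
  rw [h.exp_eq t ht, htz, shiftedIterate_succ']

theorem re_apply_sub (h : IsAnnulusLog F q a u v L e) {t z : ℂ} {n : ℕ}
    (ht : t ∈ verticalStrip u v) (htz : Complex.exp t = shiftedIterate F q a n z) :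
    (L t - t).re =
      Real.log ‖shiftedIterate F q a (n + 1) z‖ - Real.log ‖shiftedIterate F q a n z‖ := by
  rw [← htz, ← h.exp_apply_eq_shiftedIterate ht htz, Complex.norm_exp, Complex.norm_exp,
    Real.log_exp, Real.log_exp, Complex.sub_re]

theorem windsAroundZero (h : IsAnnulusLog F q a u v L e) (he : e ≠ 0) {g : ℂ → ℂ}
    (hg : WindsAroundZero g)
    (hmem : ∀ t ∈ ball 0 7, ‖g t‖ ∈ Ioo (Real.exp u) (Real.exp v)) :
    WindsAroundZero fun t => (finMap F)^[q] (a + g t) - a := by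
  obtain ⟨κ, hκ, hexp, d, hd0, hd⟩ := hg
  have hmaps : MapsTo κ (ball 0 7) (verticalStrip u v) := fun t ht => by
    have hlt := hmem t ht
    rw [← hexp t ht, Complex.norm_exp] at hlt
    exact ⟨Real.exp_lt_exp.1 hlt.1, Real.exp_lt_exp.1 hlt.2⟩
  refine ⟨L ∘ κ, h.differentiableOn.comp hκ hmaps, fun t ht => ?_, e * d, mul_ne_zero he hd0, ?_⟩
  · rw [Function.comp_apply, h.exp_eq _ (hmaps ht), hexp t ht]
  · rw [Function.comp_apply, hd, Function.comp_apply,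
      h.add_int_mul d (hmaps (mem_ball_self (by norm_num)))]

end IsAnnulusLog

end FullAnnulus

section WindingNumber

open Complex.HadamardThreeLines (verticalStrip)

/-- `Ψ` is a branch of the inverse of `shiftedIterate F q a n` in the logarithmic coordinate
around the value at `x`, with values in `ball x ρ` and derivative at most `η`. The radius `7` is
chosen so that the disc contains the segment `[0, 2πi]`, which parametrizes a full circle. -/
structure IsSmallLift (F : ℂ → OnePoint ℂ) (q : ℕ) (a : ℂ) (n : ℕ) (x : ℂ) (ρ η : ℝ)
    (Ψ : ℂ → ℂ) : Prop where
  differentiableOn : DifferentiableOn ℂ Ψ (ball 0 7)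
  mapsTo : MapsTo Ψ (ball 0 7) (ball x ρ)
  norm_deriv_le : ∀ t ∈ ball 0 7, ‖deriv Ψ t‖ ≤ η
  shiftedIterate_eq : ∀ t ∈ ball 0 7,
    shiftedIterate F q a n (Ψ t) = shiftedIterate F q a n x * Complex.exp t

variable {F : ℂ → OnePoint ℂ} {q : ℕ} {a : ℂ}

theorem IsSmallLift.windsAroundZero {n : ℕ} {x : ℂ} {ρ η : ℝ} {Ψ : ℂ → ℂ}
    (h : IsSmallLift F q a n x ρ η Ψ) (hx : shiftedIterate F q a n x ≠ 0) :
    WindsAroundZero (shiftedIterate F q a n ∘ Ψ) :=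
  ⟨fun t => Complex.log (shiftedIterate F q a n x) + t, by fun_prop, fun t ht => by
    rw [Complex.exp_add, Complex.exp_log hx, Function.comp_apply, h.shiftedIterate_eq t ht],
    1, one_ne_zero, by simp⟩

namespace IsBakerFrame

variable {W : Set ℂ} {x₀ : ℂ} {K V : Set ℂ} {r : ℝ}

theorem mem_annulus_or_exists (h : IsBakerFrame F W q a x₀ K V r) {u v : ℝ}
    (hA : IsFullAnnulus W a u v) {m : ℕ} {y : ℂ} (hy : y ∈ V)
    (hyA : ‖shiftedIterate F q a m y‖ ∈ Ioo (Real.exp u) (Real.exp v)) :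
    (∀ z ∈ V, ‖shiftedIterate F q a m z‖ ∈ Ioo (Real.exp u) (Real.exp v)) ∨
      ∃ z ∈ V, ∃ j ∉ W, ‖shiftedIterate F q a m z‖ = ‖j - a‖ := by
  have hcont := ((h.differentiableOn_shiftedIterate a m).continuousOn.mono h.V_subset).norm
  by_contra! hcon
  obtain ⟨⟨z, hz, hzA⟩, hno⟩ := hcon
  rcases le_or_gt ‖shiftedIterate F q a m z‖ (Real.exp u) with hzu | hzu
  · obtain ⟨j, hj, hju⟩ := hA.exists_lower
    obtain ⟨z', hz', hz'u⟩ := h.isPreconnected_V.intermediate_value hz hy hcont ⟨hzu, hyA.1.le⟩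
    exact hno z' hz' j hj (hz'u.trans hju.symm)
  · obtain ⟨j, hj, hjv⟩ := hA.exists_upper
    obtain ⟨z', hz', hz'v⟩ := h.isPreconnected_V.intermediate_value hy hz hcont
      ⟨hyA.2.le, not_lt.1 fun hlt => hzA ⟨hzu, hlt⟩⟩
    exact hno z' hz' j hj (hz'v.trans hjv.symm)

-- If `e ≠ 0`, then all iterates of the loop around the annulus wind around `a`, as long as they
-- stay in the annulus. They cannot wind around `a` when they leave it, since the lift is small;
-- but they must leave it, since the iterates tend to infinity.
theorem exists_winding_eq_zero (h : IsBakerFrame F W q a x₀ K V r) :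
    ∃ η, 0 < η ∧ ∀ u v, IsFullAnnulus W a u v → ∀ L e, IsAnnulusLog F q a u v L e →
      ∀ n, ∀ x ∈ K, ‖shiftedIterate F q a n x‖ ∈ Ioo (Real.exp u) (Real.exp v) →
        ∀ Ψ, IsSmallLift F q a n x (r / 2) η Ψ → e = 0 := by
  obtain ⟨M, hM0, hM⟩ := h.exists_norm_deriv_shiftedIterate_le
  refine ⟨1 / (2 * M), by positivity, fun u v hA L e hL n x hx hxA Ψ hΨ => ?_⟩
  by_contra he
  have hball : ball x (r / 2) ⊆ V :=
    (ball_subset_ball (half_le_self h.r_pos.le)).trans (h.ball_subset hx)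
  have hwinds : ∀ k, WindsAroundZero (shiftedIterate F q a (n + k) ∘ Ψ) ∧
      ∃ y ∈ V, ‖shiftedIterate F q a (n + k) y‖ ∈ Ioo (Real.exp u) (Real.exp v) := by
    intro k
    induction k with
    | zero =>
      exact ⟨hΨ.windsAroundZero (h.shiftedIterate_ne_zero n (h.K_subset hx)),
        x, h.K_subset_V hx, hxA⟩
    | succ k ih =>
      obtain ⟨hw, y, hy, hyA⟩ := ih
      rcases h.mem_annulus_or_exists hA hy hyA with hall | ⟨z, hz, j, hj, hzj⟩
      · refine ⟨?_, x₀, h.K_subset_V h.mem_K, ?_⟩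
        · have hsucc : shiftedIterate F q a (n + (k + 1)) ∘ Ψ =
              fun t => (finMap F)^[q] (a + (shiftedIterate F q a (n + k) ∘ Ψ) t) - a :=
            funext fun t => shiftedIterate_succ' (n + k) (Ψ t)
          rw [hsucc]
          exact hL.windsAroundZero he hw fun t ht => hall _ (hball (hΨ.mapsTo ht))
        · rw [← add_assoc, shiftedIterate_succ]
          exact hall _ (h.apply_mem_V x₀ h.mem_K)
      · refine absurd hw (not_windsAroundZero_comp isOpen_ball
          ((h.differentiableOn_shiftedIterate a (n + k)).mono (hball.trans h.V_subset))
          (hM (n + k) j hj z hz hzj x hx) hΨ.differentiableOn hΨ.mapsTo hΨ.norm_deriv_le ?_)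
        field_simp
        norm_num
  obtain ⟨N, hN⟩ := h.exists_forall_lt_norm_shiftedIterate (Real.exp v)
  obtain ⟨-, y, hy, hyA⟩ := hwinds N
  exact (hN (n + N) (Nat.le_add_left N n) y hy).not_gt hyA.2

end IsBakerFrame

end WindingNumber

section Displacement

theorem log_sub_log_le_iff {s t κ : ℝ} (hs : 0 < s) (ht : 0 < t) :
    Real.log s - Real.log t ≤ κ ↔ s ≤ Real.exp κ * t := by
  rw [← Real.log_div hs.ne' ht.ne', Real.log_le_iff_le_exp (div_pos hs ht), div_le_iff₀ ht]

theorem abs_log_sub_log_le_iff {s t κ : ℝ} (hs : 0 < s) (ht : 0 < t) :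
    |Real.log s - Real.log t| ≤ κ ↔ s ≤ Real.exp κ * t ∧ t ≤ Real.exp κ * s := by
  rw [abs_sub_le_iff, log_sub_log_le_iff hs ht, log_sub_log_le_iff ht hs]

theorem exists_abs_sub_le_of_isPreconnected {X : Type*} [TopologicalSpace X] {V : Set X}
    (hV : IsPreconnected V) {g : X → ℝ} (hg : ContinuousOn g V) {κ w : ℝ} (hκ : 0 ≤ κ) {y y' : X}
    (hy : y ∈ V) (hy' : y' ∈ V) (hwy : w ≤ g y) (hy'w : g y' ≤ w + κ) :
    ∃ z ∈ V, |g z - w| ≤ κ := by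
  rcases le_total (g y') w with hle | hle
  · obtain ⟨z, hz, rfl⟩ := hV.intermediate_value hy' hy hg ⟨hle, hwy⟩
    exact ⟨z, hz, by rwa [sub_self, abs_zero]⟩
  · exact ⟨y', hy', by rw [abs_of_nonneg (sub_nonneg.2 hle)]; linarith⟩

namespace IsBakerFrame

variable {F : ℂ → OnePoint ℂ} {W : Set ℂ} {q : ℕ} {a x₀ : ℂ} {K V : Set ℂ} {r : ℝ}

theorem exists_abs_log_sub_log_le (h : IsBakerFrame F W q a x₀ K V r) (κ : ℝ) :
    ∃ B, ∀ n σ, (∃ j ∉ W, ‖j - a‖ = Real.exp σ) →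
      ∀ z ∈ V, |Real.log ‖shiftedIterate F q a n z‖ - σ| ≤ κ → ∀ y ∈ V, ∀ y' ∈ V,
        |Real.log ‖shiftedIterate F q a n y‖ - Real.log ‖shiftedIterate F q a n y'‖| ≤ B := by
  obtain ⟨B, hB1, hB⟩ := h.exists_norm_shiftedIterate_comparable (Real.exp κ)
  have hpos : ∀ n, ∀ y ∈ V, 0 < ‖shiftedIterate F q a n y‖ := fun n y hy =>
    norm_pos_iff.2 (h.shiftedIterate_ne_zero n (h.V_subset hy))
  refine ⟨Real.log B + Real.log B, ?_⟩
  rintro n σ ⟨j, hj, hjσ⟩ z hz hzσ y hy y' hy'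
  have hj0 : 0 < ‖j - a‖ := hjσ ▸ Real.exp_pos σ
  rw [← Real.log_exp σ, ← hjσ, abs_log_sub_log_le_iff (hpos n z hz) hj0] at hzσ
  have hbound : ∀ y ∈ V,
      |Real.log ‖shiftedIterate F q a n y‖ - Real.log ‖j - a‖| ≤ Real.log B := fun y hy => by
    rw [abs_log_sub_log_le_iff (hpos n y hy) hj0, Real.exp_log (zero_lt_one.trans_le hB1)]
    exact hB n j hj z hz hzσ.1 hzσ.2 y hy
  refine (abs_sub_le _ (Real.log ‖j - a‖) _).trans (add_le_add (hbound y hy) ?_)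
  rw [abs_sub_comm]
  exact hbound y' hy'

theorem exists_log_norm_mem_Icc (h : IsBakerFrame F W q a x₀ K V r) {κ : ℝ} (hκ : 0 ≤ κ) :
    ∃ B, ∀ u v, IsFullAnnulus W a u v → ∀ n, ∀ y ∈ V,
      Real.log ‖shiftedIterate F q a n y‖ ∈ Icc (u + κ) (v - κ) → ∀ y' ∈ V,
      B < |Real.log ‖shiftedIterate F q a n y‖ - Real.log ‖shiftedIterate F q a n y'‖| →
      Real.log ‖shiftedIterate F q a n y'‖ ∈ Icc (u + κ) (v - κ) := by
  obtain ⟨B, hB⟩ := h.exists_abs_log_sub_log_le κ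
  refine ⟨B, fun u v hA n y hy hyA y' hy' hlt => ?_⟩
  have hcont : ContinuousOn (fun z => Real.log ‖shiftedIterate F q a n z‖) V :=
    ((h.differentiableOn_shiftedIterate a n).continuousOn.mono h.V_subset).norm.log
      fun z hz => (norm_pos_iff.2 (h.shiftedIterate_ne_zero n (h.V_subset hz))).ne'
  by_contra hcon
  rw [mem_Icc, not_and_or, not_le, not_le] at hcon
  rcases hcon with hlow | hupp
  · obtain ⟨z, hz, hzu⟩ := exists_abs_sub_le_of_isPreconnected h.isPreconnected_V hcont hκ hy hy'
      (w := u) (by linarith [hyA.1]) hlow.le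
    exact (hB n u hA.exists_lower z hz hzu y hy y' hy').not_gt hlt
  · obtain ⟨z, hz, hzv⟩ := exists_abs_sub_le_of_isPreconnected h.isPreconnected_V
      hcont.fun_neg hκ hy hy' (w := -v) (by linarith [hyA.2]) (by linarith)
    rw [← neg_sub', abs_neg] at hzv
    exact (hB n v hA.exists_upper z hz hzv y hy y' hy').not_gt hlt

end IsBakerFrame

end Displacement

section SmallLift

theorem exists_norm_deriv_le_of_omits_two (A : ℝ) : ∃ B, 0 < B ∧
    ∀ (c : ℂ) (R : ℝ) (Ψ : ℂ → ℂ) (α β : ℂ), DifferentiableOn ℂ Ψ (ball c R) →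
      (∀ t ∈ ball c R, Ψ t ≠ α) → (∀ t ∈ ball c R, Ψ t ≠ β) → β ≠ α →
      ‖(Ψ c - α) / (β - α)‖ ≤ A → ∀ t ∈ ball c (R / 4), ‖deriv Ψ t‖ ≤ B * ‖β - α‖ / R := by
  obtain ⟨B, hB0, hB⟩ := exists_norm_le_of_omits A
  refine ⟨8 * B, by positivity, fun c R Ψ α β hΨ hα hβ hαβ hA t ht => ?_⟩
  have hR : 0 < R := by linarith [pos_of_mem_ball ht]
  have hne : β - α ≠ 0 := sub_ne_zero.2 hαβ
  have hbound := hB c R (fun t => (Ψ t - α) / (β - α)) ((hΨ.sub_const α).div_const _)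
    (fun s hs => div_ne_zero (sub_ne_zero.2 (hα s hs)) hne)
    (fun s hs e => hβ s hs (sub_left_injective ((div_eq_one_iff_eq hne).1 e))) hA
  have hsub : ball t (R / 4) ⊆ ball c (R / 2) :=
    ball_subset_ball' (by linarith [mem_ball.1 ht])
  have hderiv := norm_deriv_le_of_norm_le (B := B * ‖β - α‖) (by linarith : 0 < R / 4)
    ((hΨ.sub_const α).mono (hsub.trans (ball_subset_ball (by linarith)))) fun s hs => by
      have hs' := hbound s (hsub hs)
      rwa [norm_div, div_le_iff₀ (norm_pos_iff.2 hne)] at hs'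
  rw [deriv_sub_const] at hderiv
  refine hderiv.trans_eq ?_
  field_simp
  ring

variable {F : ℂ → OnePoint ℂ} {W : Set ℂ} {q : ℕ} {a x₀ : ℂ} {K V : Set ℂ} {r : ℝ}

theorem IsExpLift.isSmallLift {n : ℕ} {x : ℂ} {R ρ η : ℝ} {Ψ : ℂ → ℂ}
    (h : IsExpLift F (n * q) a (shiftedIterate F q a n x) (ball 0 R) Ψ) (h0 : Ψ 0 = x)
    (hR : 7 ≤ R) (hη : ∀ t ∈ ball 0 7, ‖deriv Ψ t‖ ≤ η) (hηρ : η * 7 < ρ) :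
    IsSmallLift F q a n x ρ η Ψ := by
  have h7 : ball (0 : ℂ) 7 ⊆ ball 0 R := ball_subset_ball hR
  have hη0 : 0 ≤ η := (norm_nonneg _).trans (hη 0 (mem_ball_self (by norm_num)))
  refine ⟨h.differentiableOn.mono h7, fun t ht => ?_, hη, fun t ht => ?_⟩
  · have hmvt := Convex.norm_image_sub_le_of_norm_deriv_le
      (fun t ht => h.differentiableOn.differentiableAt (isOpen_ball.mem_nhds (h7 ht))) hη
      (convex_ball 0 7) (mem_ball_self (by norm_num)) ht
    rw [h0, sub_zero] at hmvt
    rw [mem_ball_iff_norm]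
    calc ‖Ψ t - x‖ ≤ η * ‖t‖ := hmvt
      _ ≤ η * 7 := by gcongr; exact (mem_ball_zero_iff.1 ht).le
      _ < ρ := hηρ
  · rw [shiftedIterate, h.finMap_iterate_eq (h7 ht), add_sub_cancel_left]

theorem IsBakerFrame.exists_small_lift (h : IsBakerFrame F W q a x₀ K V r)
    {S : Set (OnePoint ℂ)} (hS : MeroSingularSet F univ S) {j : ℂ} (hj : j ∉ W) (hja : j ≠ a)
    {η : ℝ} (hη : 0 < η) :
    ∃ c₀ : ℝ, ∀ n, ∀ x ∈ K, (∀ t ∈ ball (0 : ℂ) c₀,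
      a + shiftedIterate F q a n x * Complex.exp t ∈ W ∧
      ((a + shiftedIterate F q a n x * Complex.exp t : ℂ) : OnePoint ℂ) ∉
        MeroPostsingular F univ S) → ∃ Ψ, IsSmallLift F q a n x (r / 2) η Ψ := by
  obtain ⟨A, hA⟩ := h.isCompact_K.exists_bound_of_continuousOn
    (f := fun x => (x - a) / (j - a)) (by fun_prop)
  obtain ⟨B, -, hB⟩ := exists_norm_deriv_le_of_omits_two A
  have hr := h.r_pos
  obtain ⟨η', hη', hη'η, hη'r⟩ : ∃ η' > 0, η' ≤ η ∧ η' * 7 < r / 2 :=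
    ⟨min η (r / 28), lt_min hη (by positivity), min_le_left _ _, by
      linarith [min_le_right η (r / 28)]⟩
  obtain ⟨c₀, hc₀, hBc₀⟩ : ∃ c₀ ≥ 28, B * ‖j - a‖ / η' ≤ c₀ :=
    ⟨_, le_max_left _ _, le_max_right _ _⟩
  refine ⟨c₀, fun n x hx hW => ?_⟩
  have h0 : (0 : ℂ) ∈ ball (0 : ℂ) c₀ := mem_ball_self (by linarith)
  obtain ⟨Ψ, hΨ, hΨ0⟩ := h.exists_isExpLift hS
    (isSimplyConnected_of_convex (convex_ball 0 c₀) ⟨0, h0⟩) isOpen_ball h0 (h.K_subset hx) n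
    fun t ht => (hW t ht).2
  have hmaps : MapsTo Ψ (ball 0 c₀) W := hΨ.mapsTo h.toIsBakerDomain Subset.rfl
    (convex_ball 0 c₀).isPreconnected h0 (hΨ0.symm ▸ h.K_subset hx)
    fun t ht => hΨ.mem_meroFatou h.toIsBakerDomain ht (hW t ht).1
  have hderiv : ∀ t ∈ ball 0 7, ‖deriv Ψ t‖ ≤ η' := fun t ht =>
    (hB 0 c₀ Ψ a j hΨ.differentiableOn (fun t ht e => h.notMem (e ▸ hmaps ht))
      (fun t ht e => hj (e ▸ hmaps ht)) hja (hΨ0.symm ▸ hA x hx) t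
      (ball_subset_ball (by linarith) ht)).trans
        ((div_le_comm₀ (by linarith) hη').2 hBc₀)
  have hsmall := hΨ.isSmallLift hΨ0 (by linarith) hderiv hη'r
  exact ⟨Ψ, hsmall.1, hsmall.2, fun t ht => (hderiv t ht).trans hη'η, hsmall.4⟩

end SmallLift

section NonPeriodic

open Complex.HadamardThreeLines (verticalStrip)

theorem re_eq_log_norm_of_exp_eq {t z : ℂ} (h : Complex.exp t = z) : t.re = Real.log ‖z‖ := by
  rw [← h, Complex.norm_exp, Real.log_exp]

namespace IsBakerFrame

variable {F : ℂ → OnePoint ℂ} {W : Set ℂ} {q : ℕ} {a x₀ : ℂ} {K V : Set ℂ} {r : ℝ}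

theorem exists_abs_log_succ_sub_le (h : IsBakerFrame F W q a x₀ K V r) :
    ∃ C A : ℝ, 1 ≤ C ∧ ∀ n, ∀ x ∈ V,
      A < |Real.log ‖shiftedIterate F q a (n + 1) x‖ - Real.log ‖shiftedIterate F q a n x‖| →
      ∀ y ∈ V,
      |Real.log ‖shiftedIterate F q a (n + 1) x‖ - Real.log ‖shiftedIterate F q a n x‖| ≤
        C * |Real.log ‖shiftedIterate F q a (n + 1) y‖ -
          Real.log ‖shiftedIterate F q a n y‖| := by
  obtain ⟨C, A, hC, hCA⟩ := exists_abs_log_norm_le_mul_of_omits h.isOpen h.isPreconnected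
    h.isCompact_V h.isPreconnected_V h.V_subset
  refine ⟨C, A, hC, fun n x hx hlt y hy => ?_⟩
  have hne : ∀ m, ∀ z ∈ W, shiftedIterate F q a m z ≠ 0 := fun m z => h.shiftedIterate_ne_zero m
  have hlog : ∀ z ∈ V, Real.log ‖shiftedIterate F q a (n + 1) z / shiftedIterate F q a n z‖ =
      Real.log ‖shiftedIterate F q a (n + 1) z‖ - Real.log ‖shiftedIterate F q a n z‖ :=
    fun z hz => by
      rw [norm_div, Real.log_div (norm_ne_zero_iff.2 (hne (n + 1) z (h.V_subset hz)))
        (norm_ne_zero_iff.2 (hne n z (h.V_subset hz)))]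
  rw [← hlog x hx] at hlt
  rw [← hlog x hx, ← hlog y hy]
  exact hCA _ ((h.differentiableOn_shiftedIterate a (n + 1)).div
    (h.differentiableOn_shiftedIterate a n) (hne n))
    (fun z hz => div_ne_zero (hne (n + 1) z hz) (hne n z hz))
    (fun z hz e => h.shiftedIterate_succ_ne n hz ((div_eq_one_iff_eq (hne n z hz)).1 e))
    x hx hlt y hy

theorem exists_abs_re_apply_sub_le (h : IsBakerFrame F W q a x₀ K V r) :
    ∃ C A : ℝ, 1 ≤ C ∧ ∀ u v L e, IsAnnulusLog F q a u v L e → ∀ n, ∀ x ∈ K,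
      ∀ t ∈ verticalStrip u v, Complex.exp t = shiftedIterate F q a n x → L t ∈ verticalStrip u v →
        A < |(L t - t).re| → |(L t - t).re| ≤ C * |(L (L t) - L t).re| := by
  obtain ⟨C, A, hC1, hC⟩ := h.exists_abs_log_succ_sub_le
  refine ⟨C, A, hC1, fun u v L e hL n x hx t ht htx hLt hlt => ?_⟩
  have hLtx : Complex.exp (L t) = shiftedIterate F q a n ((finMap F)^[q] x) := by
    rw [hL.exp_apply_eq_shiftedIterate ht htx, shiftedIterate_succ]
  rw [hL.re_apply_sub ht htx] at hlt ⊢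
  rw [hL.re_apply_sub hLt hLtx]
  exact hC n x (h.K_subset_V hx) hlt _ (h.apply_mem_V x hx)

theorem exists_ball_apply_subset_verticalStrip (h : IsBakerFrame F W q a x₀ K V r) {R : ℝ}
    (hR : 0 ≤ R) :
    ∃ B, ∀ u v, IsFullAnnulus W a u v → ∀ L e, IsAnnulusLog F q a u v L e → ∀ n, ∀ x ∈ K,
      ∀ t ∈ verticalStrip u v, Complex.exp t = shiftedIterate F q a n x →
        t.re ∈ Icc (u + R) (v - R) → B < |(L t - t).re| → ball (L t) R ⊆ verticalStrip u v := by
  obtain ⟨B, hB⟩ := h.exists_log_norm_mem_Icc hR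
  refine ⟨B, fun u v hA L e hL n x hx t ht htx htR hlt => ?_⟩
  have hre : t.re = Real.log ‖shiftedIterate F q a n x‖ := re_eq_log_norm_of_exp_eq htx
  have hreL : (L t).re = Real.log ‖shiftedIterate F q a n ((finMap F)^[q] x)‖ := by
    rw [← shiftedIterate_succ]
    exact re_eq_log_norm_of_exp_eq (hL.exp_apply_eq_shiftedIterate ht htx)
  rw [Complex.sub_re, abs_sub_comm, hre, hreL] at hlt
  exact ball_subset_verticalStrip
    (hreL ▸ hB u v hA n x (h.K_subset_V hx) (hre ▸ htR) _ (h.apply_mem_V x hx) hlt)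

-- If `L` were periodic, its means over the vertical segments at `t₀ = log (f^{qn} x - a)` and at
-- `t₁ = L t₀` would agree, which makes `L t₁ - t₁` much smaller than `L t₀ - t₀`. By Harnack's
-- inequality in `W`, these displacements are comparable.
theorem exists_not_isAnnulusLog_zero (h : IsBakerFrame F W q a x₀ K V r) :
    ∃ c₀ : ℝ, 0 < c₀ ∧ ∀ u v, IsFullAnnulus W a u v → ∀ n, ∀ x ∈ K,
      Real.log ‖shiftedIterate F q a n x‖ ∈ Icc (u + c₀) (v - c₀) →
      ∀ L, ¬IsAnnulusLog F q a u v L 0 := by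
  obtain ⟨C, A, hC1, hC⟩ := h.exists_abs_re_apply_sub_le
  obtain ⟨A', hA'0, hA'⟩ := exists_mul_abs_re_sub_lt_of_periodic
  obtain ⟨B, hB⟩ := h.exists_ball_apply_subset_verticalStrip (by norm_num : (0 : ℝ) ≤ 140)
  obtain ⟨R₀, hR₀⟩ := exists_lt_abs_re_sub_of_periodic (max A (max (C * A') B))
  obtain ⟨c₀, hR₀c₀, hCc₀⟩ : ∃ c₀, R₀ ≤ c₀ ∧ 140 + 112 * C ≤ c₀ :=
    ⟨_, le_max_left _ _, le_max_right _ _⟩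
  refine ⟨c₀, by linarith, fun u v hA n x hx hxA L hL => ?_⟩
  obtain ⟨t₀, ht₀⟩ : ∃ t₀, Complex.exp t₀ = shiftedIterate F q a n x :=
    ⟨_, Complex.exp_log (h.shiftedIterate_ne_zero n (h.K_subset hx))⟩
  rw [← re_eq_log_norm_of_exp_eq ht₀] at hxA
  have hball₀ : ball t₀ c₀ ⊆ verticalStrip u v := ball_subset_verticalStrip hxA
  have ht₀mem : t₀ ∈ verticalStrip u v := hball₀ (mem_ball_self (by linarith))
  have hper : ∀ t ∈ verticalStrip u v, L (t + 2 * π * Complex.I) = L t := fun t ht => by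
    simpa using hL.add_two_pi t ht
  have hne : ∀ t ∈ verticalStrip u v, Complex.exp (L t - t) ≠ 1 := fun t ht =>
    hL.exp_sub_ne_one h.toIsBakerDomain hA ht
  have hR₀ball := (ball_subset_ball hR₀c₀).trans hball₀
  have hlarge := hR₀ L t₀ (hL.differentiableOn.mono hR₀ball) (fun t ht => hne t (hR₀ball ht))
    (hper t₀ ht₀mem)
  rw [max_lt_iff, max_lt_iff] at hlarge
  obtain ⟨hltA, hltA', hltB⟩ := hlarge
  have hball₁ : ball (L t₀) 140 ⊆ verticalStrip u v :=
    hB u v hA L 0 hL n x hx t₀ ht₀mem ht₀ ⟨by linarith [hxA.1], by linarith [hxA.2]⟩ hltB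
  have hHarnack : |(L t₀ - t₀).re| ≤ C * |(L (L t₀) - L t₀).re| :=
    hC u v L 0 hL n x hx t₀ ht₀mem ht₀ (hball₁ (mem_ball_self (by norm_num))) hltA
  refine hHarnack.not_gt (hA' u v C L t₀ hL.differentiableOn hper hne (by linarith)
    ((ball_subset_ball hCc₀).trans hball₀) hball₁ ?_ ?_)
  · exact (le_mul_of_one_le_left hA'0.le hC1).trans_lt hltA'
  · exact lt_of_mul_lt_mul_left (hltA'.trans_le hHarnack) (by linarith)

end IsBakerFrame

end NonPeriodic

/-! ### Postsingular points in annuli -/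

section PointsInAnnuli

open Complex.HadamardThreeLines (verticalStrip)

theorem norm_mul_exp_mem_Ioo {w t : ℂ} {c : ℝ} (hw : w ≠ 0) (ht : ‖t‖ < c) :
    ‖w * Complex.exp t‖ ∈ Ioo (‖w‖ * Real.exp (-c)) (‖w‖ * Real.exp c) := by
  obtain ⟨hlow, hup⟩ := abs_lt.1 ((Complex.abs_re_le_norm t).trans_lt ht)
  have hw0 : 0 < ‖w‖ := norm_pos_iff.2 hw
  rw [norm_mul, Complex.norm_exp]
  exact ⟨mul_lt_mul_of_pos_left (Real.exp_lt_exp.2 hlow) hw0,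
    mul_lt_mul_of_pos_left (Real.exp_lt_exp.2 hup) hw0⟩

theorem HasPointNearCircle.of_mem {P W : Set ℂ} {a p : ℂ} {δ : ℝ} (hp : p ∈ P) (hpW : p ∈ W)
    (hδ : 0 ≤ δ) : HasPointNearCircle P W a δ ‖p - a‖ :=
  ⟨p, hp, mul_le_of_le_one_right (norm_nonneg _) (Real.exp_le_one_iff.2 (neg_nonpos.2 hδ)),
    le_mul_of_one_le_right (norm_nonneg _) (Real.one_le_exp hδ),
    (infDist_zero_of_mem hpW).trans_le (by positivity)⟩

namespace IsBakerFrame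

variable {F : ℂ → OnePoint ℂ} {W : Set ℂ} {q : ℕ} {a x₀ : ℂ} {K V : Set ℂ} {r : ℝ}
  {S : Set (OnePoint ℂ)}

theorem exists_mem_postsingular_of_isFullAnnulus (h : IsBakerFrame F W q a x₀ K V r)
    (hS : MeroSingularSet F univ S) {j : ℂ} (hj : j ∉ W) (hja : j ≠ a) :
    ∃ c₀ : ℝ, 0 < c₀ ∧ ∀ u v, IsFullAnnulus W a u v → ∀ n, ∀ x ∈ K,
      Real.log ‖shiftedIterate F q a n x‖ ∈ Icc (u + c₀) (v - c₀) →
      ∃ z : ℂ, ‖z - a‖ ∈ Ioo (‖shiftedIterate F q a n x‖ * Real.exp (-c₀))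
        (‖shiftedIterate F q a n x‖ * Real.exp c₀) ∧
        (z : OnePoint ℂ) ∈ MeroPostsingular F univ S := by
  obtain ⟨η, hη, hwind⟩ := h.exists_winding_eq_zero
  obtain ⟨c₁, hlift⟩ := h.exists_small_lift hS hj hja hη
  obtain ⟨c₂, hc₂, hlog⟩ := h.exists_not_isAnnulusLog_zero
  obtain ⟨c₀, hc₁c₀, hc₂c₀⟩ : ∃ c₀, c₁ ≤ c₀ ∧ c₂ ≤ c₀ := ⟨_, le_max_left _ _, le_max_right _ _⟩
  refine ⟨c₀, hc₂.trans_le hc₂c₀, fun u v hA n x hx hxA => ?_⟩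
  have hsx : shiftedIterate F q a n x ≠ 0 := h.shiftedIterate_ne_zero n (h.K_subset hx)
  obtain ⟨t₀, ht₀⟩ : ∃ t₀, Complex.exp t₀ = shiftedIterate F q a n x := ⟨_, Complex.exp_log hsx⟩
  rw [← ht₀, ← re_eq_log_norm_of_exp_eq rfl] at hxA
  have hball : ball t₀ c₀ ⊆ verticalStrip u v := ball_subset_verticalStrip hxA
  have ht₀A : t₀ ∈ verticalStrip u v := hball (mem_ball_self (hc₂.trans_le hc₂c₀))
  by_contra! hcon
  obtain ⟨Ψ, hΨ⟩ := hlift n x hx fun t ht => by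
    have ht' : ‖t‖ < c₀ := (mem_ball_zero_iff.1 ht).trans_le hc₁c₀
    refine ⟨?_, hcon _ (by rw [add_sub_cancel_left]; exact norm_mul_exp_mem_Ioo hsx ht')⟩
    rw [← ht₀, ← Complex.exp_add]
    exact hA.add_exp_mem (hball (by rwa [mem_ball_iff_norm, add_sub_cancel_left]))
  obtain ⟨L, e, hL⟩ := h.exists_isAnnulusLog h.notMem hA ⟨t₀, ht₀A⟩
  have hxuv : ‖shiftedIterate F q a n x‖ ∈ Ioo (Real.exp u) (Real.exp v) := by
    rw [← ht₀, Complex.norm_exp]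
    exact ⟨Real.exp_lt_exp.2 ht₀A.1, Real.exp_lt_exp.2 ht₀A.2⟩
  obtain rfl : e = 0 := hwind u v hA L e hL n x hx hxuv Ψ hΨ
  rw [re_eq_log_norm_of_exp_eq ht₀] at hxA
  exact hlog u v hA n x hx ⟨by linarith [hxA.1], by linarith [hxA.2]⟩ L hL

theorem exists_notMem_or_mem_postsingular (h : IsBakerFrame F W q a x₀ K V r)
    (hS : MeroSingularSet F univ S) :
    ∃ c : ℝ, 0 < c ∧ ∃ R : ℝ, ∀ ρ ≥ R, ∃ z : ℂ,
      ‖z - a‖ ∈ Ioo (ρ * Real.exp (-c)) (ρ * Real.exp c) ∧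
        (z ∉ W ∨ (z : OnePoint ℂ) ∈ MeroPostsingular F univ S) := by
  obtain ⟨j, hj, hja⟩ : ∃ j ∉ W, j ≠ a := by
    by_contra! hcon
    exact h.not_isBounded_compl ((Bornology.isBounded_singleton (x := a)).subset hcon)
  obtain ⟨c, hc, hfull⟩ := h.exists_mem_postsingular_of_isFullAnnulus hS hj hja
  refine ⟨c, hc, max ‖shiftedIterate F q a 0 x₀‖ (‖j - a‖ * Real.exp c), fun ρ hρ => ?_⟩
  rw [ge_iff_le, max_le_iff] at hρ
  obtain ⟨n, x, hx, rfl⟩ := h.exists_norm_shiftedIterate_eq hρ.1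
  have hρ0 : 0 < ‖shiftedIterate F q a n x‖ :=
    norm_pos_iff.2 (h.shiftedIterate_ne_zero n (h.K_subset hx))
  have hexp (s : ℝ) : Real.exp (Real.log ‖shiftedIterate F q a n x‖ + s) =
      ‖shiftedIterate F q a n x‖ * Real.exp s := by rw [Real.exp_add, Real.exp_log hρ0]
  by_contra! hcon
  obtain ⟨u, hu, v, hv, hA⟩ := exists_isFullAnnulus h.isOpen h.not_isBounded_compl hj hja
    (s := Real.log ‖shiftedIterate F q a n x‖ + -c) (t := Real.log ‖shiftedIterate F q a n x‖ + c)
    (by rw [hexp, Real.exp_neg, ← div_eq_mul_inv, le_div_iff₀ (Real.exp_pos _)]; exact hρ.2)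
    (fun z hz => (hcon z (by rwa [hexp, hexp] at hz)).1)
  obtain ⟨z, hz, hzP⟩ := hfull u v hA n x hx ⟨by linarith, by linarith⟩
  exact (hcon z hz).2 hzP

theorem exists_hasPointNearCircle_mem_Ioo (h : IsBakerFrame F W q a x₀ K V r)
    (hS : MeroSingularSet F univ S) :
    ∃ c : ℝ, 0 < c ∧ ∀ δ > 0, δ ≤ 1 / 2 → ∃ R : ℝ, ∀ ρ ≥ R,
      ∃ σ ∈ Ioo (ρ * Real.exp (-c)) (ρ * Real.exp c),
        HasPointNearCircle ((↑) ⁻¹' MeroPostsingular F univ S) W a δ σ := by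
  obtain ⟨c, hc, R₁, hR₁⟩ := h.exists_notMem_or_mem_postsingular hS
  refine ⟨c, hc, fun δ hδ0 hδ => ?_⟩
  obtain ⟨R₂, hR₂⟩ := h.exists_hasPointNearCircle hS hδ0 hδ
  refine ⟨max R₁ (R₂ * Real.exp c), fun ρ hρ => ?_⟩
  rw [ge_iff_le, max_le_iff] at hρ
  obtain ⟨z, hz, hzWP⟩ := hR₁ ρ hρ.1
  refine ⟨_, hz, ?_⟩
  by_cases hzW : z ∈ W
  · exact .of_mem (hzWP.resolve_left (not_not.2 hzW)) hzW hδ0.le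
  · refine hR₂ z hzW (le_trans ?_ hz.1.le)
    rw [Real.exp_neg, ← div_eq_mul_inv, le_div_iff₀ (Real.exp_pos _)]
    exact hρ.2

theorem exists_postsingular (h : IsBakerFrame F W q a x₀ K V r) (hS : MeroSingularSet F univ S) :
    ∃ C : ℝ, 1 < C ∧ ∀ ε > 0, ∃ R₀ : ℝ, ∀ R ≥ R₀, ∃ p : ℂ,
      (p : OnePoint ℂ) ∈ MeroPostsingular F univ S ∧ R ≤ ‖p - a‖ ∧ ‖p - a‖ ≤ C * R ∧
        infDist p W ≤ ε * ‖p - a‖ := by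
  obtain ⟨c, hc, hcδ⟩ := h.exists_hasPointNearCircle_mem_Ioo hS
  refine ⟨Real.exp (2 * c + 2), Real.one_lt_exp_iff.2 (by linarith), fun ε hε => ?_⟩
  obtain ⟨δ, hδ0, hδ1, hδε⟩ : ∃ δ > 0, δ ≤ 1 / 2 ∧ 2 * δ ≤ ε :=
    ⟨min (1 / 2) (ε / 2), by positivity, min_le_left _ _,
      by linarith [min_le_right (1 / 2) (ε / 2)]⟩
  obtain ⟨R₁, hR₁⟩ := hcδ δ hδ0 hδ1
  refine ⟨max R₁ 0, fun R hR => ?_⟩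
  rw [ge_iff_le, max_le_iff] at hR
  obtain ⟨σ, ⟨hσ₁, hσ₂⟩, p, hp, hp₁, hp₂, hpW⟩ := hR₁ (R * Real.exp (c + 1))
    (hR.1.trans (le_mul_of_one_le_right hR.2 (Real.one_le_exp (by linarith))))
  refine ⟨p, hp, ?_, ?_, hpW.trans (mul_le_mul_of_nonneg_right hδε (norm_nonneg _))⟩
  · calc R ≤ R * Real.exp (c + 1 + -c + -δ) :=
          le_mul_of_one_le_right hR.2 (Real.one_le_exp (by linarith))
      _ = R * Real.exp (c + 1) * Real.exp (-c) * Real.exp (-δ) := by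
          rw [Real.exp_add, Real.exp_add]; ring
      _ ≤ σ * Real.exp (-δ) := mul_le_mul_of_nonneg_right hσ₁.le (Real.exp_pos _).le
      _ ≤ ‖p - a‖ := hp₁
  · calc ‖p - a‖ ≤ σ * Real.exp δ := hp₂
      _ ≤ R * Real.exp (c + 1) * Real.exp c * Real.exp δ :=
          mul_le_mul_of_nonneg_right hσ₂.le (Real.exp_pos _).le
      _ = Real.exp (c + 1 + c + δ) * R := by
          rw [Real.exp_add (c + 1 + c), Real.exp_add (c + 1)]; ring
      _ ≤ Real.exp (2 * c + 2) * R :=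
          mul_le_mul_of_nonneg_right (Real.exp_le_exp.2 (by linarith)) hR.2

end IsBakerFrame

end PointsInAnnuli

section SequenceExtraction

theorem exists_seq_tendsto_zero {α : Type*} {φ : α → ℝ} (hφ : ∀ x, 0 ≤ φ x) {Z : ℕ → Set α}
    (hZ : ∀ n, (Z n).Nonempty) (h : ∀ ε > 0, ∀ᶠ n in atTop, ∃ x ∈ Z n, φ x ≤ ε) :
    ∃ s : ℕ → α, (∀ n, s n ∈ Z n) ∧ Tendsto (fun n => φ (s n)) atTop (𝓝 0) := by
  have hmin : ∀ n : ℕ, ∃ x ∈ Z n, ∀ y ∈ Z n, φ x < φ y + 1 / ((n : ℝ) + 1) := fun n => by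
    obtain ⟨_, ⟨x, hx, rfl⟩, hlt⟩ := exists_lt_of_csInf_lt ((hZ n).image φ)
      (lt_add_of_pos_right _ (Nat.one_div_pos_of_nat (n := n)))
    have hbdd : BddBelow (φ '' Z n) := ⟨0, forall_mem_image.2 fun z _ => hφ z⟩
    refine ⟨x, hx, fun y hy => hlt.trans_le ?_⟩
    gcongr
    exact csInf_le hbdd (mem_image_of_mem φ hy)
  choose s hs hsmin using hmin
  refine ⟨s, hs, tendsto_order.2 ⟨fun ε hε => .of_forall fun n => hε.trans_le (hφ _),
    fun ε hε => ?_⟩⟩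
  filter_upwards [h (ε / 2) (half_pos hε),
    tendsto_one_div_add_atTop_nhds_zero_nat.eventually_lt_const (half_pos hε)]
    with n ⟨y, hy, hyε⟩ hn
  linarith [hsmin n y hy]

theorem norm_sub_le_two_mul_norm {E : Type*} [SeminormedAddCommGroup E] {a p : E}
    (h : 2 * ‖a‖ ≤ ‖p - a‖) : ‖p - a‖ ≤ 2 * ‖p‖ := by
  linarith [norm_sub_le p a]

theorem norm_le_two_mul_norm_sub {E : Type*} [SeminormedAddCommGroup E] {a p : E}
    (h : 2 * ‖a‖ ≤ ‖p - a‖) : ‖p‖ ≤ 2 * ‖p - a‖ := by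
  linarith [norm_le_norm_add_norm_sub' p a, norm_nonneg a]

theorem tendsto_norm_and_exists_ratio_le_of_geometric {E : Type*} [SeminormedAddCommGroup E]
    {a : E} {s : ℕ → E} {C T : ℝ} (hC : 1 < C) (hT : 0 < T) (hTa : 2 * ‖a‖ ≤ T)
    (hs : ∀ n, ‖s n - a‖ ∈ Icc (T * C ^ n) (C * (T * C ^ n))) :
    Tendsto (fun n => ‖s n‖) atTop atTop ∧ ∃ B : ℝ, ∀ n, ‖s (n + 1)‖ / ‖s n‖ ≤ B := by
  have hfar (n : ℕ) : 2 * ‖a‖ ≤ ‖s n - a‖ :=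
    (hTa.trans (le_mul_of_one_le_right hT.le (one_le_pow₀ hC.le))).trans (hs n).1
  have hlow (n : ℕ) : T * C ^ n ≤ 2 * ‖s n‖ :=
    (hs n).1.trans (norm_sub_le_two_mul_norm (hfar n))
  refine ⟨tendsto_atTop_mono (fun n => (div_le_iff₀' two_pos).2 (hlow n))
    (((tendsto_pow_atTop_atTop_of_one_lt hC).const_mul_atTop hT).atTop_div_const two_pos),
    4 * C ^ 2, fun n => div_le_of_le_mul₀ (norm_nonneg _) (by positivity) ?_⟩
  calc ‖s (n + 1)‖ ≤ 2 * (C * (T * C ^ (n + 1))) :=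
        (norm_le_two_mul_norm_sub (hfar _)).trans (mul_le_mul_of_nonneg_left (hs _).2 two_pos.le)
    _ = 2 * C ^ 2 * (T * C ^ n) := by ring
    _ ≤ 2 * C ^ 2 * (2 * ‖s n‖) := mul_le_mul_of_nonneg_left (hlow n) (by positivity)
    _ = 4 * C ^ 2 * ‖s n‖ := by ring

theorem exists_seq_of_forall_exists {E : Type*} [SeminormedAddCommGroup E] {P : Set E} {d : E → ℝ}
    (hd : ∀ p, 0 ≤ d p) {a : E} {C : ℝ} (hC : 1 < C)
    (h : ∀ ε > 0, ∃ R₀ : ℝ, ∀ R ≥ R₀, ∃ p ∈ P, R ≤ ‖p - a‖ ∧ ‖p - a‖ ≤ C * R ∧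
      d p ≤ ε * ‖p - a‖) :
    ∃ s : ℕ → E, (∀ n, s n ∈ P) ∧ Tendsto (fun n => ‖s n‖) atTop atTop ∧
      (∃ B : ℝ, ∀ n, ‖s (n + 1)‖ / ‖s n‖ ≤ B) ∧
      Tendsto (fun n => d (s n) / ‖s n‖) atTop (𝓝 0) := by
  obtain ⟨R₁, hR₁⟩ := h 1 one_pos
  obtain ⟨T, hTR₁, hTa, hT⟩ : ∃ T, R₁ ≤ T ∧ 2 * ‖a‖ ≤ T ∧ 0 < T :=
    ⟨max R₁ (2 * ‖a‖ + 1), le_max_left _ _, (le_add_of_nonneg_right one_pos.le).trans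
      (le_max_right _ _), lt_max_of_lt_right (by positivity)⟩
  have hTn (n : ℕ) : T ≤ T * C ^ n := le_mul_of_one_le_right hT.le (one_le_pow₀ hC.le)
  have hCT : Tendsto (fun n : ℕ => T * C ^ n) atTop atTop :=
    (tendsto_pow_atTop_atTop_of_one_lt hC).const_mul_atTop hT
  obtain ⟨s, hs, hlim⟩ := exists_seq_tendsto_zero (φ := fun p => d p / ‖p‖)
    (Z := fun n => {p ∈ P | ‖p - a‖ ∈ Icc (T * C ^ n) (C * (T * C ^ n))})
    (fun p => div_nonneg (hd p) (norm_nonneg p))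
    (fun n => by
      obtain ⟨p, hp, hlow, hup, -⟩ := hR₁ _ (hTR₁.trans (hTn n))
      exact ⟨p, hp, hlow, hup⟩)
    (fun ε hε => by
      obtain ⟨R₀, hR₀⟩ := h (ε / 2) (half_pos hε)
      filter_upwards [hCT.eventually_ge_atTop R₀] with n hn
      obtain ⟨p, hp, hlow, hup, hdp⟩ := hR₀ _ hn
      refine ⟨p, ⟨hp, hlow, hup⟩, div_le_of_le_mul₀ (norm_nonneg p) hε.le (hdp.trans ?_)⟩
      calc ε / 2 * ‖p - a‖ ≤ ε / 2 * (2 * ‖p‖) := mul_le_mul_of_nonneg_left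
            (norm_sub_le_two_mul_norm ((hTa.trans (hTn n)).trans hlow)) (half_pos hε).le
        _ = ε * ‖p‖ := by ring)
  obtain ⟨hinfty, hratio⟩ :=
    tendsto_norm_and_exists_ratio_le_of_geometric hC hT hTa fun n => (hs n).2
  exact ⟨s, fun n => (hs n).1, hinfty, hratio, hlim⟩

end SequenceExtraction

theorem IsBakerDomain.exists_seq_postsingular {F : ℂ → OnePoint ℂ} {W : Set ℂ} {q : ℕ}
    (h : IsBakerDomain F W q) {S : Set (OnePoint ℂ)} (hS : MeroSingularSet F univ S) :
    ∃ s : ℕ → ℂ, (∀ n, (s n : OnePoint ℂ) ∈ MeroPostsingular F univ S) ∧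
      Tendsto (fun n => ‖s n‖) atTop atTop ∧ (∃ C : ℝ, ∀ n, ‖s (n + 1)‖ / ‖s n‖ ≤ C) ∧
      Tendsto (fun n => infDist (s n) W / ‖s n‖) atTop (𝓝 0) := by
  obtain ⟨a, ha⟩ := (ne_univ_iff_exists_notMem _).1 h.ne_univ
  obtain ⟨x₀, K, V, r, hframe⟩ := h.exists_isBakerFrame ha
  obtain ⟨C, hC, hpoints⟩ := hframe.exists_postsingular hS
  exact exists_seq_of_forall_exists (P := {z : ℂ | (z : OnePoint ℂ) ∈ MeroPostsingular F univ S})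
    (d := fun z => infDist z W) (fun _ => infDist_nonneg) hC hpoints

section ConnectedComponent

variable {F : ℂ → OnePoint ℂ} {W : Set ℂ} {p k : ℕ}

theorem lt_norm_of_chordalDist_lt {z : ℂ} {R : ℝ} (h : chordalDist z infty < 2 / (1 + |R|)) :
    R < ‖z‖ := by
  by_contra! hcon
  refine h.not_ge ?_
  have hR := hcon.trans (le_abs_self R)
  change 2 / (1 + |R|) ≤ 2 / √(1 + ‖z‖ ^ 2)
  gcongr
  rw [Real.sqrt_le_left (by positivity)]
  nlinarith [norm_nonneg z]

theorem mapsTo_finMap_iterate_mul (hW : W ⊆ MeroFatou F univ)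
    (hper : ∀ z ∈ W, (totalize F)^[p] z ∈ ((↑) : ℂ → OnePoint ℂ) '' W) :
    MapsTo (finMap F)^[p * k] W W := by
  rw [Function.iterate_mul]
  refine MapsTo.iterate (fun z hz => ?_) k
  obtain ⟨t, ht, e⟩ := hper z hz
  rw [totalize_iterate_coe (iterate_ne_infty_of_mem_meroFatou (hW hz) p)] at e
  rwa [← OnePoint.coe_injective e]

theorem exists_forall_lt_norm_finMap_iterate {K : Set ℂ} (hK : K ⊆ MeroFatou F univ) (hp : 1 ≤ p)
    (h : ∀ ε > (0 : ℝ), ∃ N : ℕ, ∀ m ≥ N, ∀ z ∈ K,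
      chordalDist ((totalize F)^[m * k] z) infty < ε) (R : ℝ) :
    ∃ N : ℕ, ∀ n ≥ N, ∀ z ∈ K, R < ‖(finMap F)^[n * (p * k)] z‖ := by
  obtain ⟨N, hN⟩ := h (2 / (1 + |R|)) (by positivity)
  refine ⟨N, fun n hn z hz => lt_norm_of_chordalDist_lt ?_⟩
  rw [← totalize_iterate_coe (iterate_ne_infty_of_mem_meroFatou (hK hz) _), ← mul_assoc]
  exact hN (n * p) (hn.le.trans (Nat.le_mul_of_pos_right n hp)) z hz

theorem isBakerDomain_of_connectedComponentIn (hmero : ∀ z : ℂ, SphereMeroAt F z)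
    (htrans : ¬ExtendsToInfty F)
    (hWcomp : ∃ z ∈ MeroFatou F univ, W = connectedComponentIn (MeroFatou F univ) z)
    (hp : 1 ≤ p) (hper : ∀ z ∈ W, (totalize F)^[p] z ∈ ((↑) : ℂ → OnePoint ℂ) '' W) (hk : 1 ≤ k)
    (hBaker : ∀ K : Set ℂ, K ⊆ W → IsCompact K → ∀ ε > (0 : ℝ), ∃ N : ℕ, ∀ m ≥ N, ∀ z ∈ K,
      chordalDist ((totalize F)^[m * k] z) infty < ε) :
    IsBakerDomain F W (p * k) := by
  obtain ⟨z₀, hz₀, rfl⟩ := hWcomp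
  have hsub := connectedComponentIn_subset (MeroFatou F univ) z₀
  exact
    { mero := hmero
      not_extendsToInfty := htrans
      one_le := Nat.mul_pos hp hk
      nonempty := ⟨z₀, mem_connectedComponentIn hz₀⟩
      isOpen := (isOpen_meroFatou F).connectedComponentIn
      isPreconnected := isPreconnected_connectedComponentIn
      subset_fatou := hsub
      subset_of_isPreconnected := by
        rintro N hN hNF ⟨x, hxN, hxW⟩
        rw [connectedComponentIn_eq hxW]
        exact hN.subset_connectedComponentIn hxN hNF
      mapsTo := mapsTo_finMap_iterate_mul hsub hper
      escapes := fun K hK hKc =>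
        exists_forall_lt_norm_finMap_iterate (hK.trans hsub) hp (hBaker K hK hKc) }

end ConnectedComponent

end BakerDomains

/-- **Theorem (Statement 3, Baker domains of meromorphic functions).** Let `f : ℂ → Ĉ` be a
transcendental meromorphic function and let `W` be a Baker domain of `f` on which
`f^{nk}|_W → ∞` locally uniformly for some `k ≥ 1`. Then there is a sequence `(p_n)` in
`P(f) ∩ ℂ` with `|p_n| → ∞`, `sup_n |p_{n+1}|/|p_n| < ∞`, and `dist(p_n, W)/|p_n| → 0`. -/
theorem baker_domain_postsingular
    (F : ℂ → OnePoint ℂ)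
    (hmero : ∀ z : ℂ, SphereMeroAt F z)
    (htrans : ¬∃ g : OnePoint ℂ → OnePoint ℂ, SphereAnalyticAt g (∞ : OnePoint ℂ) ∧
      ∃ r : ℝ, ∀ z : ℂ, r < ‖z‖ → g ((z : OnePoint ℂ)) = F z)
    (S : Set (OnePoint ℂ)) (hS : MeroSingularSet F Set.univ S)
    (W : Set ℂ)
    (hWcomp : ∃ z ∈ MeroFatou F Set.univ,
      W = connectedComponentIn (MeroFatou F Set.univ) z)
    (p : ℕ) (hp : 1 ≤ p)
    (hper : ∀ z ∈ W, (totalize F)^[p] ((z : OnePoint ℂ)) ∈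
      (fun t : ℂ => (t : OnePoint ℂ)) '' W)
    (k : ℕ) (hk : 1 ≤ k)
    (hBaker : ∀ K : Set ℂ, K ⊆ W → IsCompact K → ∀ ε > (0 : ℝ), ∃ N : ℕ, ∀ m ≥ N, ∀ z ∈ K,
      chordalDist ((totalize F)^[m * k] ((z : OnePoint ℂ))) (∞ : OnePoint ℂ) < ε) :
    ∃ q : ℕ → ℂ,
      (∀ n : ℕ, ((q n : OnePoint ℂ)) ∈ MeroPostsingular F Set.univ S) ∧
      Tendsto (fun n => ‖q n‖) atTop atTop ∧
      (∃ C : ℝ, ∀ n : ℕ, ‖q (n + 1)‖ / ‖q n‖ ≤ C) ∧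
      Tendsto (fun n => infDist (q n) W / ‖q n‖) atTop (𝓝 0) := by
  exact (isBakerDomain_of_connectedComponentIn hmero htrans hWcomp hp hper hk
    hBaker).exists_seq_postsingular hS
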